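/- Let τ be a faithful irreducible complex representation of G, and let d be the greatest common divisor of the multiplicities ⟨ℂ ⊗_ℚ σ, τ⟩ as σ ranges over all finite-dimensional representations of G over ℚ. If p^n does not divide q−1, then d = p^s for some integer s with 0 < s ≤ r; if p^n divides q−1, then d = 1. -/

import Mathlib

open CategoryTheory Finset

/-!
Write `m = p ^ (n - r)`, `M = ℚ(ζ_q, ζ_m)`, and let `s` be the automorphism of `M` with `ζ_q ↦ ζ_q ^ j` and
`ζ_m ↦ ζ_m`, of order `p ^ r`. A faithful irreducible `τ` is induced from a linear character of the abelian
subgroup `⟨a, b ^ (p ^ r)⟩` that sends the generators to primitive roots of unity of orders `q` and `m`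
(`tau_character`). So the multiplicity of `τ` in a rational representation `σ` is the dimension `S` over `M` of
the eigenspace of `(a, b ^ (p ^ r))` in `M ⊗ σ` with eigenvalues `(ζ_q, ζ_m)` (`multiplicity_eq`). Below, a
norm means `N x = x · s x ⋯ s^(p ^ r - 1) x`.

*The bound.* The regular representation contains `τ` with multiplicity its degree `p ^ r`, so `d ∣ p ^ r`.

*Obstruction.* The action of `b`, combined with `s` on coefficients, is an `s`-semilinear map on that
eigenspace whose `p ^ r`-th power is `ζ_m`. Its determinant shows that `ζ_m ^ S` is a norm
(`exists_eigenspace_dim`). A prime of `M` above `q` has trivial action of `s` on its residue field, so there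
`ζ_m ^ S` is a `p ^ r`-th power; when `p ^ n ∤ q - 1`, comparing with the order of the multiplicative group of
the residue field forces `p ∣ S` (`norm_exponent`). Hence `p ∣ d`.

*Construction.* Let `p ^ n ∣ q - 1`. If some `x` in `M` has norm a primitive `m`-th root of unity `ν`, then `G`
acts on the rational vector space `M` by `a ↦ ζ_q ·` and `b ↦ x · s(·)`, and this representation contains `τ`
exactly once (`exists_rep_of_norm`). Such an `x` exists by the Hasse norm theorem; here it is
given explicitly by Jacobi sums (`exists_norm_element`). Pick a prime `ℓ ≡ 1` modulo `q m` modulo which `q` is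
not a `p`-th power, characters `χ`, `ψ` of `(ℤ/ℓ)ˣ` of orders `q` and `m`, and put `q = 1 + m w`. Then
`∏_{0 < k < q} J(χ ^ k, ψ)` is a norm, because `s` acts on the Jacobi sums through `χ ↦ χ ^ j`. By the
Stickelberger congruences it has the same valuations as `(g(ψ) ^ m) ^ w`, where `g(ψ)` is the Gauss sum, and
it has the same absolute values, so by Kronecker's theorem the quotient `ν` is a root of unity
(`nu_exists`). As `p ^ r ∣ w`, the factor `(g(ψ) ^ m) ^ w` is itself the norm of an element fixed by `s`.
Modulo a prime above `q` the character `χ` becomes trivial and the Frobenius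
acts on `g(ψ)` through `ψ(q)`, giving `ν ≡ ψ(q)` (`nu_mod`), of exact order `m` by the choice of `ℓ`.

The prime `ℓ` comes from a density argument (`exists_prime_nonresidue`): if `q` were a `p`-th power
modulo almost every `ℓ ≡ 1` modulo `K`, the splitting field of `X ^ K - 1` and `X ^ p - q`, of degree at least
`2 φ(K)`, would have too many completely split primes for its Dedekind zeta function to have only a
simple pole at `1`.
-/

/-! ### Density of split primes and the auxiliary prime -/

open NumberField in
/-- The number of ideals of `𝓞 L` of absolute norm `n`, i.e. the `n`-th coefficient of the
Dedekind zeta function of `L`. -/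
noncomputable def idealCount (L : Type*) [Field L] [NumberField L] (n : ℕ) : ℕ :=
  Nat.card {I : Ideal (𝓞 L) // Ideal.absNorm I = n}

open NumberField in
/-- Coefficientwise lower bound for `-ζ_L'` by the contribution of the primes of `L` above `Q`.
With `c n = idealCount L n`, it counts pairs `(P, I)` with `P ∣ I`, weighted by `log N(P)`: for
fixed `I` of norm `n` the distinct prime divisors of `I` contribute at most `log n`, and for fixed
`P` of norm `ℓ` there are at least `c (n / ℓ)` ideals `I` of norm `n` divisible by `P`. -/
lemma idealCount_log (L : Type*) [Field L] [NumberField L] (Q : Finset ℕ) (D : ℕ)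
    (hQ : ∀ ℓ ∈ Q, ℓ.Prime ∧ ∃ T : Finset (Ideal (𝓞 L)), T.card = D ∧
      ∀ P ∈ T, P.IsPrime ∧ Ideal.absNorm P = ℓ) (n : ℕ) (hn : n ≠ 0) :
    (D : ℝ) * ∑ ℓ ∈ Q, (if ℓ ∣ n then Real.log ℓ * idealCount L (n / ℓ) else 0) ≤
      idealCount L n * Real.log n := by
  classical
  choose! hpr T hT using hQ
  let S : ℕ → Finset (Ideal (𝓞 L)) := fun k => (Ideal.finite_setOfPred_absNorm_eq (S := 𝓞 L) k).toFinset
  have hS : ∀ k, (S k).card = idealCount L k := fun k => by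
    rw [idealCount, ← Set.ncard_eq_toFinset_card _ (Ideal.finite_setOfPred_absNorm_eq (S := 𝓞 L) k)]; rfl
  have memS : ∀ k I, I ∈ S k ↔ Ideal.absNorm I = k := fun k I => by simp [S]
  -- the distinct prime divisors of `I` multiply to a divisor of `I`, so their norms to one of `n`
  have h1 : ∀ I ∈ S n, ∑ ℓ ∈ Q, ∑ P ∈ T ℓ, (if P ∣ I then Real.log ℓ else 0) ≤ Real.log n := by
    intro I hI
    rw [memS] at hI
    have hI0 : I ≠ ⊥ := by rintro rfl; simp at hI; exact hn hI.symm
    let U := Q.biUnion fun ℓ => (T ℓ).filter (· ∣ I)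
    have hdisj : (Q : Set ℕ).PairwiseDisjoint fun ℓ => (T ℓ).filter (· ∣ I) := by
      intro x hx y hy hxy
      rw [Function.onFun, Finset.disjoint_left]
      intro P hP hP'
      simp only [mem_filter] at hP hP'
      exact hxy (((hT x hx).2 P hP.1).2.symm.trans ((hT y hy).2 P hP'.1).2)
    have hU : ∏ P ∈ U, P ∣ I := by
      apply Finset.prod_primes_dvd
      · intro P hP
        simp only [U, mem_biUnion, mem_filter] at hP
        obtain ⟨ℓ, hℓ, hP, hd⟩ := hP
        have := (hT ℓ hℓ).2 P hP
        refine Ideal.prime_of_isPrime ?_ this.1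
        rintro rfl
        simp at this
        exact (hpr ℓ hℓ).ne_zero this.2.symm
      · intro P hP
        simp only [U, mem_biUnion, mem_filter] at hP
        obtain ⟨ℓ, hℓ, hP, hd⟩ := hP
        exact hd
    have hN : ∏ P ∈ U, Ideal.absNorm P ∣ n := by
      rw [← hI, ← map_prod]; exact map_dvd _ hU
    have hlog : ∑ P ∈ U, Real.log (Ideal.absNorm P) ≤ Real.log n := by
      rw [← Real.log_prod]
      · apply Real.log_le_log
        · apply Finset.prod_pos
          intro P hP
          rw [Nat.cast_pos, Nat.pos_iff_ne_zero]
          intro h0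
          exact hn (Nat.eq_zero_of_zero_dvd (by rwa [Finset.prod_eq_zero hP h0] at hN))
        · exact_mod_cast Nat.le_of_dvd (Nat.pos_of_ne_zero hn) hN
      · intro P hP h0
        rw [Nat.cast_eq_zero] at h0
        exact hn (Nat.eq_zero_of_zero_dvd (by rwa [Finset.prod_eq_zero hP h0] at hN))
    refine le_trans (le_of_eq ?_) hlog
    rw [Finset.sum_biUnion hdisj]
    refine Finset.sum_congr rfl fun ℓ hℓ => ?_
    rw [Finset.sum_filter]
    refine Finset.sum_congr rfl fun P hP => ?_
    rw [((hT ℓ hℓ).2 P hP).2]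
  have h2 := Finset.sum_le_sum h1
  rw [Finset.sum_const, hS, nsmul_eq_mul, Finset.sum_comm] at h2
  refine le_trans ?_ h2
  rw [Finset.mul_sum]
  refine Finset.sum_le_sum fun ℓ hℓ => ?_
  rw [Finset.sum_comm]
  have h3 : ∀ P ∈ T ℓ, (if ℓ ∣ n then Real.log ℓ * idealCount L (n / ℓ) else 0) ≤
      ∑ I ∈ S n, (if P ∣ I then Real.log ℓ else 0) := by
    intro P hP
    obtain ⟨hPp, hPn⟩ := (hT ℓ hℓ).2 P hP
    have hl0 : 0 ≤ Real.log ℓ := Real.log_natCast_nonneg ℓ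
    split_ifs with hd
    · rw [← Finset.sum_filter, Finset.sum_const, nsmul_eq_mul, mul_comm]
      refine mul_le_mul_of_nonneg_right ?_ hl0
      rw [← hS, Nat.cast_le]
      refine Finset.card_le_card_of_injOn (fun J => P * J) ?_ ?_
      · intro J hJ
        have hJ' := (memS _ _).1 hJ
        simp only [coe_filter, Set.mem_ofPred_eq, memS, map_mul, hPn, hJ']
        exact ⟨Nat.mul_div_cancel' hd, dvd_mul_right _ _⟩
      · have hP0 : P ≠ 0 := by
          rintro rfl
          simp at hPn
          exact (hpr ℓ hℓ).ne_zero hPn.symm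
        intro J _ J' _ h
        exact mul_left_cancel₀ hP0 h
    · exact Finset.sum_nonneg fun I _ => by split_ifs <;> simp [hl0]
  calc (D : ℝ) * _ = ∑ P ∈ T ℓ, (if ℓ ∣ n then Real.log ℓ * idealCount L (n / ℓ) else 0) := by
        rw [Finset.sum_const, (hT ℓ hℓ).1, nsmul_eq_mul]
    _ ≤ _ := Finset.sum_le_sum h3

open NumberField in
/-- The Dedekind zeta function of `L` on the real axis. At `x` where the series diverges this is
the value `0` of `tsum`, so summability is carried along as a hypothesis. -/
noncomputable def realZeta (L : Type*) [Field L] [NumberField L] (x : ℝ) : ℝ :=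
  ∑' n : ℕ, idealCount L n * (n : ℝ) ^ (-x)

open NumberField in
/-- A finite-difference form of `-ζ_L' ≥ ζ_L · ∑ log N(P) N(P)^(-y)`, avoiding derivatives and
the Euler product: expand `n ^ (-x) = n ^ (-y) n ^ (y - x) ≥ n ^ (-y) (1 + (y - x) log n)` and use
`idealCount_log`. -/
lemma realZeta_ineq (L : Type*) [Field L] [NumberField L] (Q : Finset ℕ) (D : ℕ)
    (hQ : ∀ ℓ ∈ Q, ℓ.Prime ∧ ∃ T : Finset (Ideal (𝓞 L)), T.card = D ∧
      ∀ P ∈ T, P.IsPrime ∧ Ideal.absNorm P = ℓ) {x y : ℝ} (hx : 1 < x) (hxy : x < y)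
    (hsx : Summable fun n : ℕ => (idealCount L n : ℝ) * (n : ℝ) ^ (-x))
    (hsy : Summable fun n : ℕ => (idealCount L n : ℝ) * (n : ℝ) ^ (-y)) :
    realZeta L y * (1 + (y - x) * D * ∑ ℓ ∈ Q, Real.log ℓ * (ℓ : ℝ) ^ (-y)) ≤ realZeta L x := by
  have hterm : ∀ ℓ ∈ Q, HasSum (fun n : ℕ => (if ℓ ∣ n then Real.log ℓ * idealCount L (n / ℓ) else 0) *
      (n : ℝ) ^ (-y)) (Real.log ℓ * (ℓ : ℝ) ^ (-y) * realZeta L y) := by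
    intro ℓ hℓ
    have hpos := (hQ ℓ hℓ).1.pos
    have hinj : Function.Injective (fun k : ℕ => ℓ * k) := fun a b h => Nat.eq_of_mul_eq_mul_left hpos h
    rw [← hinj.hasSum_iff]
    · refine ((hsy.hasSum).mul_left (Real.log ℓ * (ℓ : ℝ) ^ (-y))).congr_fun ?_
      intro k
      simp only [Function.comp, dvd_mul_right, if_true, Nat.mul_div_cancel_left _ hpos]
      rw [Nat.cast_mul, Real.mul_rpow (by positivity) (by positivity)]
      ring
    · intro n hn
      have : ¬ ℓ ∣ n := fun ⟨k, hk⟩ => hn ⟨k, hk.symm⟩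
      simp [this]
  have hsum := hasSum_sum hterm
  have htot := hsy.hasSum.add (hsum.mul_left ((y - x) * D))
  have hle := hasSum_le (f := fun n : ℕ => (idealCount L n : ℝ) * (n : ℝ) ^ (-y) + (y - x) * D *
    ∑ ℓ ∈ Q, (if ℓ ∣ n then Real.log ℓ * idealCount L (n / ℓ) else 0) * (n : ℝ) ^ (-y)) ?_ htot hsx.hasSum
  · refine le_trans (le_of_eq ?_) hle
    rw [realZeta, ← Finset.sum_mul]
    change realZeta L y * _ = realZeta L y + _ * (_ * realZeta L y)
    ring
  · intro n
    rcases Nat.eq_zero_or_pos n with rfl | hn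
    · simp [Real.zero_rpow (show -x ≠ 0 by linarith), Real.zero_rpow (show -y ≠ 0 by linarith)]
    have hn' : (0 : ℝ) < n := by exact_mod_cast hn
    have key := idealCount_log L Q D hQ n hn.ne'
    have hexp : (n : ℝ) ^ (-y) * (1 + (y - x) * Real.log n) ≤ (n : ℝ) ^ (-x) := by
      have : (n : ℝ) ^ (-x) = (n : ℝ) ^ (-y) * (n : ℝ) ^ (y - x) := by
        rw [← Real.rpow_add hn']; congr 1; ring
      rw [this]
      refine mul_le_mul_of_nonneg_left ?_ (by positivity)
      rw [Real.rpow_def_of_pos hn']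
      have := Real.add_one_le_exp (Real.log n * (y - x))
      linarith
    have hy0 : 0 ≤ (n : ℝ) ^ (-y) := by positivity
    rw [← Finset.sum_mul]
    calc _ = (n : ℝ) ^ (-y) * (idealCount L n + (y - x) * (D *
          ∑ ℓ ∈ Q, (if ℓ ∣ n then Real.log ℓ * idealCount L (n / ℓ) else 0))) := by ring
      _ ≤ (n : ℝ) ^ (-y) * (idealCount L n + (y - x) * (idealCount L n * Real.log n)) := by
          gcongr
      _ = idealCount L n * ((n : ℝ) ^ (-y) * (1 + (y - x) * Real.log n)) := by ring
      _ ≤ _ := by gcongr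

open NumberField Topology Filter in
/-- The analytic class number formula on the real axis. Summability near `1` comes with it: a
divergent series would give the junk value `0`, contradicting the positive residue. -/
lemma realZeta_tendsto (L : Type*) [Field L] [NumberField L] :
    (∃ ρ : ℝ, 0 < ρ ∧ Tendsto (fun x : ℝ => (x - 1) * realZeta L x) (𝓝[>] 1) (𝓝 ρ)) ∧
    ∀ᶠ x : ℝ in 𝓝[>] 1, Summable fun n : ℕ => (idealCount L n : ℝ) * (n : ℝ) ^ (-x) := by
  have hterm : ∀ x : ℝ, 1 < x → (LSeries.term (fun n ↦ ((Nat.card {I : Ideal (𝓞 L) // Ideal.absNorm I = n} : ℕ) : ℂ)) (x : ℂ))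
      = fun n : ℕ => (((idealCount L n : ℝ) * (n : ℝ) ^ (-x) : ℝ) : ℂ) := by
    intro x hx
    funext n
    rcases Nat.eq_zero_or_pos n with rfl | hn
    · simp [Real.zero_rpow (show -x ≠ 0 by linarith)]
    · rw [LSeries.term_of_ne_zero hn.ne', idealCount, Complex.ofReal_mul, Complex.ofReal_cpow (by positivity)]
      simp [Complex.cpow_neg, div_eq_mul_inv]
  have hz : ∀ x : ℝ, 1 < x → dedekindZeta L x = (realZeta L x : ℂ) := by
    intro x hx
    rw [dedekindZeta, LSeries, hterm x hx, realZeta, Complex.ofReal_tsum]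
  have ht := tendsto_sub_one_mul_dedekindZeta_nhdsGT L
  have ht2 : Tendsto (fun x : ℝ => (x - 1) * realZeta L x) (𝓝[>] 1) (𝓝 (dedekindZeta_residue L)) := by
    have := (Complex.continuous_re.tendsto _).comp ht
    rw [Complex.ofReal_re] at this
    refine this.congr' ?_
    filter_upwards [self_mem_nhdsWithin] with x hx
    rw [Function.comp, hz x hx]
    norm_cast
  refine ⟨⟨_, dedekindZeta_residue_pos L, ht2⟩, ?_⟩
  have hev := ht2.eventually (lt_mem_nhds (dedekindZeta_residue_pos L))
  filter_upwards [hev] with x hx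
  by_contra hns
  rw [realZeta, tsum_eq_zero_of_not_summable hns] at hx
  simp at hx

open NumberField Topology Filter in
/-- If every prime `ℓ ≡ 1 mod K` (outside the divisors of `B`) has at least `D` primes of
norm `ℓ` above it in `L`, then `D ≤ (3/2) φ(K)`. The sharp bound is `D ≤ φ(K)`; comparing `ζ_L` at
`1 + ε` and `1 + 3ε/2` by means of `realZeta_ineq` loses a factor `3/2`, and any constant below `2`
suffices. -/
lemma density_bound (L : Type*) [Field L] [NumberField L] (K D B : ℕ) [NeZero K] (hB : B ≠ 0)
    (h : ∀ ℓ : ℕ, ℓ.Prime → (ℓ : ZMod K) = 1 → ¬ ℓ ∣ B →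
      ∃ T : Finset (Ideal (𝓞 L)), T.card = D ∧ ∀ P ∈ T, P.IsPrime ∧ Ideal.absNorm P = ℓ) :
    (D : ℝ) ≤ 3 / 2 * K.totient := by
  classical
  obtain ⟨⟨ρ, hρ, htend⟩, hsumm⟩ := realZeta_tendsto L
  obtain ⟨C, hC⟩ := ArithmeticFunction.vonMangoldt.LSeries_residueClass_lower_bound (q := K) (a := 1) isUnit_one
  have hnp := ArithmeticFunction.vonMangoldt.summable_residueClass_non_primes_div (q := K) 1
  set C1 := ∑' n : ℕ, (if n.Prime then 0 else ArithmeticFunction.vonMangoldt.residueClass (1 : ZMod K) n) / n with hC1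
  set C2 := ∑ ℓ ∈ B.primeFactors, Real.log ℓ with hC2
  -- Dirichlet: `∑ log ℓ / ℓ ^ y` over `ℓ ≡ 1 mod K`, `ℓ ∤ B`, is at least `1 / (φ(K) (y - 1)) - O(1)`
  have hφ : (0 : ℝ) < K.totient := by exact_mod_cast Nat.totient_pos.2 (NeZero.pos K)
  have hlower : ∀ y : ℝ, y ∈ Set.Ioc (1 : ℝ) 2 → ∀ U : ℝ,
      (∀ Q : Finset ℕ, (∀ ℓ ∈ Q, ℓ.Prime ∧ (ℓ : ZMod K) = 1 ∧ ¬ ℓ ∣ B) →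
        ∑ ℓ ∈ Q, Real.log ℓ * (ℓ : ℝ) ^ (-y) ≤ U) →
      (K.totient : ℝ)⁻¹ / (y - 1) - (C + C1 + C2) ≤ U := by
    intro y hy U hU
    have hU0 : 0 ≤ U := by simpa using hU ∅ (by simp)
    have h1 := hC hy
    have h2 : ∑' n, ArithmeticFunction.vonMangoldt.residueClass (1 : ZMod K) n / (n : ℝ) ^ y ≤ C1 + C2 + U := by
      refine Real.tsum_le_of_sum_le (fun n => div_nonneg (ArithmeticFunction.vonMangoldt.residueClass_nonneg 1 n) (by positivity)) ?_
      intro s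
      have hpt : ∀ n ∈ s, ArithmeticFunction.vonMangoldt.residueClass (1 : ZMod K) n / (n : ℝ) ^ y ≤
          (if n.Prime then 0 else ArithmeticFunction.vonMangoldt.residueClass (1 : ZMod K) n) / n
          + (if n ∈ B.primeFactors then Real.log n else 0)
          + (if (n.Prime ∧ (n : ZMod K) = 1 ∧ ¬ n ∣ B) then Real.log n * (n : ℝ) ^ (-y) else 0) := by
        intro n _
        have hR := ArithmeticFunction.vonMangoldt.residueClass_nonneg (1 : ZMod K) n
        rcases Nat.eq_zero_or_pos n with rfl | hn
        · simp
        have hn1 : (1 : ℝ) ≤ n := by exact_mod_cast hn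
        have hlog : 0 ≤ Real.log n := Real.log_nonneg hn1
        have hny : (n : ℝ) ≤ (n : ℝ) ^ y := by
          simpa using Real.rpow_le_rpow_of_exponent_le hn1 hy.1.le
        by_cases hpn : n.Prime
        · have hval : ArithmeticFunction.vonMangoldt.residueClass (1 : ZMod K) n =
              if (n : ZMod K) = 1 then Real.log n else 0 := by
            rw [ArithmeticFunction.vonMangoldt.residueClass, Set.indicator_apply]
            simp only [Set.mem_ofPred_eq, ArithmeticFunction.vonMangoldt_apply_prime hpn]
          rw [hval]
          by_cases h1 : (n : ZMod K) = 1
          · by_cases hd : n ∣ B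
            · simp only [h1, hpn, hd, Nat.mem_primeFactors, if_true, hB, ne_eq, not_false_iff, and_true, not_true, and_false, if_false]
              simp only [zero_div, zero_add, add_zero]
              exact div_le_self hlog (hn1.trans hny)
            · simp only [h1, hpn, hd, Nat.mem_primeFactors, if_true, not_false_iff, and_true, false_and, and_false, if_false]
              simp [Real.rpow_neg, div_eq_mul_inv]
          · simp only [h1, if_false, hpn, if_true, zero_div, false_and, and_false]
            split_ifs <;> simp [hlog]
        · have : n ∉ B.primeFactors := fun hh => hpn (Nat.prime_of_mem_primeFactors hh)
          simp only [hpn, this, if_false, false_and, add_zero]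
          gcongr
      refine (Finset.sum_le_sum hpt).trans ?_
      rw [Finset.sum_add_distrib, Finset.sum_add_distrib]
      refine add_le_add (add_le_add ?_ ?_) ?_
      · refine hnp.sum_le_tsum s fun n _ => ?_
        split_ifs
        · simp
        · exact div_nonneg (ArithmeticFunction.vonMangoldt.residueClass_nonneg 1 n) (by positivity)
      · rw [← Finset.sum_filter, hC2]
        refine Finset.sum_le_sum_of_subset_of_nonneg ?_ fun n _ _ => Real.log_natCast_nonneg n
        intro n; simp
      · rw [← Finset.sum_filter]
        refine hU _ ?_
        intro ℓ hℓ
        exact (Finset.mem_filter.1 hℓ).2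
    linarith
  set E := C + C1 + C2 with hE
  -- `realZeta_ineq` at the points `x = 1 + ε` and `y = 1 + 3ε/2`, multiplied by `ε`
  have hmain : ∀ᶠ x : ℝ in 𝓝[>] 1, (1 + (3 / 2 * (x - 1)) - 1) * realZeta L (1 + 3 / 2 * (x - 1)) *
      (2 / 3) * (1 + (1 / 2) * D * ((K.totient : ℝ)⁻¹ * (2 / 3) - E * (x - 1))) ≤ (x - 1) * realZeta L x := by
    have hmap : Tendsto (fun x : ℝ => 1 + 3 / 2 * (x - 1)) (𝓝[>] 1) (𝓝[>] 1) := by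
      refine tendsto_nhdsWithin_iff.2 ⟨?_, ?_⟩
      · have : Tendsto (fun x : ℝ => 1 + 3 / 2 * (x - 1)) (𝓝 1) (𝓝 (1 + 3 / 2 * (1 - 1))) :=
          Continuous.tendsto (by fun_prop) _
        simp only [sub_self, mul_zero, add_zero] at this
        exact this.mono_left nhdsWithin_le_nhds
      · filter_upwards [self_mem_nhdsWithin] with x hx
        have : (1 : ℝ) < x := hx
        simp only [Set.mem_Ioi]; linarith
    have hlt : ∀ᶠ x : ℝ in 𝓝[>] 1, x < 3 / 2 := nhdsWithin_le_nhds (gt_mem_nhds (by norm_num))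
    have hpos := hmap.eventually (htend.eventually (lt_mem_nhds hρ))
    filter_upwards [hsumm, hmap.eventually hsumm, self_mem_nhdsWithin, hlt, hpos] with x hsx hsy hx1 hx2 hpos
    have hx1 : 1 < x := hx1
    set y := 1 + 3 / 2 * (x - 1) with hy
    have hy1 : 1 < y := by linarith
    have hxy : x < y := by linarith
    have hzy : 0 < realZeta L y := pos_of_mul_pos_right hpos (by linarith)
    rcases Nat.eq_zero_or_pos D with rfl | hD
    · have := realZeta_ineq L ∅ 0 (by simp) hx1 hxy hsx hsy
      simp at this
      simp only [CharP.cast_eq_zero, mul_zero, zero_mul, add_zero, mul_one]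
      have h2 : (y - 1) * (2 / 3) = x - 1 := by rw [hy]; ring
      calc (y - 1) * realZeta L y * (2 / 3) = ((y - 1) * (2 / 3)) * realZeta L y := by ring
        _ = (x - 1) * realZeta L y := by rw [h2]
        _ ≤ _ := by gcongr
    have hD' : (0 : ℝ) < D := by exact_mod_cast hD
    have hb := hlower y ⟨hy1, by linarith⟩ ((realZeta L x / realZeta L y - 1) / ((y - x) * D)) ?_
    · rw [le_div_iff₀ (mul_pos (by linarith) hD'), le_sub_iff_add_le, le_div_iff₀ hzy] at hb
      have hb2 := mul_le_mul_of_nonneg_left hb (show 0 ≤ x - 1 by linarith)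
      refine le_trans (le_of_eq ?_) hb2
      have e1 : y - 1 = 3 / 2 * (x - 1) := by rw [hy]; ring
      have e2 : y - x = 1 / 2 * (x - 1) := by rw [hy]; ring
      rw [e1, e2]
      have : x - 1 ≠ 0 := by linarith
      field_simp
      ring
    · intro Q hQ
      have := realZeta_ineq L Q D (fun ℓ hℓ => ⟨(hQ ℓ hℓ).1, h ℓ (hQ ℓ hℓ).1 (hQ ℓ hℓ).2.1 (hQ ℓ hℓ).2.2⟩) hx1 hxy hsx hsy
      rw [le_div_iff₀ (mul_pos (by linarith) hD'), le_sub_iff_add_le, le_div_iff₀ hzy]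
      linarith
  have hlim : Tendsto (fun x : ℝ => (1 + (3 / 2 * (x - 1)) - 1) * realZeta L (1 + 3 / 2 * (x - 1)) *
      (2 / 3) * (1 + (1 / 2) * D * ((K.totient : ℝ)⁻¹ * (2 / 3) - E * (x - 1)))) (𝓝[>] 1)
      (𝓝 (ρ * (2 / 3) * (1 + (1 / 2) * D * ((K.totient : ℝ)⁻¹ * (2 / 3) - E * (1 - 1))))) := by
    have hmap : Tendsto (fun x : ℝ => 1 + 3 / 2 * (x - 1)) (𝓝[>] 1) (𝓝[>] 1) := by
      refine tendsto_nhdsWithin_iff.2 ⟨?_, ?_⟩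
      · have : Tendsto (fun x : ℝ => 1 + 3 / 2 * (x - 1)) (𝓝 1) (𝓝 (1 + 3 / 2 * (1 - 1))) :=
          Continuous.tendsto (by fun_prop) _
        simp only [sub_self, mul_zero, add_zero] at this
        exact this.mono_left nhdsWithin_le_nhds
      · filter_upwards [self_mem_nhdsWithin] with x hx
        have : (1 : ℝ) < x := hx
        simp only [Set.mem_Ioi]; linarith
    refine Tendsto.mul ((htend.comp hmap).mul_const _) ?_
    exact (Continuous.tendsto (by fun_prop) 1).mono_left nhdsWithin_le_nhds
  have hfin := le_of_tendsto_of_tendsto hlim htend hmain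
  have : ρ * ((2 / 3) * (1 + (1 / 2) * D * ((K.totient : ℝ)⁻¹ * (2 / 3)))) ≤ ρ * 1 := by
    refine le_trans (le_of_eq ?_) (hfin.trans_eq (mul_one ρ).symm)
    ring
  have h3 := le_of_mul_le_mul_left this hρ
  have h4 : (D : ℝ) * (K.totient : ℝ)⁻¹ ≤ 3 / 2 := by linarith
  rwa [← div_eq_mul_inv, div_le_iff₀ hφ] at h4


/-- A `K`-th root of unity congruent to `1` modulo an ideal not containing `K` equals `1`. -/
lemma root_unity_eq_one_of_sub_mem {R : Type*} [CommRing R] [IsDomain R] {Q : Ideal R} {K : ℕ}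
    (hK : (K : R) ∉ Q) {w : R} (hw : w ^ K = 1) (h : w - 1 ∈ Q) : w = 1 := by
  by_contra hne
  apply hK
  have h1 : ∑ i ∈ range K, w ^ i = 0 := by
    have := mul_geom_sum w K
    rw [hw, sub_self, mul_eq_zero] at this
    exact this.resolve_left (sub_ne_zero.2 hne)
  have hw1 : Ideal.Quotient.mk Q w = 1 := by
    rw [← sub_eq_zero, ← map_one (Ideal.Quotient.mk Q), ← map_sub]
    exact Ideal.Quotient.eq_zero_iff_mem.2 h
  have h2 := congrArg (Ideal.Quotient.mk Q) h1
  rw [map_sum] at h2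
  simp only [map_pow, hw1, one_pow, Finset.sum_const, Finset.card_range, nsmul_eq_mul, mul_one, map_zero] at h2
  rw [← Ideal.Quotient.eq_zero_iff_mem, map_natCast]
  exact h2

open NumberField Pointwise in
/-- If `E = ℚ(ζ, β)` with `ζ` a primitive `K`-th root of unity and `β ^ p = q`, and `q` is a
`p`-th power modulo a prime `ℓ ≡ 1 mod K`, then `ℓ` splits completely in `E`. Each Frobenius above
`ℓ` fixes `ζ` and `β` modulo the prime, hence exactly, so it is trivial and the prime has norm `ℓ`;
the same rigidity shows that the decomposition groups are trivial. -/
lemma exists_split_primes (E : Type*) [Field E] [NumberField E] [IsGalois ℚ E]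
    {p q K ℓ : ℕ} (hp : p.Prime) (hpK : p ∣ K) (hK : K ≠ 0) (ζ β : 𝓞 E) (hζ : IsPrimitiveRoot ζ K)
    (hβ : β ^ p = (q : 𝓞 E))
    (hgen : ∀ σ : Gal(E/ℚ), σ • ζ = ζ → σ • β = β → σ = 1)
    (hℓ : ℓ.Prime) (hℓK : (ℓ : ZMod K) = 1) (hℓq : ¬ ℓ ∣ q * K)
    (hres : (q : ZMod ℓ) ^ ((ℓ - 1) / p) = 1) :
    ∃ T : Finset (Ideal (𝓞 E)), T.card = Module.finrank ℚ E ∧ ∀ P ∈ T, P.IsPrime ∧ Ideal.absNorm P = ℓ := by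
  classical
  have := Fact.mk hℓ
  have := IsGaloisGroup.of_isFractionRing Gal(E/ℚ) ℤ (𝓞 E) ℚ E
  have hKl : K ∣ ℓ - 1 := by
    rw [← Nat.modEq_iff_dvd' hℓ.one_lt.le, ← ZMod.natCast_eq_natCast_iff, hℓK, Nat.cast_one]
  -- no integer prime to `ℓ` lies in a prime containing `ℓ`
  have hnat : ∀ Q : Ideal (𝓞 E), Q.IsPrime → (ℓ : 𝓞 E) ∈ Q → ∀ k : ℕ, (k : 𝓞 E) ∈ Q → ℓ ∣ k := by
    intro Q hQ hl k hk
    by_contra hd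
    have hco : IsCoprime (ℓ : ℤ) k := Nat.isCoprime_iff_coprime.2 ((hℓ.coprime_iff_not_dvd).2 hd)
    obtain ⟨u, v, huv⟩ := hco
    apply hQ.ne_top
    rw [Ideal.eq_top_iff_one]
    have h1 : (u : 𝓞 E) * (ℓ : 𝓞 E) + v * (k : 𝓞 E) = 1 := by exact_mod_cast congrArg (Int.cast : ℤ → 𝓞 E) huv
    rw [← h1]
    exact Q.add_mem (Q.mul_mem_left _ hl) (Q.mul_mem_left _ hk)
  have hpp : ¬ ℓ ∣ p := fun h => hℓq (h.trans (hpK.trans (dvd_mul_left _ _)))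
  have hβ0 : β ≠ 0 := by
    rintro rfl
    rw [zero_pow hp.ne_zero] at hβ
    have : q = 0 := by exact_mod_cast hβ.symm
    exact hℓq (by simp [this])
  have htriv : ∀ Q : Ideal (𝓞 E), Q.IsPrime → (ℓ : 𝓞 E) ∈ Q → ∀ σ : Gal(E/ℚ),
      σ • ζ - ζ ∈ Q → σ • β - β ∈ Q → σ = 1 := by
    intro Q hQ hl σ h1 h2
    have hdiv : ∀ (x y : 𝓞 E) (N : ℕ), x ^ N = y ^ N → y ≠ 0 → N ≠ 0 → y ∉ Q → ¬ ℓ ∣ N → x - y ∈ Q → x = y := by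
      intro x y N hxy hy hN hyQ hlN hsub
      have hwE : ((x : E) / (y : E)) ^ N = 1 := by
        have hy' : (y : E) ≠ 0 := by simpa using hy
        rw [div_pow, div_eq_one_iff_eq (pow_ne_zero _ hy')]
        exact_mod_cast congrArg (fun z : 𝓞 E => (z : E)) hxy
      have hint : IsIntegral ℤ ((x : E) / (y : E)) :=
        IsIntegral.of_pow (Nat.pos_of_ne_zero hN) (by rw [hwE]; exact isIntegral_one)
      let w : 𝓞 E := ⟨_, hint⟩
      have hwx : x = w * y := by
        apply RingOfIntegers.coe_injective
        have hy' : (y : E) ≠ 0 := by simpa using hy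
        change (x : E) = (x : E) / y * y
        field_simp
      have hwN : w ^ N = 1 := by
        apply RingOfIntegers.coe_injective
        push_cast
        exact hwE
      have : (w - 1) * y ∈ Q := by rw [sub_mul, one_mul, ← hwx]; exact hsub
      have hw1 := root_unity_eq_one_of_sub_mem (fun h => hlN (hnat Q hQ hl N h)) hwN
        ((hQ.mem_or_mem this).resolve_right hyQ)
      rw [hwx, hw1, one_mul]
    apply hgen
    · refine hdiv _ _ K ?_ (hζ.ne_zero hK) hK ?_ (fun h => hℓq (h.trans (dvd_mul_left _ _))) h1
      · rw [← smul_pow', hζ.pow_eq_one, smul_one]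
      · exact fun h => hQ.ne_top (Ideal.eq_top_of_isUnit_mem _ h (hζ.isUnit hK))
    · refine hdiv _ _ p ?_ hβ0 hp.ne_zero ?_ hpp h2
      · rw [← smul_pow', hβ]
        exact map_natCast (MulSemiringAction.toRingHom Gal(E/ℚ) (𝓞 E) σ) q
      · intro h
        have := Q.pow_mem_of_mem h p hp.pos
        rw [hβ] at this
        exact hℓq ((hnat Q hQ hl q this).trans (dvd_mul_right _ _))
  have hnorm : ∀ Q : Ideal (𝓞 E), Q.IsPrime → (ℓ : 𝓞 E) ∈ Q → Ideal.absNorm Q = ℓ ∧ ∀ x : 𝓞 E, x ^ ℓ - x ∈ Q := by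
    intro Q hQ hl
    have hQ0 : Q ≠ ⊥ := by
      rintro rfl
      rw [Ideal.mem_bot] at hl
      exact hℓ.ne_zero (by exact_mod_cast hl)
    have : Finite (𝓞 E ⧸ Q) := Ideal.finiteQuotientOfFreeOfNeBot Q hQ0
    have hQmax : Q.IsMaximal := hQ.isMaximal hQ0
    obtain ⟨σ, hσ⟩ := IsArithFrobAt.exists_of_isInvariant ℤ Gal(E/ℚ) Q
    have hund : Q.under ℤ = Ideal.span {(ℓ : ℤ)} := by
      symm
      have hmax : (Ideal.span {(ℓ : ℤ)}).IsMaximal :=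
        PrincipalIdealRing.isMaximal_of_irreducible (Nat.prime_iff_prime_int.1 hℓ).irreducible
      refine hmax.eq_of_le (Ideal.IsPrime.under ℤ Q).ne_top ?_
      rw [Ideal.span_singleton_le_iff_mem, Ideal.under, Ideal.mem_comap]
      simpa using hl
    have hcard : Nat.card (ℤ ⧸ Q.under ℤ) = ℓ := by
      rw [hund]
      rw [Nat.card_congr (Int.quotientSpanNatEquivZMod ℓ).toEquiv, Nat.card_zmod]
    have hfr : ∀ x : 𝓞 E, σ • x - x ^ ℓ ∈ Q := by
      intro x
      have := hσ x
      rwa [hcard] at this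
    have hlpow : ∀ k, ℓ = k * ((ℓ - 1) / k) + 1 ∨ ¬ k ∣ ℓ - 1 := by
      intro k
      by_cases hk : k ∣ ℓ - 1
      · left; rw [Nat.mul_div_cancel' hk]; have := hℓ.one_lt; omega
      · exact Or.inr hk
    let _ : Field (𝓞 E ⧸ Q) := Ideal.Quotient.field Q
    have hβl : β ^ ℓ - β ∈ Q := by
      rw [← Ideal.Quotient.eq]
      have hl0 : ((ℓ : ℕ) : 𝓞 E ⧸ Q) = 0 := by
        rw [← map_natCast (Ideal.Quotient.mk Q)]; exact Ideal.Quotient.eq_zero_iff_mem.2 hl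
      have : CharP (𝓞 E ⧸ Q) ℓ := by
        exact (CharP.charP_iff_prime_eq_zero hℓ).2 hl0
      have h1 := congrArg (ZMod.castHom (dvd_refl ℓ) (𝓞 E ⧸ Q)) hres
      rw [map_pow, map_one, map_natCast] at h1
      have e : ℓ = p * ((ℓ - 1) / p) + 1 := (hlpow p).resolve_right (fun h => h (hpK.trans hKl))
      rw [map_pow]
      conv_lhs => rw [e]
      rw [pow_succ, pow_mul, ← map_pow, hβ, map_natCast, h1, one_mul]
    have hζl : ζ ^ ℓ - ζ ∈ Q := by
      have e : ℓ = K * ((ℓ - 1) / K) + 1 := (hlpow K).resolve_right (fun h => h hKl)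
      rw [e, pow_succ, pow_mul, hζ.pow_eq_one, one_pow, one_mul, sub_self]
      exact Q.zero_mem
    have hσ1 : σ = 1 := by
      apply htriv Q hQ hl
      · simpa using Q.add_mem (hfr ζ) hζl
      · simpa using Q.add_mem (hfr β) hβl
    subst hσ1
    have hx : ∀ x : 𝓞 E, x ^ ℓ - x ∈ Q := by
      intro x
      have := Q.neg_mem (hfr x)
      simpa using this
    refine ⟨?_, hx⟩
    -- the residue field has at most `ℓ` elements
    have hle : Nat.card (𝓞 E ⧸ Q) ≤ ℓ := by
      have := Fintype.ofFinite (𝓞 E ⧸ Q)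
      rw [Nat.card_eq_fintype_card, ← Finset.card_univ]
      have h0 : (Polynomial.X ^ ℓ - Polynomial.X : Polynomial (𝓞 E ⧸ Q)) ≠ 0 :=
        FiniteField.X_pow_card_sub_X_ne_zero _ hℓ.one_lt
      have := Polynomial.card_le_degree_of_subset_roots (p := (Polynomial.X ^ ℓ - Polynomial.X : Polynomial (𝓞 E ⧸ Q))) (Z := Finset.univ) ?_
      · rwa [FiniteField.X_pow_card_sub_X_natDegree_eq _ hℓ.one_lt] at this
      · intro x _
        obtain ⟨x, rfl⟩ := Ideal.Quotient.mk_surjective x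
        rw [Polynomial.mem_roots h0]
        simp only [Polynomial.IsRoot, Polynomial.eval_sub, Polynomial.eval_pow, Polynomial.eval_X]
        rw [← map_pow, ← map_sub]
        exact Ideal.Quotient.eq_zero_iff_mem.2 (hx x)
    have hN : Ideal.absNorm Q = Nat.card (𝓞 E ⧸ Q) := rfl
    have hdvd : ℓ ∣ Ideal.absNorm Q := hnat Q hQ hl _ (Ideal.absNorm_mem Q)
    have hpos : 0 < Ideal.absNorm Q := Nat.pos_of_ne_zero (by rw [Ne, Ideal.absNorm_eq_zero_iff]; exact hQ0)
    exact le_antisymm (hN ▸ hle) (Nat.le_of_dvd hpos hdvd)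
  -- a prime above `ℓ`
  obtain ⟨Q, hQm, hQ⟩ : ∃ Q : Ideal (𝓞 E), Q.IsMaximal ∧ (ℓ : 𝓞 E) ∈ Q := by
    have hnu : Ideal.span {(ℓ : 𝓞 E)} ≠ ⊤ := by
      rw [Ne, Ideal.span_singleton_eq_top]
      intro hu
      have := hu.map (Algebra.norm ℤ)
      rw [← map_natCast (algebraMap ℤ (𝓞 E)), Algebra.norm_algebraMap, isUnit_pow_iff Module.finrank_pos.ne'] at this
      exact (Nat.prime_iff_prime_int.1 hℓ).not_isUnit (by simpa using this)
    obtain ⟨Q, hQm, hle⟩ := Ideal.exists_le_maximal _ hnu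
    exact ⟨Q, hQm, hle (Ideal.mem_span_singleton_self _)⟩
  have hQp := hQm.isPrime
  have hmem : ∀ σ : Gal(E/ℚ), (σ • Q).IsPrime ∧ (ℓ : 𝓞 E) ∈ σ • Q := by
    intro σ
    refine ⟨inferInstance, ?_⟩
    rw [Ideal.mem_pointwise_smul_iff_inv_smul_mem]
    convert hQ
    exact map_natCast (MulSemiringAction.toRingHom Gal(E/ℚ) (𝓞 E) σ⁻¹) ℓ
  refine ⟨Finset.univ.image (fun σ : Gal(E/ℚ) => σ • Q), ?_, ?_⟩
  · rw [Finset.card_image_of_injective, Finset.card_univ, ← Nat.card_eq_fintype_card, IsGalois.card_aut_eq_finrank]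
    intro σ τ h
    have hst : (τ⁻¹ * σ) • Q = Q := by
      simp only at h
      rw [mul_smul, h, inv_smul_smul]
    have hres : ∀ (ρ : Gal(E/ℚ)), ρ • Q = Q → ∀ x : 𝓞 E, ρ • x - x ∈ Q := by
      intro ρ hρ x
      -- `x` is congruent to an integer
      have hcardq := (hnorm Q hQp hQ).1
      have : Finite (𝓞 E ⧸ Q) := Ideal.finiteQuotientOfFreeOfNeBot Q (by
        rintro rfl
        rw [Ideal.mem_bot] at hQ
        exact hℓ.ne_zero (by exact_mod_cast hQ))
      have hl0 : ((ℓ : ℕ) : 𝓞 E ⧸ Q) = 0 := by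
        rw [← map_natCast (Ideal.Quotient.mk Q)]; exact Ideal.Quotient.eq_zero_iff_mem.2 hQ
      have : CharP (𝓞 E ⧸ Q) ℓ := (CharP.charP_iff_prime_eq_zero hℓ).2 hl0
      have hsurj : Function.Surjective (ZMod.castHom (dvd_refl ℓ) (𝓞 E ⧸ Q)) := by
        have hinj := (ZMod.castHom (dvd_refl ℓ) (𝓞 E ⧸ Q)).injective
        refine (Nat.bijective_iff_injective_and_card _).2 ⟨hinj, ?_⟩ |>.2
        rw [Nat.card_zmod]; exact hcardq.symm
      obtain ⟨c, hc⟩ := hsurj (Ideal.Quotient.mk Q x)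
      obtain ⟨k, rfl⟩ := ZMod.natCast_zmod_surjective c
      rw [map_natCast] at hc
      have hxk : x - (k : 𝓞 E) ∈ Q := by
        rw [← Ideal.Quotient.eq, ← hc, map_natCast]
      have hxk2 : ρ • x - (k : 𝓞 E) ∈ Q := by
        have h1 : ρ • (x - (k : 𝓞 E)) ∈ ρ • Q := Ideal.smul_mem_pointwise_smul _ _ _ hxk
        rw [hρ, smul_sub] at h1
        convert h1
        exact (map_natCast (MulSemiringAction.toRingHom Gal(E/ℚ) (𝓞 E) ρ) k).symm
      simpa using Q.sub_mem hxk2 hxk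
    have := htriv Q hQp hQ _ (hres _ hst ζ) (hres _ hst β)
    exact (inv_mul_eq_one.1 this).symm
  · intro P hP
    simp only [Finset.mem_image, Finset.mem_univ, true_and] at hP
    obtain ⟨σ, rfl⟩ := hP
    exact ⟨(hmem σ).1, (hnorm _ (hmem σ).1 (hmem σ).2).1⟩

open NumberField in
/-- If `q` is prime and `p` an odd prime dividing `K`, a Galois extension of `ℚ` containing
a primitive `K`-th root of unity and a `p`-th root of `q` has degree at least `2 φ(K)`.
Otherwise it equals `ℚ(ζ_K)`, which is abelian, whereas an automorphism inverting a primitive `p`-th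
root of unity `ω` and one multiplying a `p`-th root of `q` by `ω` do not commute. -/
lemma two_mul_totient_le_finrank (E : Type*) [Field E] [NumberField E] [IsGalois ℚ E]
    {p q K : ℕ} (hp : p.Prime) (hpodd : Odd p) (hq : q.Prime) (hpK : p ∣ K) (hK : K ≠ 0)
    (ζ β : E) (hζ : IsPrimitiveRoot ζ K) (hβ : β ^ p = (q : E)) :
    2 * K.totient ≤ Module.finrank ℚ E := by
  have := NeZero.mk hK
  have := NeZero.mk hp.ne_zero
  have hζint : IsIntegral ℚ ζ := Algebra.IsIntegral.isIntegral ζ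
  have hfr : Module.finrank ℚ (IntermediateField.adjoin ℚ {ζ}) = K.totient := by
    rw [IntermediateField.adjoin.finrank hζint, ← Polynomial.cyclotomic_eq_minpoly_rat hζ (Nat.pos_of_ne_zero hK),
      Polynomial.natDegree_cyclotomic]
  have hdvd : K.totient ∣ Module.finrank ℚ E := by
    rw [← hfr]; exact ⟨_, (Module.finrank_mul_finrank ℚ (IntermediateField.adjoin ℚ {ζ}) E).symm⟩
  obtain ⟨c, hc⟩ := hdvd
  have hpos : 0 < Module.finrank ℚ E := Module.finrank_pos
  rcases Nat.lt_or_ge c 2 with h2 | h2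
  swap
  · rw [hc, mul_comm]; exact Nat.mul_le_mul_left _ h2
  exfalso
  have hc1 : c = 1 := by
    rcases Nat.eq_zero_or_pos c with rfl | h
    · omega
    · omega
  have htop : IntermediateField.adjoin ℚ {ζ} = ⊤ :=
    IntermediateField.eq_of_le_of_finrank_eq le_top (by rw [hfr, IntermediateField.finrank_top', hc, hc1, mul_one])
  have hext : ∀ σ τ : Gal(E/ℚ), σ ζ = τ ζ → σ = τ := by
    intro σ τ h
    have : (σ : E →ₐ[ℚ] E) = τ := by
      apply AlgHom.ext
      intro x
      have hx : x ∈ IntermediateField.adjoin ℚ {ζ} := by rw [htop]; trivial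
      induction hx using IntermediateField.adjoin_induction with
      | mem x hx => rw [Set.mem_singleton_iff.1 hx]; exact h
      | algebraMap x => simp
      | add x y _ _ hx hy => simp only [map_add, hx, hy]
      | inv x _ hx => simp only [map_inv₀, hx]
      | mul x y _ _ hx hy => simp only [map_mul, hx, hy]
    ext x
    exact DFunLike.congr_fun this x
  have hpow : ∀ σ : Gal(E/ℚ), ∃ k : ℕ, σ ζ = ζ ^ k := by
    intro σ
    obtain ⟨i, -, hi⟩ := hζ.eq_pow_of_pow_eq_one (ξ := σ ζ) (by rw [← map_pow, hζ.pow_eq_one, map_one])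
    exact ⟨i, hi.symm⟩
  have hcomm : ∀ σ τ : Gal(E/ℚ), ∀ x, σ (τ x) = τ (σ x) := by
    intro σ τ x
    have : σ * τ = τ * σ := by
      apply hext
      obtain ⟨k, hk⟩ := hpow σ
      obtain ⟨l, hl⟩ := hpow τ
      simp only [AlgEquiv.mul_apply, hk, hl, map_pow]
      rw [← pow_mul, ← pow_mul, mul_comm]
    exact DFunLike.congr_fun this x
  -- a primitive `p`-th root of unity
  obtain ⟨e, he⟩ := hpK
  set ω := ζ ^ e with hω
  have hωp : IsPrimitiveRoot ω p := hζ.pow (Nat.pos_of_ne_zero hK) (by rw [he, mul_comm])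
  have hβ0 : β ≠ 0 := by
    rintro rfl
    rw [zero_pow hp.ne_zero] at hβ
    exact hq.ne_zero (by exact_mod_cast hβ.symm)
  have hirr : Irreducible (Polynomial.X ^ p - Polynomial.C (q : ℚ)) := by
    apply X_pow_sub_C_irreducible_of_prime hp
    intro b hb
    have h1 := congrArg (padicValRat q) hb
    have := Fact.mk hq
    have hb0 : b ≠ 0 := by
      rintro rfl
      rw [zero_pow hp.ne_zero] at hb
      exact hq.ne_zero (by exact_mod_cast hb.symm)
    rw [padicValRat.pow, padicValRat.self hq.one_lt] at h1
    have := Int.natAbs_dvd_natAbs.2 (Dvd.intro _ h1)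
    simp at this
    exact hp.one_lt.ne' this
  have hroot : ∀ γ : E, γ ^ p = q → ∃ σ : Gal(E/ℚ), σ β = γ := by
    intro γ hγ
    have hmin : ∀ x : E, x ^ p = q → minpoly ℚ x = Polynomial.X ^ p - Polynomial.C (q : ℚ) := by
      intro x hx
      refine (minpoly.eq_of_irreducible_of_monic hirr ?_ (Polynomial.monic_X_pow_sub_C _ hp.ne_zero)).symm
      simp [hx]
    have : IsConjRoot ℚ γ β := by rw [isConjRoot_def, hmin _ hγ, hmin _ hβ]
    exact isConjRoot_iff_exists_algEquiv.1 this
  obtain ⟨σ, hσ⟩ := hroot (β * ω) (by rw [mul_pow, hωp.pow_eq_one, hβ, mul_one])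
  -- an automorphism inverting `ω`
  obtain ⟨τ, hτ⟩ : ∃ τ : Gal(E/ℚ), τ ω = ω⁻¹ := by
    have : IsConjRoot ℚ ω⁻¹ ω := by
      rw [isConjRoot_def, ← Polynomial.cyclotomic_eq_minpoly_rat hωp hp.pos,
        ← Polynomial.cyclotomic_eq_minpoly_rat hωp.inv hp.pos]
    exact isConjRoot_iff_exists_algEquiv.1 this
  obtain ⟨i, -, hi⟩ := hωp.eq_pow_of_pow_eq_one (ξ := τ β / β) (by
    rw [div_pow, ← map_pow, hβ, map_natCast, div_self]; exact_mod_cast hq.ne_zero)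
  have hτβ : τ β = β * ω ^ i := by rw [hi]; field_simp
  obtain ⟨k, hk⟩ : ∃ k : ℕ, σ ω = ω ^ k := by
    obtain ⟨k, hk⟩ := hpow σ
    exact ⟨k, by rw [hω, map_pow, hk, ← pow_mul, ← pow_mul, mul_comm]⟩
  -- `τ` permutes the `p` roots `β ω ^ l` of `X ^ p - q`; as `p` is odd, the involution fixes one
  obtain ⟨h, hh⟩ := hpodd
  have hω0 : ω ≠ 0 := hωp.ne_zero hp.ne_zero
  obtain ⟨γ, hγp, hτγ⟩ : ∃ γ : E, γ ^ p = q ∧ τ γ = γ := by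
    refine ⟨β * ω ^ (i * (h + 1)), ?_, ?_⟩
    · rw [mul_pow, hβ, ← pow_mul, mul_comm (i * (h + 1)), pow_mul, hωp.pow_eq_one, one_pow, mul_one]
    · rw [map_mul, map_pow, hτ, hτβ, inv_pow]
      have : ω ^ i * ω ^ (i * (2 * h + 1)) = ω ^ (i * (h + 1)) * ω ^ (i * (h + 1)) := by
        rw [← pow_add, ← pow_add]; congr 1; ring
      rw [← hh, mul_comm i p, pow_mul, hωp.pow_eq_one, one_pow, mul_one] at this
      rw [mul_assoc]; congr 1
      rw [this]; field_simp
  obtain ⟨l, hl⟩ : ∃ l : ℕ, γ = β * ω ^ l := by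
    obtain ⟨l, -, hl⟩ := hωp.eq_pow_of_pow_eq_one (ξ := γ / β) (by
      rw [div_pow, hγp, hβ, div_self]; exact_mod_cast hq.ne_zero)
    exact ⟨l, by rw [hl]; field_simp⟩
  have hγ0 : γ ≠ 0 := by rw [hl]; exact mul_ne_zero hβ0 (pow_ne_zero _ hω0)
  obtain ⟨σ', hσ'⟩ : ∃ σ' : Gal(E/ℚ), σ' γ = γ * ω := by
    obtain ⟨ρ, hρ⟩ := hroot γ hγp
    obtain ⟨ρ', hρ'⟩ := hroot (γ * ω) (by rw [mul_pow, hωp.pow_eq_one, hγp, mul_one])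
    refine ⟨ρ' * ρ⁻¹, ?_⟩
    rw [AlgEquiv.mul_apply, ← hρ', ← hρ]
    congr 1
    exact ρ.symm_apply_apply β
  have hcom := hcomm τ σ' γ
  rw [hσ', hτγ, hσ', map_mul, hτγ, hτ] at hcom
  have h3 : ω⁻¹ = ω := mul_left_cancel₀ hγ0 hcom
  have h4 : ω ^ 2 = 1 := by
    rw [pow_two]; nth_rewrite 1 [← h3]; exact inv_mul_cancel₀ hω0
  have h5 := hωp.dvd_of_pow_eq_one 2 h4
  have := (Nat.prime_dvd_prime_iff_eq hp Nat.prime_two).1 h5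
  omega

open NumberField Polynomial in
/-- There is a prime `ℓ ≡ 1 mod K` modulo which the prime `q` is not a `p`-th power. Otherwise all
primes `ℓ ≡ 1 mod K` outside `q K` split completely in `ℚ(ζ_K, q ^ (1/p))`, and `density_bound`
contradicts the degree bound of `two_mul_totient_le_finrank`. -/
theorem exists_prime_nonresidue {p q K : ℕ} (hp : p.Prime) (hpodd : Odd p) (hq : q.Prime)
    (hpK : p ∣ K) (hK : K ≠ 0) : ∃ ℓ : ℕ, ℓ.Prime ∧ (ℓ : ZMod K) = 1 ∧ ¬ ℓ ∣ q * K ∧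
      (q : ZMod ℓ) ^ ((ℓ - 1) / p) ≠ 1 := by
  by_contra! hcon
  have := NeZero.mk hK
  have := NeZero.mk hp.ne_zero
  let f : ℚ[X] := (X ^ p - C (q : ℚ)) * (X ^ K - 1)
  have hq0 : (q : ℚ) ≠ 0 := by exact_mod_cast hq.ne_zero
  let E := f.SplittingField
  have hfne : f ≠ 0 := mul_ne_zero (X_pow_sub_C_ne_zero hp.pos _) (X_pow_sub_C_ne_zero (Nat.pos_of_ne_zero hK) 1)
  have : CharZero E := algebraRat.charZero E
  have : NumberField E := ⟨⟩
  have : IsGalois ℚ E := isGalois_iff.2 ⟨inferInstance, Polynomial.SplittingField.instNormal f⟩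
  have hsplit := SplittingField.splits f
  rw [Polynomial.map_mul] at hsplit
  have hfm : (X ^ p - C (q : ℚ)).map (algebraMap ℚ E) * (X ^ K - 1 : ℚ[X]).map (algebraMap ℚ E) ≠ 0 := by
    rw [← Polynomial.map_mul]; exact (Polynomial.map_ne_zero_iff (algebraMap ℚ E).injective).2 hfne
  have hs1 : ((X ^ p - C (q : ℚ)).map (algebraMap ℚ E)).Splits := hsplit.of_dvd hfm (dvd_mul_right _ _)
  have hs2 : ((X ^ K - 1 : ℚ[X]).map (algebraMap ℚ E)).Splits := hsplit.of_dvd hfm (dvd_mul_left _ _)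
  obtain ⟨β, hβ⟩ := hs1.exists_eval_eq_zero (by
    rw [Polynomial.degree_map, degree_X_pow_sub_C hp.pos]; exact_mod_cast hp.ne_zero)
  simp only [Polynomial.map_sub, Polynomial.map_pow, Polynomial.map_X, eval_sub, eval_pow, eval_X, map_natCast,
    Polynomial.map_natCast, eval_natCast, sub_eq_zero] at hβ
  obtain ⟨ζ, hζ⟩ : ∃ ζ : E, IsPrimitiveRoot ζ K := by
    have hcs : ((cyclotomic K ℚ).map (algebraMap ℚ E)).Splits := by
      refine hs2.of_dvd (right_ne_zero_of_mul hfm) ?_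
      exact Polynomial.map_dvd _ (cyclotomic.dvd_X_pow_sub_one K ℚ)
    obtain ⟨ζ, hζ⟩ := hcs.exists_eval_eq_zero (by
      rw [Polynomial.degree_map]; exact (degree_cyclotomic_pos K ℚ (Nat.pos_of_ne_zero hK)).ne')
    refine ⟨ζ, ?_⟩
    rw [map_cyclotomic] at hζ
    exact isRoot_cyclotomic_iff.1 hζ
  have hβint : IsIntegral ℤ β := IsIntegral.of_pow hp.pos (by rw [hβ]; simpa using (isIntegral_algebraMap (R := ℤ) (A := E) (x := (q : ℤ))))
  have hζint : IsIntegral ℤ ζ := hζ.isIntegral (Nat.pos_of_ne_zero hK)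
  have hge := two_mul_totient_le_finrank E hp hpodd hq hpK hK ζ β hζ hβ
  let ζ' : 𝓞 E := ⟨ζ, hζint⟩
  let β' : 𝓞 E := ⟨β, hβint⟩
  have hζ' : IsPrimitiveRoot ζ' K := IsPrimitiveRoot.of_map_of_injective (f := algebraMap (𝓞 E) E) hζ RingOfIntegers.coe_injective
  have hβ' : β' ^ p = (q : 𝓞 E) := RingOfIntegers.coe_injective (by push_cast; exact hβ)
  have hβ0 : β ≠ 0 := by
    rintro rfl
    rw [zero_pow hp.ne_zero] at hβ
    exact hq.ne_zero (by exact_mod_cast hβ.symm)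
  have hgen : ∀ σ : Gal(E/ℚ), σ • ζ' = ζ' → σ • β' = β' → σ = 1 := by
    intro σ h1 h2
    have h1 : σ ζ = ζ := congrArg (fun x : 𝓞 E => (x : E)) h1
    have h2 : σ β = β := congrArg (fun x : 𝓞 E => (x : E)) h2
    have hK1 : ∀ x : E, x ^ K = 1 → σ x = x := by
      intro x hx
      obtain ⟨i, -, rfl⟩ := hζ.eq_pow_of_pow_eq_one hx
      rw [map_pow, h1]
    ext x
    have hx : x ∈ Algebra.adjoin ℚ (f.rootSet E) :=
      (SplittingField.adjoin_rootSet f).ge Algebra.mem_top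
    change σ x = x
    induction hx using Algebra.adjoin_induction with
    | mem x hx =>
      have hx := (Polynomial.mem_rootSet.1 hx).2
      simp only [f, map_mul, map_sub, map_pow, aeval_X, map_natCast, map_one, mul_eq_zero, sub_eq_zero] at hx
      rcases hx with hx | hx
      · have : σ (x / β) = x / β := by
          apply hK1
          obtain ⟨e, rfl⟩ := hpK
          rw [pow_mul, div_pow, hx, hβ, div_self, one_pow]
          exact_mod_cast hq.ne_zero
        have hxe : x = x / β * β := (div_mul_cancel₀ x hβ0).symm
        rw [hxe, map_mul, this, h2]
      · exact hK1 x hx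
    | algebraMap x => simp
    | add x y _ _ hx hy => rw [map_add, hx, hy]
    | mul x y _ _ hx hy => rw [map_mul, hx, hy]
  have hb := density_bound E K (Module.finrank ℚ E) (q * K) (mul_ne_zero hq.ne_zero hK) (by
    intro ℓ h1 h2 h3
    exact exists_split_primes E hp hpK hK ζ' β' hζ' hβ' hgen h1 h2 h3 (hcon ℓ h1 h2 h3))
  have hge' : (2 : ℝ) * K.totient ≤ Module.finrank ℚ E := by exact_mod_cast hge
  have hφ : (0 : ℝ) < K.totient := by exact_mod_cast Nat.totient_pos.2 (Nat.pos_of_ne_zero hK)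
  linarith

/-! ### Jacobi sums and their valuations -/

section D2a
variable {ℓ : ℕ} [Fact ℓ.Prime] 

/-- `J(χ, φ) J(χ⁻¹, φ⁻¹) = ℓ`, over a domain rather than a field: Mathlib's
`jacobiSum_mul_jacobiSum_inv` is pulled back from the fraction field. -/
lemma jacobi_mul_inv {R : Type*} [CommRing R] [IsDomain R] [CharZero R]
    {χ φ : MulChar (ZMod ℓ) R} (hχ : χ ≠ 1) (hφ : φ ≠ 1) (hχφ : χ * φ ≠ 1) :
    jacobiSum χ φ * jacobiSum χ⁻¹ φ⁻¹ = ℓ := by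
  set f := algebraMap R (FractionRing R)
  have hf : Function.Injective f := IsFractionRing.injective R (FractionRing R)
  have : CharZero (FractionRing R) := charZero_of_injective_algebraMap hf
  have h := jacobiSum_mul_jacobiSum_inv (F := ZMod ℓ) (F' := FractionRing R)
    (χ := χ.ringHomComp f) (φ := φ.ringHomComp f) (by
      rw [ringChar.eq_zero, ZMod.ringChar_zmod_n]
      exact (Fact.out : ℓ.Prime).ne_zero.symm)
    (by rwa [Ne, MulChar.ringHomComp_eq_one_iff hf])
    (by rwa [Ne, MulChar.ringHomComp_eq_one_iff hf])
    (by rwa [← MulChar.ringHomComp_mul, Ne, MulChar.ringHomComp_eq_one_iff hf])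
  rw [MulChar.ringHomComp_inv, MulChar.ringHomComp_inv, jacobiSum_ringHomComp,
    jacobiSum_ringHomComp, ← map_mul, ZMod.card] at h
  apply hf
  rw [h, map_natCast]

/-- Jacobi sums of nontrivial characters have absolute value `√ℓ` under every complex embedding. -/
lemma jacobi_norm_sq {R : Type*} [CommRing R] [IsDomain R] [CharZero R] (f : R →+* ℂ)
    {χ φ : MulChar (ZMod ℓ) R} (hχ : χ ≠ 1) (hφ : φ ≠ 1) (hχφ : χ * φ ≠ 1) :
    ‖f (jacobiSum χ φ)‖ ^ 2 = ℓ := by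
  have h := congrArg f (jacobi_mul_inv hχ hφ hχφ)
  have h2 : f (jacobiSum χ⁻¹ φ⁻¹) = star (f (jacobiSum χ φ)) := by
    rw [← jacobiSum_ringHomComp, ← jacobiSum_ringHomComp, ← MulChar.ringHomComp_inv,
      ← MulChar.ringHomComp_inv]
    simp only [jacobiSum, star_sum, star_mul', MulChar.star_apply']
  rw [map_mul, h2, map_natCast] at h
  have h3 := congrArg (‖·‖) h
  simp only [norm_mul, norm_star, Complex.norm_natCast] at h3
  rw [sq, h3]

/-- The easy half of Stickelberger's congruence. If `χ` and `φ` reduce modulo `P` to `x ↦ x ^ A` and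
`x ↦ x ^ B` with `A + B < ℓ - 1`, the Jacobi sum reduces to `∑ x ^ A (1 - x) ^ B`, a combination of
power sums of exponent less than `ℓ - 1`, which vanish. -/
lemma jacobi_mem {R : Type*} [CommRing R] {P : Ideal R} {χ φ : MulChar (ZMod ℓ) R}
    [Algebra (ZMod ℓ) (R ⧸ P)] {A B : ℕ} (hA : A ≠ 0) (hB : B ≠ 0)
    (hχ : ∀ x : ZMod ℓ, x ≠ 0 → Ideal.Quotient.mk P (χ x) = algebraMap (ZMod ℓ) (R ⧸ P) x ^ A)
    (hφ : ∀ x : ZMod ℓ, x ≠ 0 → Ideal.Quotient.mk P (φ x) = algebraMap (ZMod ℓ) (R ⧸ P) x ^ B)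
    (hAB : A + B < ℓ - 1) : jacobiSum χ φ ∈ P := by
  rw [← Ideal.Quotient.eq_zero_iff_mem]
  have hχ' : ∀ x : ZMod ℓ, Ideal.Quotient.mk P (χ x) = algebraMap (ZMod ℓ) (R ⧸ P) x ^ A := by
    intro x
    rcases eq_or_ne x 0 with rfl | hx
    · rw [χ.map_nonunit (by simp), map_zero, map_zero, zero_pow hA]
    · exact hχ x hx
  have hφ' : ∀ x : ZMod ℓ, Ideal.Quotient.mk P (φ x) = algebraMap (ZMod ℓ) (R ⧸ P) x ^ B := by
    intro x
    rcases eq_or_ne x 0 with rfl | hx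
    · rw [φ.map_nonunit (by simp), map_zero, map_zero, zero_pow hB]
    · exact hφ x hx
  have h0 : ∑ x : ZMod ℓ, x ^ A * (1 - x) ^ B = 0 := by
    have : ∀ x : ZMod ℓ, x ^ A * (1 - x) ^ B =
        ∑ i ∈ range (B + 1), x ^ (A + i) * ((-1) ^ i * (B.choose i : ZMod ℓ)) := by
      intro x
      rw [show (1 - x) = (-x + 1) by ring, add_pow, mul_sum]
      refine sum_congr rfl fun i _ => ?_
      rw [neg_pow]; ring
    simp_rw [this]
    rw [sum_comm]
    refine sum_eq_zero fun i hi => ?_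
    rw [← sum_mul, FiniteField.sum_pow_lt_card_sub_one, zero_mul]
    rw [ZMod.card]
    have := mem_range.1 hi
    lia
  rw [jacobiSum, map_sum]
  simp_rw [map_mul, hχ', hφ', ← map_pow, ← map_mul]
  rw [← map_sum, h0, map_zero]

lemma exists_gen : ∃ g : (ZMod ℓ)ˣ, (∀ x, x ∈ Subgroup.zpowers g) ∧ orderOf g = ℓ - 1 := by
  obtain ⟨g, hg⟩ := IsCyclic.exists_generator (α := (ZMod ℓ)ˣ)
  refine ⟨g, hg, ?_⟩
  rw [orderOf_eq_card_of_forall_mem_zpowers hg, Nat.card_eq_fintype_card, ZMod.card_units]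

/-- A character of `(ℤ/ℓ)ˣ` of order dividing `k = (ℓ - 1) / e` with values in a domain of
characteristic `ℓ` is a power of the tautological one, with exponent divisible by `e`. -/
lemma mulChar_pow_exponent {κ : Type*} [CommRing κ] [IsDomain κ] [Algebra (ZMod ℓ) κ] (χ : MulChar (ZMod ℓ) κ) 
    {k e : ℕ} (hk : χ ^ k = 1) (hke : k * e = ℓ - 1) :
    ∃ u : ℕ, ∀ x : ZMod ℓ, x ≠ 0 → χ x = algebraMap (ZMod ℓ) κ x ^ (e * u) := by
  obtain ⟨g, hg, hog⟩ := exists_gen (ℓ := ℓ)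
  have hl : 0 < ℓ - 1 := by have := (Fact.out : ℓ.Prime).two_le; lia
  have hprim : IsPrimitiveRoot (algebraMap (ZMod ℓ) κ (g : ZMod ℓ)) (ℓ - 1) := by
    have h1 : IsPrimitiveRoot (g : ZMod ℓ) (ℓ - 1) := by
      rw [IsPrimitiveRoot.coe_units_iff, ← hog]; exact IsPrimitiveRoot.orderOf g
    exact h1.map_of_injective (algebraMap (ZMod ℓ) κ).injective
  have hk0 : k ≠ 0 := by rintro rfl; simp at hke; lia
  have : NeZero k := ⟨hk0⟩
  have hp2 : IsPrimitiveRoot (algebraMap (ZMod ℓ) κ (g : ZMod ℓ) ^ e) k :=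
    hprim.pow hl (by rw [← hke, mul_comm])
  obtain ⟨u, -, hu⟩ := hp2.eq_pow_of_pow_eq_one (ξ := χ g) (by
    rw [← MulChar.pow_apply_coe, hk, MulChar.one_apply_coe])
  refine ⟨u, fun x hx => ?_⟩
  obtain ⟨x, rfl⟩ := hx.isUnit
  obtain ⟨i, rfl⟩ : ∃ i : ℕ, g ^ i = x := by
    have := hg x
    rwa [← mem_powers_iff_mem_zpowers, Submonoid.mem_powers_iff] at this
  rw [Units.val_pow_eq_pow_val, map_pow, map_pow, ← hu]
  ring

end D2a

/-- Multiplication by a unit `u` permutes the nonzero residues modulo `N`. -/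
lemma prod_Ico_mul_mod {α : Type*} [CommMonoid α] {N u : ℕ} (hN : 0 < N) (hu : u.Coprime N) (h : ℕ → α) :
    ∏ k ∈ Ico 1 N, h (k * u % N) = ∏ t ∈ Ico 1 N, h t := by
  have hmaps : ∀ k ∈ Ico 1 N, k * u % N ∈ Ico 1 N := by
    intro k hk
    rw [mem_Ico] at hk ⊢
    refine ⟨Nat.pos_of_ne_zero fun h0 => ?_, Nat.mod_lt _ hN⟩
    have := (Nat.Coprime.dvd_of_dvd_mul_right hu.symm (Nat.dvd_of_mod_eq_zero h0))
    exact absurd (Nat.le_of_dvd (by lia) this) (by lia)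
  have hinj : Set.InjOn (fun k => k * u % N) (Ico 1 N : Finset ℕ) := by
    intro a ha b hb hab
    simp only [coe_Ico, Set.mem_Ico] at ha hb
    have h1 : a * u ≡ b * u [MOD N] := hab
    have h2 := Nat.ModEq.cancel_right_of_coprime (by rwa [Nat.gcd_comm]) h1
    rwa [Nat.ModEq, Nat.mod_eq_of_lt ha.2, Nat.mod_eq_of_lt hb.2] at h2
  have himg : (Ico 1 N).image (fun k => k * u % N) = Ico 1 N := by
    apply eq_of_subset_of_card_le
    · exact image_subset_iff.2 hmaps
    · rw [card_image_of_injOn hinj]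
  conv_rhs => rw [← himg]
  rw [prod_image hinj]

section
variable {ℓ : ℕ} [Fact ℓ.Prime] {R : Type*} [CommRing R] [CharZero R]

/-- Modulo a prime above `ℓ`, the powers of a character `χ` of order `N = (ℓ - 1) / e` reduce to
`x ↦ x ^ (e (k u mod N))`, where `u` is prime to `N` because reduction is injective on `N`-th roots
of unity. -/
lemma mulChar_expo [IsDomain R] {P : Ideal R} [P.IsPrime] (hP : (ℓ : R) ∈ P) [Algebra (ZMod ℓ) (R ⧸ P)]
    {N e : ℕ} (hNe : N * e = ℓ - 1) (χ : MulChar (ZMod ℓ) R) (hχ : orderOf χ = N) :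
    ∃ u : ℕ, u.Coprime N ∧ ∀ k x, x ≠ 0 → Ideal.Quotient.mk P ((χ ^ k) x) =
      algebraMap (ZMod ℓ) (R ⧸ P) x ^ (e * (k * u % N)) := by
  have hl2 := (Fact.out : ℓ.Prime).two_le
  have hNP : (N : R) ∉ P := by
    intro h
    have h1 : ((ℓ - 1 : ℕ) : R) ∈ P := by
      rw [← hNe, Nat.cast_mul]; exact P.mul_mem_right _ h
    have h2 : (1 : R) ∈ P := by
      have := P.sub_mem hP h1
      rwa [Nat.cast_sub (by lia), Nat.cast_one, sub_sub_cancel] at this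
    exact (Ideal.ne_top_iff_one P).1 Ideal.IsPrime.ne_top' h2
  have hN0 : 0 < N := by rcases N.eq_zero_or_pos with rfl | h; · simp at hNP
                         exact h
  have hred : ∀ f : ℕ, (∀ x, x ≠ 0 → Ideal.Quotient.mk P ((χ ^ f) x) = 1) → χ ^ f = 1 := by
    intro f hf
    ext x
    rw [MulChar.one_apply_coe]
    refine root_unity_eq_one_of_sub_mem hNP (w := (χ ^ f) x) ?_ ?_
    · rw [← MulChar.pow_apply_coe, ← pow_mul, mul_comm, pow_mul, ← hχ, pow_orderOf_eq_one, one_pow,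
        MulChar.one_apply_coe]
    · rw [← Ideal.Quotient.eq_zero_iff_mem, map_sub, hf _ x.ne_zero, map_one, sub_self]
  obtain ⟨u, hu⟩ := mulChar_pow_exponent (χ.ringHomComp (Ideal.Quotient.mk P)) (k := N) (e := e)
    (by rw [MulChar.ringHomComp_pow, ← hχ, pow_orderOf_eq_one, MulChar.ringHomComp_one]) hNe
  simp only [MulChar.ringHomComp_apply] at hu
  have hfer : ∀ x : ZMod ℓ, x ≠ 0 → algebraMap (ZMod ℓ) (R ⧸ P) x ^ (ℓ - 1) = 1 := fun x hx => by
    rw [← map_pow, ZMod.pow_card_sub_one_eq_one hx, map_one]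
  have hpowk : ∀ k x, x ≠ 0 → Ideal.Quotient.mk P ((χ ^ k) x) =
      algebraMap (ZMod ℓ) (R ⧸ P) x ^ (e * (k * u)) := by
    intro k x hx
    obtain ⟨x, rfl⟩ := hx.isUnit
    rw [MulChar.pow_apply_coe, map_pow, hu _ x.ne_zero, ← pow_mul]
    congr 1; ring
  refine ⟨u, ?_, fun k x hx => ?_⟩
  · have h1 : χ ^ (N / u.gcd N) = 1 := by
      apply hred
      intro x hx
      rw [hpowk _ x hx]
      obtain ⟨c, hc⟩ := Nat.gcd_dvd_left u N
      obtain ⟨d, hd⟩ := Nat.gcd_dvd_right u N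
      have hg : 0 < u.gcd N := Nat.gcd_pos_of_pos_right _ hN0
      have h2 : N / u.gcd N * u = N * c := by
        calc N / u.gcd N * u = N / u.gcd N * (u.gcd N * c) := by rw [← hc]
          _ = N * c := by rw [← mul_assoc, Nat.div_mul_cancel (Nat.gcd_dvd_right u N)]
      rw [h2, ← mul_assoc, mul_comm e, hNe, pow_mul, hfer x hx, one_pow]
    have h3 := orderOf_dvd_of_pow_eq_one h1
    rw [hχ] at h3
    have h4 := Nat.le_of_dvd (Nat.div_pos (Nat.gcd_le_right _ hN0)
      (Nat.gcd_pos_of_pos_right _ hN0)) h3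
    have h5 := Nat.gcd_pos_of_pos_right u hN0
    by_contra hne
    have h6 : 1 < u.gcd N := lt_of_le_of_ne h5 (Ne.symm hne)
    exact absurd (Nat.div_lt_self hN0 h6) (by lia)
  · rw [hpowk k x hx]
    conv_lhs => rw [← Nat.div_add_mod (k * u) N, mul_add, pow_add, ← mul_assoc, mul_comm e N, hNe,
      pow_mul, hfer x hx, one_pow, one_mul]

/-- Valuation of a Jacobi sum at a prime `P` unramified above `ℓ`, for characters reducing to
`x ↦ x ^ A` and `x ↦ x ^ B`: it is `1` or `0` according to whether `A + B < ℓ - 1`. As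
`J(χ, φ) J(χ⁻¹, φ⁻¹) = ℓ` has valuation `1`, exactly one factor lies in `P`, and `jacobi_mem`, applied
to `(A, B)` or to `(ℓ - 1 - A, ℓ - 1 - B)`, tells which. -/
lemma jacobi_val [IsDedekindDomain R] (P : IsDedekindDomain.HeightOneSpectrum R)
    (hP : P.intValuation (ℓ : R) = WithZero.exp (-1 : ℤ))
    [Algebra (ZMod ℓ) (R ⧸ P.asIdeal)] {χ φ : MulChar (ZMod ℓ) R} {A B : ℕ}
    (hA : A ≠ 0) (hB : B ≠ 0) (hA' : A < ℓ - 1) (hB' : B < ℓ - 1) (hAB : A + B ≠ ℓ - 1)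
    (h1 : χ ≠ 1) (h2 : φ ≠ 1) (h3 : χ * φ ≠ 1)
    (hχ : ∀ x, x ≠ 0 → Ideal.Quotient.mk P.asIdeal (χ x) = algebraMap (ZMod ℓ) _ x ^ A)
    (hφ : ∀ x, x ≠ 0 → Ideal.Quotient.mk P.asIdeal (φ x) = algebraMap (ZMod ℓ) _ x ^ B) :
    P.intValuation (jacobiSum χ φ) = if A + B < ℓ - 1 then WithZero.exp (-1 : ℤ) else 1 := by
  have hmul := congrArg P.intValuation (jacobi_mul_inv h1 h2 h3)
  rw [map_mul, hP] at hmul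
  have hinv : ∀ (χ : MulChar (ZMod ℓ) R) (A : ℕ), A < ℓ - 1 →
      (∀ x, x ≠ 0 → Ideal.Quotient.mk P.asIdeal (χ x) = algebraMap (ZMod ℓ) _ x ^ A) →
      (∀ x, x ≠ 0 → Ideal.Quotient.mk P.asIdeal (χ⁻¹ x) =
        algebraMap (ZMod ℓ) _ x ^ (ℓ - 1 - A)) := by
    intro χ A hA h x hx
    have e1 : χ⁻¹ x * χ x = 1 := by
      rw [← MulChar.mul_apply, inv_mul_cancel, MulChar.one_apply hx.isUnit]
    have e2 := congrArg (Ideal.Quotient.mk P.asIdeal) e1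
    rw [map_mul, h x hx, map_one] at e2
    have e3 : algebraMap (ZMod ℓ) (R ⧸ P.asIdeal) x ^ (ℓ - 1 - A) *
        algebraMap (ZMod ℓ) (R ⧸ P.asIdeal) x ^ A = 1 := by
      rw [← pow_add, Nat.sub_add_cancel hA.le, ← map_pow, ZMod.pow_card_sub_one_eq_one hx, map_one]
    have e4 : algebraMap (ZMod ℓ) (R ⧸ P.asIdeal) x ^ A ≠ 0 := right_ne_zero_of_mul_eq_one e3
    exact mul_right_cancel₀ e4 (e2.trans e3.symm)
  have key : ∀ x y : R, x ∈ P.asIdeal → P.intValuation x * P.intValuation y = WithZero.exp (-1 : ℤ) →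
      P.intValuation x = WithZero.exp (-1 : ℤ) ∧ P.intValuation y = 1 := by
    intro x y hx hxy
    have hx1 : P.intValuation x ≤ WithZero.exp (-1 : ℤ) := by
      have := (P.intValuation_le_pow_iff_mem x 1).2 (by simpa using hx)
      simpa using this
    have hy1 := P.intValuation_le_one y
    have hxe : P.intValuation x = WithZero.exp (-1 : ℤ) := by
      refine le_antisymm hx1 ?_
      rw [← hxy]
      exact mul_le_of_le_one_right' hy1
    refine ⟨hxe, ?_⟩
    rw [hxe] at hxy
    exact mul_left_cancel₀ (WithZero.exp_ne_zero) (hxy.trans (mul_one _).symm)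
  split_ifs with hlt
  · exact (key _ _ (jacobi_mem hA hB hχ hφ hlt) hmul).1
  · rw [mul_comm] at hmul
    exact (key _ _ (jacobi_mem (by lia) (by lia) (hinv χ A hA' hχ) (hinv φ B hB' hφ) (by lia)) hmul).2

lemma jacobi_val_one [IsDedekindDomain R] (P : IsDedekindDomain.HeightOneSpectrum R)
    (hP : P.intValuation (ℓ : R) = 1)
    {χ φ : MulChar (ZMod ℓ) R}
    (h1 : χ ≠ 1) (h2 : φ ≠ 1) (h3 : χ * φ ≠ 1) :
    P.intValuation (jacobiSum χ φ) = 1 := by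
  have hmul := congrArg P.intValuation (jacobi_mul_inv h1 h2 h3)
  rw [map_mul, hP] at hmul
  refine le_antisymm (P.intValuation_le_one _) ?_
  rw [← hmul]
  exact mul_le_of_le_one_right' (P.intValuation_le_one _)
end

/-! ### The root of unity relating Jacobi sums and Gauss sums -/

section
set_option linter.unusedSectionVars false
variable {ℓ : ℕ} [Fact ℓ.Prime] {R : Type*} [CommRing R]

/-- The expression `ψ(-1) ℓ ∏_{1 ≤ k < m - 1} J(ψ, ψ ^ k)`. For `ψ` of order `m > 1` it equals `g(ψ) ^ m`,
where `g(ψ)` is a Gauss sum; unlike the latter it makes sense without `ℓ`-th roots of unity in `R`. -/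
noncomputable def gaussPow (m : ℕ) (ψ : MulChar (ZMod ℓ) R) : R :=
  ψ (-1) * ℓ * ∏ k ∈ Ico 1 (m - 1), jacobiSum ψ (ψ ^ k)

lemma char_nontriv {χ ψ : MulChar (ZMod ℓ) R} {q m w : ℕ}
    (hw : q = 1 + m * w) (hχ : orderOf χ = q) (hψ : orderOf ψ = m)
    {k : ℕ} (hk : k ∈ Ico 1 q) : χ ^ k ≠ 1 ∧ χ ^ k * ψ ≠ 1 := by
  rw [mem_Ico] at hk
  have hqm : q.Coprime m := by
    rw [hw]; simp
  have h1 : ∀ i, χ ^ i = 1 → q ∣ i := fun i hi => hχ ▸ orderOf_dvd_of_pow_eq_one hi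
  have hqk : ¬ q ∣ k := fun h => absurd (Nat.le_of_dvd (by lia) h) (by lia)
  refine ⟨fun h => hqk (h1 _ h), fun h => ?_⟩
  have h2 : (χ ^ k * ψ) ^ m = 1 := by rw [h, one_pow]
  rw [mul_pow, ← hψ, pow_orderOf_eq_one, mul_one, ← pow_mul, hψ] at h2
  exact hqk (hqm.dvd_of_dvd_mul_right (h1 _ h2))

lemma psi_nontriv {ψ : MulChar (ZMod ℓ) R} {m : ℕ} (hψ : orderOf ψ = m) {k : ℕ} (h0 : 0 < k)
    (hk : k < m) : ψ ^ k ≠ 1 := by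
  intro h
  exact absurd (Nat.le_of_dvd h0 (hψ ▸ orderOf_dvd_of_pow_eq_one h)) (by lia)

lemma psi_neg_one_unit (ψ : MulChar (ZMod ℓ) R) : IsUnit (ψ (-1)) :=
  IsUnit.map ψ (by simp)

lemma val_unit [IsDedekindDomain R] (P : IsDedekindDomain.HeightOneSpectrum R) {x : R} (hx : IsUnit x) :
    P.intValuation x = 1 := by
  rw [IsDedekindDomain.HeightOneSpectrum.intValuation_eq_one_iff]
  exact fun h => P.isPrime.ne_top (Ideal.eq_top_of_isUnit_mem _ h hx)

/-- The Stickelberger valuations that drive the construction: at every prime `P` at which `ℓ` has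
valuation `0` or `1`, the product of the `J(χ ^ k, ψ)` has the same valuation as `(g(ψ) ^ m) ^ w`. If `ψ`
reduces to `x ↦ x ^ (q e v')` with `0 < v' < m`, the left side counts the `t ∈ [1, q)` with
`t + v' w < q`, and `g(ψ) ^ m` has valuation `m - v'`; both sides are then `(m - v') w`. -/
lemma nu_val [CharZero R] [IsDedekindDomain R] (P : IsDedekindDomain.HeightOneSpectrum R)
    (hP : P.intValuation (ℓ : R) = WithZero.exp (-1 : ℤ) ∨ P.intValuation (ℓ : R) = 1)
    {χ ψ : MulChar (ZMod ℓ) R} {q m w e : ℕ} (hq : q.Prime)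
    (hm : 1 < m) (hw : q = 1 + m * w) (hl : q * m * e = ℓ - 1)
    (hχ : orderOf χ = q) (hψ : orderOf ψ = m) :
    P.intValuation (∏ k ∈ Ico 1 q, jacobiSum (χ ^ k) ψ) = P.intValuation (gaussPow m ψ) ^ w := by
  have hψ1 : ψ ≠ 1 := by simpa using psi_nontriv hψ (k := 1) (by lia) hm
  rw [gaussPow, map_mul, map_mul, val_unit P (psi_neg_one_unit ψ), one_mul, map_prod, map_prod]
  rcases hP with hP | hP
  swap
  · rw [hP, prod_eq_one, prod_eq_one]
    · simp
    · intro k hk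
      rw [mem_Ico] at hk
      exact jacobi_val_one P hP hψ1 (psi_nontriv hψ (by lia) (by lia))
        (by rw [← pow_succ']; exact psi_nontriv hψ (by lia) (by lia))
    · intro k hk
      have := char_nontriv hw hχ hψ hk
      exact jacobi_val_one P hP this.1 hψ1 this.2
  have hlP : (ℓ : R) ∈ P.asIdeal := by
    rw [← P.intValuation_lt_one_iff_mem, hP]
    exact WithZero.exp_lt_exp.2 (by norm_num)
  have hl1 : 0 < ℓ - 1 := by have := (Fact.out : ℓ.Prime).two_le; lia
  have he : 0 < e := Nat.pos_of_ne_zero (by rintro rfl; simp at hl; lia)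
  have : P.asIdeal.IsPrime := P.isPrime
  have hchar : CharP (R ⧸ P.asIdeal) ℓ := by
    rw [CharP.charP_iff_prime_eq_zero (Fact.out : ℓ.Prime)]
    have := Ideal.Quotient.eq_zero_iff_mem.2 hlP
    rwa [map_natCast] at this
  let _ : Algebra (ZMod ℓ) (R ⧸ P.asIdeal) := ZMod.algebra _ ℓ
  obtain ⟨u, hu, hue⟩ := mulChar_expo hlP (N := q) (e := m * e) (by rw [← hl]; ring) χ hχ
  obtain ⟨v, hv, hve⟩ := mulChar_expo hlP (N := m) (e := q * e) (by rw [← hl]; ring) ψ hψ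
  set v' := 1 * v % m with hv'
  have hv'1 : v' < m := Nat.mod_lt _ (by lia)
  have hmodpos : ∀ {N u k : ℕ}, u.Coprime N → 0 < k → k < N → 0 < k * u % N := by
    intro N u k hu h0 hk
    refine Nat.pos_of_ne_zero fun h => ?_
    have := (Nat.Coprime.dvd_of_dvd_mul_right hu.symm (Nat.dvd_of_mod_eq_zero h))
    exact absurd (Nat.le_of_dvd h0 this) (by lia)
  have hv'0 : 0 < v' := hmodpos hv one_pos hm
  have hve1 := hve 1
  rw [pow_one] at hve1
  have hA : ∀ t, m * e * t + q * e * v' = e * (m * t + q * v') := fun t => by ring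
  have hL : ℓ - 1 = e * (q * m) := by rw [← hl]; ring
  have hA2 : ∀ t, m * e * t = e * (m * t) := fun t => by ring
  have hB2 : ∀ t, q * e * t = e * (q * t) := fun t => by ring
  -- `t / q + v' / m < 1` becomes `t + v' w < q` because `q = 1 + m w`
  have hJ1 : ∀ k ∈ Ico 1 q, P.intValuation (jacobiSum (χ ^ k) ψ) =
      (fun t => if t + v' * w < q then WithZero.exp (-1 : ℤ) else 1) (k * u % q) := by
    intro k hk
    have hn := char_nontriv hw hχ hψ hk
    rw [mem_Ico] at hk
    have ht0 := hmodpos hu hk.1 hk.2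
    have htq : k * u % q < q := Nat.mod_lt _ (by lia)
    set t := k * u % q
    have hne : m * t + q * v' ≠ q * m := by
      intro h
      have : q ∣ m * t := (Nat.dvd_add_left (dvd_mul_right q v')).1 (h ▸ dvd_mul_right q m)
      have := (show q.Coprime m by rw [hw]; simp).dvd_of_dvd_mul_left this
      exact absurd (Nat.le_of_dvd ht0 this) (by lia)
    rw [jacobi_val P hP (A := m * e * t) (B := q * e * v') (by positivity)
      (by have := hq.pos; positivity) ?_ ?_ ?_ hn.1 hψ1 hn.2 (hue k) hve1]
    · congr 1
      rw [hA, hL, Nat.mul_lt_mul_left he]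
      apply propext
      rw [hw]
      constructor
      · intro h
        by_contra! h2
        nlinarith
      · intro h
        nlinarith
    · rw [hL, hA2, Nat.mul_lt_mul_left he, mul_comm q]; gcongr
    · rw [hL, hB2]; gcongr; exact hq.pos
    · rw [hL, hA]; intro h; exact hne (Nat.eq_of_mul_eq_mul_left he h)
  have hJ2 : ∀ k ∈ Ico 1 (m - 1), P.intValuation (jacobiSum ψ (ψ ^ k)) =
      (fun t => if t + v' < m then WithZero.exp (-1 : ℤ) else 1) (k * v % m) := by
    intro k hk
    rw [mem_Ico] at hk
    have ht0 := hmodpos hv hk.1 (by lia)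
    have htm : k * v % m < m := Nat.mod_lt _ (by lia)
    have hne : v' + k * v % m ≠ m := by
      intro h
      have h1 : (1 * v + k * v) % m = 0 := by
        rw [Nat.add_mod, ← hv', h, Nat.mod_self]
      rw [← add_mul] at h1
      exact absurd h1 (hmodpos hv (by lia) (by lia)).ne'
    set t := k * v % m
    have hqpos := hq.pos
    rw [jacobi_val P hP (A := q * e * v') (B := q * e * t) (by positivity) (by positivity)
      ?_ ?_ ?_ hψ1 (psi_nontriv hψ (by lia) (by lia))
      (by rw [← pow_succ']; exact psi_nontriv hψ (by lia) (by lia)) hve1 (hve k)]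
    · congr 1
      rw [← mul_add, hB2, hL, Nat.mul_lt_mul_left he, Nat.mul_lt_mul_left hqpos, add_comm]
    · rw [hL, hB2]; gcongr
    · rw [hL, hB2]; gcongr
    · rw [← mul_add, hB2, hL]
      intro h
      exact hne (Nat.eq_of_mul_eq_mul_left hqpos (Nat.eq_of_mul_eq_mul_left he h))
  -- the missing index `k = m - 1` contributes a trivial factor, so the product may run over `[1, m)`
  have hlast : (fun t => if t + v' < m then WithZero.exp (-1 : ℤ) else 1) ((m - 1) * v % m) = 1 := by
    have : (m - 1) * v % m + v' = m := by
      have h1 : ((m - 1) * v % m + v') % m = 0 := by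
        rw [hv', ← Nat.add_mod, ← add_mul, Nat.sub_add_cancel (by lia), Nat.mul_mod_right]
      have h2 := Nat.mod_lt ((m - 1) * v) (show 0 < m by lia)
      obtain ⟨c, hc⟩ := Nat.dvd_of_mod_eq_zero h1
      have hc1 : c = 1 := by
        have : c < 2 := by by_contra! h; nlinarith
        have : c ≠ 0 := by rintro rfl; lia
        lia
      rw [hc, hc1, mul_one]
    simp [this]
  rw [prod_congr rfl hJ1, prod_Ico_mul_mod hq.pos hu
    (fun t => if t + v' * w < q then WithZero.exp (-1 : ℤ) else 1), hP, prod_congr rfl hJ2]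
  have hext := prod_Ico_succ_top (a := 1) (b := m - 1) (by lia)
    (fun k => (fun t => if t + v' < m then WithZero.exp (-1 : ℤ) else 1) (k * v % m))
  rw [hlast, mul_one, Nat.sub_add_cancel (by lia), prod_Ico_mul_mod (by lia) hv
    (fun t => if t + v' < m then WithZero.exp (-1 : ℤ) else 1)] at hext
  rw [← hext]
  simp only [prod_ite, prod_const_one, mul_one, prod_const]
  have e1 : (Ico 1 q).filter (fun t => t + v' * w < q) = Ico 1 (q - v' * w) := by
    ext t; simp only [mem_filter, mem_Ico]; lia
  have e2 : (Ico 1 m).filter (fun t => t + v' < m) = Ico 1 (m - v') := by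
    ext t; simp only [mem_filter, mem_Ico]; lia
  rw [e1, e2, Nat.card_Ico, Nat.card_Ico, ← pow_succ', ← pow_mul]
  congr 1
  have : m - v' - 1 + 1 = m - v' := by lia
  rw [this, Nat.sub_mul, hw]
  lia

end

section
open NumberField
variable {ℓ : ℕ} [Fact ℓ.Prime] {M : Type*} [Field M] [NumberField M]

/-- A prime `ℓ` not dividing `K` is unramified in the `K`-th cyclotomic field. -/
lemma unram_val {K : ℕ} [NeZero K] [IsCyclotomicExtension {K} ℚ M] (hK : ¬ ℓ ∣ K)
    (P : IsDedekindDomain.HeightOneSpectrum (𝓞 M)) :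
    P.intValuation (ℓ : 𝓞 M) = WithZero.exp (-1 : ℤ) ∨ P.intValuation (ℓ : 𝓞 M) = 1 := by
  have hl := (Fact.out : ℓ.Prime)
  by_cases hlP : (ℓ : 𝓞 M) ∈ P.asIdeal
  · left
    have hPp : P.asIdeal.IsPrime := P.isPrime
    have hmax : (Ideal.span {(ℓ : ℤ)}).IsMaximal :=
      PrincipalIdealRing.isMaximal_of_irreducible (Nat.prime_iff_prime_int.1 hl).irreducible
    have hlo : P.asIdeal.LiesOver (Ideal.span {(ℓ : ℤ)}) := by
      refine ⟨hmax.eq_of_le (Ideal.IsPrime.ne_top inferInstance) ?_⟩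
      rw [Ideal.span_singleton_le_iff_mem, Ideal.mem_comap]
      simpa using hlP
    have h1 := IsCyclotomicExtension.Rat.ramificationIdx_eq_of_not_dvd ℓ M (m := K) P.asIdeal hK
    have hl0 : (ℓ : 𝓞 M) ≠ 0 := Nat.cast_ne_zero.2 hl.ne_zero
    have hmap : (Ideal.span {(ℓ : ℤ)}).map (algebraMap ℤ (𝓞 M)) = Ideal.span {(ℓ : 𝓞 M)} := by
      rw [Ideal.map_span, Set.image_singleton]; simp
    rw [Ideal.IsDedekindDomain.ramificationIdx_eq_multiplicity (Ideal.span {(ℓ : ℤ)}) P.asIdeal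
      (by rw [hmap]; simpa using hl0), hmap] at h1
    rw [P.intValuation_eq_exp_neg_multiplicity hl0, h1]; rfl
  · right
    rwa [IsDedekindDomain.HeightOneSpectrum.intValuation_eq_one_iff]

/-- Every complex embedding takes `g(ψ) ^ m` to a number of absolute value `√ℓ ^ m`. -/
lemma gaussPow_norm {m : ℕ} {ψ : MulChar (ZMod ℓ) (𝓞 M)} (hm : 1 < m) (hψ : orderOf ψ = m)
    (f : 𝓞 M →+* ℂ) : ‖f (gaussPow m ψ)‖ ^ 2 = (ℓ : ℝ) ^ m := by
  have hψ1 : ψ ≠ 1 := by simpa using psi_nontriv hψ (k := 1) (by lia) hm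
  have h1 : ψ (-1) ^ 2 = 1 := by rw [← map_pow]; simp
  have h2 : ‖f (ψ (-1))‖ ^ 2 = 1 := by rw [← norm_pow, ← map_pow, h1, map_one, norm_one]
  have h3 : ‖f (∏ k ∈ Ico 1 (m - 1), jacobiSum ψ (ψ ^ k))‖ ^ 2 = (ℓ : ℝ) ^ (m - 2) := by
    rw [map_prod, norm_prod, ← prod_pow, prod_congr rfl (fun k hk => ?_) (g := fun _ => (ℓ : ℝ))]
    · rw [prod_const, Nat.card_Ico]; congr 1
    · rw [mem_Ico] at hk
      exact jacobi_norm_sq f hψ1 (psi_nontriv hψ (by lia) (by lia))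
        (by rw [← pow_succ']; exact psi_nontriv hψ (by lia) (by lia))
  rw [gaussPow, map_mul, map_mul, norm_mul, norm_mul, mul_pow, mul_pow, h2, h3, one_mul, map_natCast,
    Complex.norm_natCast, ← pow_add]
  congr 1
  lia

lemma gaussPow_ne_zero {m : ℕ} {ψ : MulChar (ZMod ℓ) (𝓞 M)} (hm : 1 < m) (hψ : orderOf ψ = m) :
    gaussPow m ψ ≠ 0 := by
  intro h
  obtain ⟨f⟩ : Nonempty (M →+* ℂ) := inferInstance
  have := gaussPow_norm hm hψ (f.comp (algebraMap (𝓞 M) M))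
  rw [h, map_zero, norm_zero] at this
  have h2 : (0 : ℝ) < (ℓ : ℝ) ^ m := by
    have := (Fact.out : ℓ.Prime).pos
    positivity
  rw [← this] at h2
  norm_num at h2

/-- The product of the Jacobi sums `J(χ ^ k, ψ)` is `(g(ψ) ^ m) ^ w` times a root of unity `ν`: the quotient is
integral by `nu_val`, all its conjugates have absolute value `1`, and Kronecker's theorem applies. -/
lemma nu_exists {χ ψ : MulChar (ZMod ℓ) (𝓞 M)} {q m w e : ℕ} [NeZero (q * m)]
    [IsCyclotomicExtension {q * m} ℚ M] (hq : q.Prime)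
    (hm : 1 < m) (hw : q = 1 + m * w) (hl : q * m * e = ℓ - 1)
    (hχ : orderOf χ = q) (hψ : orderOf ψ = m) :
    ∃ ν : 𝓞 M, ∏ k ∈ Ico 1 q, jacobiSum (χ ^ k) ψ = ν * gaussPow m ψ ^ w ∧
      ∃ N : ℕ, 0 < N ∧ ν ^ N = 1 := by
  have hψ1 : ψ ≠ 1 := by simpa using psi_nontriv hψ (k := 1) (by lia) hm
  have hK : ¬ ℓ ∣ q * m := by
    intro h
    have h1 := h.trans (Dvd.intro e hl)
    have := (Fact.out : ℓ.Prime).two_le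
    exact absurd (Nat.le_of_dvd (by lia) h1) (by lia)
  set c := algebraMap (𝓞 M) M (gaussPow m ψ) with hc
  set N := ∏ k ∈ Ico 1 q, jacobiSum (χ ^ k) ψ with hN
  have hc0 : c ≠ 0 := by
    rw [hc, Ne, map_eq_zero_iff _ (IsFractionRing.injective (𝓞 M) M)]
    exact gaussPow_ne_zero hm hψ
  obtain ⟨ν, hν⟩ := IsDedekindDomain.HeightOneSpectrum.mem_integers_of_valuation_le_one (R := 𝓞 M)
    M (algebraMap (𝓞 M) M N / c ^ w) (fun P => by
      have h1 := nu_val P (unram_val hK P) hq hm hw hl hχ hψ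
      rw [map_div₀, map_pow, hc, IsDedekindDomain.HeightOneSpectrum.valuation_of_algebraMap,
        IsDedekindDomain.HeightOneSpectrum.valuation_of_algebraMap, h1, div_self]
      rw [← h1]
      apply P.intValuation_ne_zero
      intro h0
      have h3 : P.intValuation (gaussPow m ψ) ^ w = 0 := by rw [← h1, h0, map_zero]
      exact P.intValuation_ne_zero _ (gaussPow_ne_zero hm hψ) (eq_zero_of_pow_eq_zero h3))
  have hν1 : N = ν * gaussPow m ψ ^ w := by
    apply IsFractionRing.injective (𝓞 M) M
    rw [map_mul, map_pow, hν, ← hc, div_mul_cancel₀]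
    exact pow_ne_zero _ hc0
  refine ⟨ν, hν1, ?_⟩
  obtain ⟨n, hn, h⟩ := NumberField.Embeddings.pow_eq_one_of_norm_eq_one M ℂ
    (x := algebraMap (𝓞 M) M ν) ν.isIntegral_coe (fun φ => by
      set f := φ.comp (algebraMap (𝓞 M) M)
      change ‖f ν‖ = 1
      have h1 : ‖f N‖ ^ 2 = (ℓ : ℝ) ^ (q - 1) := by
        rw [hN, map_prod, norm_prod, ← prod_pow,
          prod_congr rfl (fun k hk => ?_) (g := fun _ => (ℓ : ℝ))]
        · rw [prod_const, Nat.card_Ico]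
        · have := char_nontriv hw hχ hψ hk
          exact jacobi_norm_sq f this.1 hψ1 this.2
      rw [hν1, map_mul, map_pow, norm_mul, norm_pow, mul_pow, ← pow_mul, mul_comm w, pow_mul,
        gaussPow_norm hm hψ, ← pow_mul, show q - 1 = m * w by lia] at h1
      have h2 : (0 : ℝ) < (ℓ : ℝ) ^ (m * w) := by
        have := (Fact.out : ℓ.Prime).pos
        positivity
      have h3 : ‖f ν‖ ^ 2 = 1 := by
        field_simp at h1
        exact h1
      exact (pow_eq_one_iff_of_nonneg (norm_nonneg _) two_ne_zero).1 h3)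
  refine ⟨n, hn, ?_⟩
  apply IsFractionRing.injective (𝓞 M) M
  rw [map_pow, h, map_one]
end

/-! ### Reduction to characteristic `q` -/

section
set_option linter.unusedSectionVars false
variable {ℓ : ℕ} [Fact ℓ.Prime]

/-- In characteristic `q ≡ 1` modulo `m`, the Frobenius gives `g(ψ) ^ q = ψ(q)⁻¹ g(ψ)`, that is
`ψ(q) (g(ψ) ^ m) ^ w = 1`. -/
lemma gauss_frob_relation {E : Type*} [Field E] {q m w : ℕ} [Fact q.Prime] [CharP E q]
    (hw : q = 1 + m * w) (hm : 1 < m) (hlq : ℓ ≠ q) (ψ : MulChar (ZMod ℓ) E) (hψ : orderOf ψ = m)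
    (θ : AddChar (ZMod ℓ) E) (hθ : θ.IsPrimitive) :
    ψ (q : ZMod ℓ) * gaussPow m ψ ^ w = 1 := by
  have hl := (Fact.out : ℓ.Prime)
  have hq := (Fact.out : q.Prime)
  have h1 := gaussSum_pow_eq_prod_jacobiSum (χ := ψ) (ψ := θ) (by lia) hθ
  rw [hψ, ZMod.card] at h1
  have hψ1 : ψ ≠ 1 := by
    rintro rfl; rw [orderOf_one] at hψ; lia
  have hg : gaussSum ψ θ ≠ 0 := gaussSum_ne_zero_of_nontrivial (by
    rw [ZMod.card, Ne, CharP.cast_eq_zero_iff E q, Nat.prime_dvd_prime_iff_eq hq hl]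
    exact hlq.symm) hψ1 hθ
  have h2 := gaussSum_frob (p := q) ψ θ
  have h3 : ψ ^ q = ψ := by
    rw [hw, pow_add, pow_one, pow_mul, ← hψ, pow_orderOf_eq_one, one_pow, mul_one]
  have hqu : IsUnit (q : ZMod ℓ) := by
    rw [isUnit_iff_ne_zero, Ne, CharP.cast_eq_zero_iff (ZMod ℓ) ℓ, Nat.prime_dvd_prime_iff_eq hl hq]
    exact hlq
  obtain ⟨a, ha⟩ := hqu
  have h4 := gaussSum_mulShift ψ θ a
  rw [h3, AddChar.pow_mulShift] at h2
  rw [ha, ← h2, hw, pow_add, pow_one, pow_mul, h1, mul_left_comm] at h4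
  rw [gaussPow, hw]
  exact mul_left_cancel₀ hg (h4.trans (mul_one _).symm)

/-- Reduction to characteristic `q` preserves the order of a character of order prime to `q`. -/
lemma order_reduction {R k : Type*} [CommRing R] [IsDomain R] [Field k] (f : R →+* k)
    {q m : ℕ} [CharP k q] (hq : q.Prime) (hqm : q.Coprime m)
    (ψ : MulChar (ZMod ℓ) R) (hψ : orderOf ψ = m) : orderOf (ψ.ringHomComp f) = m := by
  have hmQ : (m : R) ∉ RingHom.ker f := by
    rw [RingHom.mem_ker, map_natCast, CharP.cast_eq_zero_iff k q]
    intro h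
    exact hq.one_lt.ne' (Nat.Coprime.eq_one_of_dvd hqm h)
  apply Nat.dvd_antisymm
  · apply orderOf_dvd_of_pow_eq_one
    rw [MulChar.ringHomComp_pow, ← hψ, pow_orderOf_eq_one, MulChar.ringHomComp_one]
  · rw [← hψ]
    apply orderOf_dvd_of_pow_eq_one
    ext x
    rw [MulChar.one_apply_coe]
    refine root_unity_eq_one_of_sub_mem hmQ ?_ ?_
    · rw [← MulChar.pow_apply_coe, ← pow_mul, mul_comm, pow_mul, ← hψ, pow_orderOf_eq_one, one_pow,
        MulChar.one_apply_coe]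
    · have h1 : (ψ.ringHomComp f) ^ orderOf (ψ.ringHomComp f) = 1 := pow_orderOf_eq_one _
      rw [MulChar.ringHomComp_pow] at h1
      have h2 := congrArg (fun c => c (x : ZMod ℓ)) h1
      simp only [MulChar.ringHomComp_apply, MulChar.one_apply_coe] at h2
      rw [RingHom.mem_ker, map_sub, h2, map_one, sub_self]

lemma map_gaussPow {R k : Type*} [CommRing R] [CommRing k] (f : R →+* k) (m : ℕ)
    (ψ : MulChar (ZMod ℓ) R) : gaussPow m (ψ.ringHomComp f) = f (gaussPow m ψ) := by
  simp only [gaussPow, map_mul, map_prod, map_natCast, ← jacobiSum_ringHomComp,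
    MulChar.ringHomComp_pow, MulChar.ringHomComp_apply]

/-- The residue of `ν` in characteristic `q` is `ψ(q)`: there `χ` becomes trivial, so the product of the
`J(χ ^ k, ψ)` reduces to `(-1) ^ (q - 1) = 1`, and `gauss_frob_relation` evaluates the other factor. -/
lemma nu_mod {R k : Type*} [CommRing R] [IsDomain R] [Field k] (f : R →+* k)
    {q m w : ℕ} [CharP k q] (hq : q.Prime) (hqo : Odd q) (hm : 1 < m) (hw : q = 1 + m * w) (hlq : ℓ ≠ q)
    {χ ψ : MulChar (ZMod ℓ) R} (hχ : χ ^ q = 1) (hψ : orderOf ψ = m) {ν : R}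
    (hν : ∏ k ∈ Ico 1 q, jacobiSum (χ ^ k) ψ = ν * gaussPow m ψ ^ w) :
    f ν = f (ψ q) ∧ orderOf (ψ.ringHomComp f) = m := by
  have hqm : q.Coprime m := by rw [hw]; simp
  have hqF : Fact q.Prime := ⟨hq⟩
  have hl := (Fact.out : ℓ.Prime)
  have hred := order_reduction f hq hqm ψ hψ
  refine ⟨?_, hred⟩
  let θ := AddChar.FiniteField.primitiveChar (ZMod ℓ) k (by
    rw [ringChar.eq k q, ZMod.ringChar_zmod_n]; exact hlq.symm)
  let g := algebraMap k (CyclotomicField θ.n k)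
  have hg : Function.Injective g := g.injective
  have hchar : CharP (CyclotomicField θ.n k) q := charP_of_injective_algebraMap hg q
  have hredg := order_reduction g hq hqm _ hred
  have h1 := gauss_frob_relation hw hm hlq _ hredg θ.char θ.prim
  rw [map_gaussPow, map_gaussPow, MulChar.ringHomComp_apply, MulChar.ringHomComp_apply] at h1
  have h2 : f (ψ q) * f (gaussPow m ψ) ^ w = 1 := by
    apply hg
    rw [map_mul, map_pow, h1, map_one]
  have h3 : χ.ringHomComp f = 1 := by
    ext x
    rw [MulChar.one_apply_coe, MulChar.ringHomComp_apply]
    have h4 : f (χ x) ^ q = 1 := by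
      rw [← map_pow, ← MulChar.pow_apply_coe, hχ, MulChar.one_apply_coe, map_one]
    have h5 : (f (χ x) - 1) ^ q = 0 := by
      rw [sub_pow_char, h4, one_pow, sub_self]
    exact sub_eq_zero.1 (eq_zero_of_pow_eq_zero h5)
  have hψ1 : ψ.ringHomComp f ≠ 1 := by
    intro h; rw [h, orderOf_one] at hred; lia
  have h6 := congrArg f hν
  rw [map_prod, map_mul, map_pow] at h6
  simp_rw [← jacobiSum_ringHomComp, ← MulChar.ringHomComp_pow, h3, one_pow,
    jacobiSum_one_nontrivial hψ1] at h6
  rw [prod_const, Nat.card_Ico, (Nat.Odd.sub_odd hqo odd_one).neg_one_pow] at h6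
  rw [h6] at h2
  exact (mul_right_cancel₀ (right_ne_zero_of_mul_eq_one h6.symm) h2).symm

/-- A character of order `p ^ (s + 1)` takes a value of full order at `q` when `q` is not a `p`-th power
modulo `ℓ`. -/
lemma psi_q_order {k : Type*} [Field k] {p s q e : ℕ} (hp : p.Prime) (ψ : MulChar (ZMod ℓ) k)
    (hψ : orderOf ψ = p ^ (s + 1)) (hle : p ^ (s + 1) * e = ℓ - 1) 
    (hq : (q : ZMod ℓ) ≠ 0) (hres : (q : ZMod ℓ) ^ ((ℓ - 1) / p) ≠ 1) :
    orderOf (ψ q) = p ^ (s + 1) := by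
  have := Fact.mk hp
  have hqu : IsUnit (q : ZMod ℓ) := isUnit_iff_ne_zero.2 hq
  apply orderOf_eq_prime_pow
  swap
  · rw [← MulChar.pow_apply' _ (by have := hp.pos; positivity), ← hψ, pow_orderOf_eq_one,
      MulChar.one_apply hqu]
  intro h
  apply hres
  obtain ⟨g, hg, hog⟩ := exists_gen (ℓ := ℓ)
  obtain ⟨x, hx⟩ := hqu
  obtain ⟨i, hi⟩ : ∃ i : ℕ, g ^ i = x := by
    have := hg x
    rwa [← mem_powers_iff_mem_zpowers, Submonoid.mem_powers_iff] at this
  have hord : orderOf (ψ (g : ZMod ℓ)) = p ^ (s + 1) := by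
    rw [← hψ]
    apply Nat.dvd_antisymm
    · apply orderOf_dvd_of_pow_eq_one
      rw [← MulChar.pow_apply_coe, pow_orderOf_eq_one, MulChar.one_apply_coe]
    · apply orderOf_dvd_of_pow_eq_one
      rw [MulChar.eq_iff hg, MulChar.pow_apply_coe, pow_orderOf_eq_one, MulChar.one_apply_coe]
  rw [← hx, ← hi, Units.val_pow_eq_pow_val, map_pow, ← pow_mul] at h
  have h1 := orderOf_dvd_of_pow_eq_one h
  rw [hord, pow_succ', Nat.mul_dvd_mul_iff_right (by have := hp.pos; positivity)] at h1
  obtain ⟨c, rfl⟩ := h1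
  rw [← hx, ← hi, ← Units.val_pow_eq_pow_val, ← pow_mul, mul_right_comm,
    Nat.mul_div_cancel' (by rw [← hle, pow_succ']; exact ⟨p ^ s * e, by ring⟩), pow_mul, ← hog, pow_orderOf_eq_one,
    one_pow, Units.val_one]
end

/-! ### A primitive root of unity as a norm -/

/-- If `s` translates a family `h` by `u`, the product of `h` over the group is the norm, for `s`, of the
product of `h` over representatives of the cosets of `⟨u⟩`. -/
lemma prod_transversal {G : Type*} [CommGroup G] [Fintype G] {M : Type*} [Field M]
    (s : M →+* M) (u : G) (h : G → M) (hs : ∀ g, s (h g) = h (g * u)) {N : ℕ} (hN : orderOf u = N) :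
    ∃ y : M, ∏ i ∈ range N, (s^[i]) y = ∏ g, h g := by
  classical
  let H := Subgroup.zpowers u
  have hsi : ∀ i g, (s^[i]) (h g) = h (g * u ^ i) := by
    intro i
    induction i with
    | zero => intro g; simp
    | succ i ih => intro g; rw [Function.iterate_succ_apply', ih, hs, pow_succ, mul_assoc]
  have hsp : ∀ i (f : G ⧸ H → M), (s^[i]) (∏ Q, f Q) = ∏ Q, (s^[i]) (f Q) := by
    intro i f
    rw [← RingHom.coe_pow, map_prod]
  refine ⟨∏ Q : G ⧸ H, h Q.out, ?_⟩
  simp_rw [hsp, hsi]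
  have hbij : Function.Bijective (fun x : (G ⧸ H) × H => x.1.out * (x.2 : G)) := by
    constructor
    · rintro ⟨Q, x⟩ ⟨Q', x'⟩ hx
      have hx' : Q.out * (x : G) = Q'.out * (x' : G) := hx
      have hQ : Q = Q' := by
        have h1 := congrArg (QuotientGroup.mk (s := H)) hx'
        rwa [QuotientGroup.mk_mul_of_mem _ x.2, QuotientGroup.mk_mul_of_mem _ x'.2,
          QuotientGroup.out_eq', QuotientGroup.out_eq'] at h1
      subst hQ
      rw [mul_left_cancel_iff] at hx'
      exact Prod.ext rfl (Subtype.ext hx')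
    · intro g
      refine ⟨(QuotientGroup.mk g, ⟨(QuotientGroup.mk (s := H) g).out⁻¹ * g, ?_⟩), by simp⟩
      rw [← QuotientGroup.eq, QuotientGroup.out_eq']
  rw [prod_comm, ← hbij.prod_comp, Fintype.prod_prod_type]
  refine prod_congr rfl fun Q _ => ?_
  subst hN
  rw [← Fin.prod_univ_eq_prod_range (fun i => h (Q.out * u ^ i)) (orderOf u),
    ← (finEquivZPowers (isOfFinOrder_of_finite u)).prod_comp]
  refine prod_congr rfl fun i _ => ?_
  rfl

open NumberField in
/-- If `p ^ n ∣ q - 1`, a primitive `p ^ (n - r)`-th root of unity is a norm from `M = ℚ(ζ_{q p ^ (n - r)})` to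
the fixed field of `s`. The element is the product of the Jacobi sums `J(χ ^ g, ψ)` over coset
representatives of `⟨j⟩` in `(ℤ/q)ˣ`, divided by a power of `g(ψ) ^ m`; its norm is the root of unity `ν` of
`nu_exists`, whose order is determined, up to powers of `q`, by its residue `ψ(q)` above `q`. A `q`-power
kills the `q`-part of `ν`. -/
lemma exists_norm_element {p q n r : ℕ} (hp : p.Prime) (hq : q.Prime) (hpodd : Odd p)
    (hqodd : Odd q) (hrn : r ≤ n) (hdvd : p ^ n ∣ q - 1) (j : ℕ)
    (hj : orderOf (j : ZMod q) = p ^ r) {M : Type*} [Field M] [NumberField M]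
    [NeZero (q * p ^ (n - r))] [IsCyclotomicExtension {q * p ^ (n - r)} ℚ M] {ζq ζm : M}
    (hζq : IsPrimitiveRoot ζq q) (hζm : IsPrimitiveRoot ζm (p ^ (n - r))) (s : M →+* M)
    (hsq : s ζq = ζq ^ j) (hsm : s ζm = ζm) :
    ∃ x : M, IsPrimitiveRoot (∏ i ∈ range (p ^ r), (s^[i]) x) (p ^ (n - r)) := by
  classical
  have hqF : Fact q.Prime := ⟨hq⟩
  rcases Nat.eq_zero_or_pos (n - r) with h0 | h0
  · refine ⟨1, ?_⟩
    simp [h0, iterate_map_one]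
  obtain ⟨t, ht⟩ := Nat.exists_eq_add_of_le' h0
  set m := p ^ (n - r) with hmdef
  have hm1 : 1 < m := by rw [hmdef]; exact Nat.one_lt_pow (by lia) hp.one_lt
  have hm0 : NeZero m := ⟨by lia⟩
  obtain ⟨w', hw'⟩ := hdvd
  have hqw : q = 1 + m * (p ^ r * w') := by
    rw [hmdef, ← mul_assoc, ← pow_add, Nat.sub_add_cancel hrn, ← hw']
    have := hq.pos
    lia
  have hqm : q.Coprime m := by rw [hqw]; simp
  obtain ⟨ℓ, hl, hlK, hlnd, hres⟩ := exists_prime_nonresidue (K := q * m) hp hpodd hq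
    ((dvd_pow_self p (by lia)).mul_left q) (NeZero.ne _)
  have hlF : Fact ℓ.Prime := ⟨hl⟩
  obtain ⟨e, he⟩ : q * m ∣ ℓ - 1 := by
    rw [← Nat.cast_one, ZMod.natCast_eq_natCast_iff] at hlK
    exact (Nat.modEq_iff_dvd' hl.one_lt.le).1 hlK.symm
  have hlq : ℓ ≠ q := fun h => hlnd (by rw [h]; exact dvd_mul_right _ _)
  obtain ⟨χ, hχ⟩ := MulChar.exists_mulChar_orderOf (ZMod ℓ) (n := q) (R := 𝓞 M)
    (by rw [ZMod.card, he]; exact ⟨m * e, by ring⟩) hζq.toInteger_isPrimitiveRoot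
  obtain ⟨ψ, hψ⟩ := MulChar.exists_mulChar_orderOf (ZMod ℓ) (n := m) (R := 𝓞 M)
    (by rw [ZMod.card, he]; exact ⟨q * e, by ring⟩) hζm.toInteger_isPrimitiveRoot
  obtain ⟨ν, hν, N, hN, hνN⟩ := nu_exists hq hm1 hqw he.symm hχ hψ
  -- the automorphism `s` sends `J(χ ^ k, ψ)` to `J(χ ^ (k j), ψ)`
  let ι := algebraMap (𝓞 M) M
  have hι : Function.Injective ι := IsFractionRing.injective (𝓞 M) M
  let χM := χ.ringHomComp ι
  let ψM := ψ.ringHomComp ι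
  have hχq : χM ^ q = 1 := by
    rw [MulChar.ringHomComp_pow, ← hχ, pow_orderOf_eq_one, MulChar.ringHomComp_one]
  have hψm : ψM ^ m = 1 := by
    rw [MulChar.ringHomComp_pow, ← hψ, pow_orderOf_eq_one, MulChar.ringHomComp_one]
  have hsχ : χM.ringHomComp s = χM ^ j := by
    ext x
    obtain ⟨i, -, hi⟩ := hζq.eq_pow_of_pow_eq_one (ξ := χM x) (by
      rw [← MulChar.pow_apply_coe, hχq, MulChar.one_apply_coe])
    rw [MulChar.ringHomComp_apply, MulChar.pow_apply_coe, ← hi, map_pow, hsq, pow_right_comm]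
  have hsψ : ψM.ringHomComp s = ψM := by
    ext x
    obtain ⟨i, -, hi⟩ := hζm.eq_pow_of_pow_eq_one (ξ := ψM x) (by
      rw [← MulChar.pow_apply_coe, hψm, MulChar.one_apply_coe])
    rw [MulChar.ringHomComp_apply, ← hi, map_pow, hsm]
  have hsJ : ∀ k, s (jacobiSum (χM ^ k) ψM) = jacobiSum (χM ^ (k * j)) ψM := by
    intro k
    rw [← jacobiSum_ringHomComp, ← MulChar.ringHomComp_pow, hsχ, hsψ, ← pow_mul, mul_comm]
  have hju : IsUnit (j : ZMod q) := by
    rw [isUnit_iff_ne_zero]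
    intro h
    rw [h, orderOf_zero] at hj
    have := hp.pos
    have : 0 < p ^ r := by positivity
    lia
  obtain ⟨u, hu⟩ := hju
  have huo : orderOf u = p ^ r := by rw [← orderOf_units, hu, hj]
  have hmodq : ∀ a b : ℕ, (a : ZMod q) = b → χM ^ a = χM ^ b := by
    intro a b hab
    rw [ZMod.natCast_eq_natCast_iff] at hab
    rw [pow_eq_pow_iff_modEq]
    exact hab.of_dvd (orderOf_dvd_of_pow_eq_one hχq)
  obtain ⟨y, hy⟩ := prod_transversal s u
    (fun g : (ZMod q)ˣ => jacobiSum (χM ^ (g : ZMod q).val) ψM) (fun g => by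
      rw [hsJ, hmodq _ (((g * u : (ZMod q)ˣ) : ZMod q).val)]
      rw [Nat.cast_mul, ZMod.natCast_zmod_val, ZMod.natCast_zmod_val, ← hu, Units.val_mul]) huo
  have hprod : ∏ g : (ZMod q)ˣ, jacobiSum (χM ^ (g : ZMod q).val) ψM =
      ∏ k ∈ Ico 1 q, jacobiSum (χM ^ k) ψM := by
    refine prod_bij (fun g _ => (g : ZMod q).val) ?_ ?_ ?_ ?_
    · intro g _
      rw [mem_Ico]
      refine ⟨Nat.pos_of_ne_zero ?_, ZMod.val_lt _⟩
      rw [Ne, ZMod.val_eq_zero]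
      exact g.ne_zero
    · intro a _ b _ hab
      exact Units.ext (ZMod.val_injective q hab)
    · intro k hk
      rw [mem_Ico] at hk
      have hk0 : (k : ZMod q) ≠ 0 := by
        rw [Ne, CharP.cast_eq_zero_iff (ZMod q) q]
        intro h
        exact absurd (Nat.le_of_dvd (by lia) h) (by lia)
      exact ⟨Units.mk0 _ hk0, mem_univ _, by rw [Units.val_mk0, ZMod.val_cast_of_lt hk.2]⟩
    · intros; rfl
  set c := gaussPow m ψM with hc
  have hsc : s c = c := by rw [hc, ← map_gaussPow, hsψ]
  have hιc : c = ι (gaussPow m ψ) := map_gaussPow ι m ψ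
  have hc0 : c ≠ 0 := by
    rw [hιc, Ne, map_eq_zero_iff _ hι]; exact gaussPow_ne_zero hm1 hψ
  have hιν : ∏ k ∈ Ico 1 q, jacobiSum (χM ^ k) ψM = ι ν * c ^ (p ^ r * w') := by
    rw [hιc, ← map_pow, ← map_mul, ← hν, map_prod]
    refine prod_congr rfl fun k _ => ?_
    rw [← jacobiSum_ringHomComp, ← MulChar.ringHomComp_pow]
  have hfix : ∀ i z, s z = z → (s^[i]) z = z := fun i z hz => Function.iterate_fixed hz i
  have hx0 : ∏ i ∈ range (p ^ r), (s^[i]) (y * (c ^ w')⁻¹) = ι ν := by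
    have : ∀ i, (s^[i]) (y * (c ^ w')⁻¹) = (s^[i]) y * (c ^ w')⁻¹ := by
      intro i
      rw [iterate_map_mul, hfix i (c ^ w')⁻¹ (by rw [map_inv₀, map_pow, hsc])]
    simp_rw [this]
    rw [prod_mul_distrib, hy, hprod, hιν, prod_const, card_range, inv_pow, ← pow_mul,
      mul_comm w', mul_assoc, mul_inv_cancel₀ (pow_ne_zero _ hc0), mul_one]
  -- only the `q`-part of the order of `ν` is lost in the residue field at a prime above `q`
  have hord0 : orderOf ν ≠ 0 := by
    rw [orderOf_ne_zero_iff, isOfFinOrder_iff_pow_eq_one]; exact ⟨N, hN, hνN⟩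
  obtain ⟨a, N', hN', hNa⟩ := Nat.exists_eq_pow_mul_and_not_dvd hord0 q hq.ne_one
  have hmax : (Ideal.span {(q : ℤ)}).IsMaximal :=
    PrincipalIdealRing.isMaximal_of_irreducible (Nat.prime_iff_prime_int.1 hq).irreducible
  obtain ⟨⟨Q, hQp, hQo⟩⟩ := (Ideal.span {(q : ℤ)}).nonempty_primesOver (S := 𝓞 M)
  have hqQ : (q : 𝓞 M) ∈ Q := by
    have : (q : ℤ) ∈ Q.under ℤ := by rw [← hQo.over]; exact Ideal.mem_span_singleton_self _
    rw [Ideal.mem_comap] at this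
    simpa using this
  have hQ0 : Q ≠ ⊥ := by
    rintro rfl
    exact hq.ne_zero (by simpa using hqQ)
  have hQm : Q.IsMaximal := hQp.isMaximal hQ0
  let _ := Ideal.Quotient.field Q
  have hchar : CharP (𝓞 M ⧸ Q) q := by
    rw [CharP.charP_iff_prime_eq_zero hq]
    have := Ideal.Quotient.eq_zero_iff_mem.2 hqQ
    rwa [map_natCast] at this
  obtain ⟨h1, h2⟩ := nu_mod (Ideal.Quotient.mk Q) hq hqodd hm1 hqw hlq
    (by rw [← hχ, pow_orderOf_eq_one]) hψ hν
  have h3 : orderOf (Ideal.Quotient.mk Q ν) = m := by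
    rw [h1, ← MulChar.ringHomComp_apply]
    have hmt : m = p ^ (t + 1) := by rw [hmdef, ht]
    rw [hmt] at h2 ⊢
    refine psi_q_order hp _ h2 (e := q * e) (by rw [he, hmt]; ring) ?_ hres
    rw [Ne, CharP.cast_eq_zero_iff (ZMod ℓ) ℓ, Nat.prime_dvd_prime_iff_eq hl hq]
    exact hlq
  have h4 : orderOf (Ideal.Quotient.mk Q (ν ^ q ^ a)) = m := by
    rw [map_pow, Nat.Coprime.orderOf_pow, h3]
    rw [h3]; exact (hqm.pow_left a).symm
  have h5 : (ν ^ q ^ a) ^ m = 1 := by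
    refine root_unity_eq_one_of_sub_mem (Q := Q) (K := N') ?_ ?_ ?_
    · rw [← Ideal.Quotient.eq_zero_iff_mem, map_natCast, CharP.cast_eq_zero_iff (𝓞 M ⧸ Q) q]
      exact hN'
    · rw [← pow_mul, ← pow_mul, show q ^ a * (m * N') = orderOf ν * m by rw [hNa]; ring,
        pow_mul, pow_orderOf_eq_one, one_pow]
    · rw [← Ideal.Quotient.eq_zero_iff_mem, map_sub, map_pow, ← h4, pow_orderOf_eq_one, map_one,
        sub_self]
  have h6 : IsPrimitiveRoot (ν ^ q ^ a) m := by
    rw [IsPrimitiveRoot.iff_orderOf]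
    exact Nat.dvd_antisymm (orderOf_dvd_of_pow_eq_one h5)
      (h4 ▸ orderOf_map_dvd (Ideal.Quotient.mk Q).toMonoidHom (ν ^ q ^ a))
  refine ⟨(y * (c ^ w')⁻¹) ^ q ^ a, ?_⟩
  simp_rw [iterate_map_pow]
  rw [prod_pow, hx0, ← map_pow]
  exact h6.map_of_injective hι

/-! ### The obstruction when `p ^ n` does not divide `q - 1` -/

/-- Lifting the exponent: some `f` has `v_p (q ^ f - 1) = max (n - r) (v_p (q - 1))`, which lies in `[n - r, n)`. -/
lemma exists_lte_exponent {p q n r : ℕ} (hp : p.Prime) (hq : q.Prime) (hpodd : Odd p)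
    (hpq : p ≠ q) (hr0 : 0 < r) (hrdvd : p ^ r ∣ q - 1) (hn : ¬ p ^ n ∣ q - 1) :
    ∃ f : ℕ, p ^ (n - r) ∣ q ^ f - 1 ∧ ¬ p ^ n ∣ q ^ f - 1 := by
  have hpF : Fact p.Prime := ⟨hp⟩
  have hq1 : q - 1 ≠ 0 := by have := hq.two_le; lia
  rw [padicValNat_dvd_iff_le hq1] at hrdvd hn
  refine ⟨p ^ (n - r - padicValNat p (q - 1)), ?_⟩
  set e := n - r - padicValNat p (q - 1) with he
  have hpe : p ^ e ≠ 0 := pow_ne_zero _ hp.ne_zero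
  have h0 : q ^ p ^ e - 1 ≠ 0 := by
    have := Nat.one_lt_pow hpe hq.one_lt; lia
  have hv : padicValNat p (q ^ p ^ e - 1) = padicValNat p (q - 1) + e := by
    have := padicValNat.pow_sub_pow (p := p) hpodd hq.one_lt
      (by rw [← pow_one p, padicValNat_dvd_iff_le hq1]; lia)
      (fun h => hpq ((Nat.prime_dvd_prime_iff_eq hp hq).1 h)) hpe
    rw [one_pow, padicValNat.prime_pow] at this
    exact this
  rw [padicValNat_dvd_iff_le h0, padicValNat_dvd_iff_le h0, hv]
  lia

open NumberField in
/-- If `p ^ n ∤ q - 1` and `ζm ^ k` is a norm, then `p ∣ k`. At a prime `Q` above `q` the automorphism `s` acts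
trivially on the residue field, so `ζm ^ k` is the `p ^ r`-th power of a residue `u`. All residues
lie in the field of `q ^ f` elements as soon as `p ^ (n - r) ∣ q ^ f - 1`; if `p ∤ k`, then `u` has order
`p ^ n`, which for a suitable `f` does not divide `q ^ f - 1`. -/
lemma norm_exponent {p q n r : ℕ} (hp : p.Prime) (hq : q.Prime) (hpodd : Odd p)
    (hpq : p ≠ q) (hr0 : 0 < r) (hrn : r ≤ n) (hrdvd : p ^ r ∣ q - 1) (hn : ¬ p ^ n ∣ q - 1)
    (j : ℕ) {M : Type*} [Field M] [NumberField M]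
    [NeZero (q * p ^ (n - r))] [IsCyclotomicExtension {q * p ^ (n - r)} ℚ M] {ζq ζm : M}
    (hζq : IsPrimitiveRoot ζq q) (hζm : IsPrimitiveRoot ζm (p ^ (n - r))) (s : M →+* M)
    (hsq : s ζq = ζq ^ j) (hsm : s ζm = ζm) (y : M) (k : ℕ)
    (hy : ∏ i ∈ range (p ^ r), (s^[i]) y = ζm ^ k) : p ∣ k := by
  classical
  have hrn' : r < n := by
    refine lt_of_le_of_ne hrn ?_
    rintro rfl; exact hn hrdvd
  set m := p ^ (n - r) with hm
  have hm0 : NeZero m := ⟨pow_ne_zero _ hp.ne_zero⟩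
  have hq0 : NeZero q := ⟨hq.ne_zero⟩
  have hqm : q.Coprime m := ((Nat.coprime_primes hq hp).2 hpq.symm).pow_right _
  have hqF : Fact q.Prime := ⟨hq⟩
  have hpF : Fact p.Prime := ⟨hp⟩
  have hζ : IsPrimitiveRoot (ζq * ζm) (q * m) := by
    rw [IsPrimitiveRoot.iff_orderOf, (Commute.all ζq ζm).orderOf_mul_eq_mul_orderOf_of_coprime]
    · rw [← hζq.eq_orderOf, ← hζm.eq_orderOf]
    · rwa [← hζq.eq_orderOf, ← hζm.eq_orderOf]
  have htop := IsCyclotomicExtension.Rat.adjoin_singleton_eq_top hζ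
  -- ring homomorphisms on `𝓞 M` are determined by the roots of unity
  have hext : ∀ {B : Type _} [CommRing B] (f g : 𝓞 M →+* B),
      f hζq.toInteger = g hζq.toInteger → f hζm.toInteger = g hζm.toInteger → f = g := by
    intro B _ f g h1 h2
    have h3 : hζ.toInteger = hζq.toInteger * hζm.toInteger := by
      apply RingOfIntegers.ext; simp; rfl
    have : f.toIntAlgHom = g.toIntAlgHom := by
      refine AlgHom.ext_of_adjoin_eq_top htop ?_
      intro x hx
      rw [Set.mem_singleton_iff] at hx
      subst hx
      simp [h3, h1, h2]
    ext x
    exact DFunLike.congr_fun this x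
  have hmax : (Ideal.span {(q : ℤ)}).IsMaximal :=
    PrincipalIdealRing.isMaximal_of_irreducible (Nat.prime_iff_prime_int.1 hq).irreducible
  obtain ⟨⟨Q, hQp, hQo⟩⟩ := (Ideal.span {(q : ℤ)}).nonempty_primesOver (S := 𝓞 M)
  have hqQ : (q : 𝓞 M) ∈ Q := by
    have : (q : ℤ) ∈ Q.under ℤ := by rw [← hQo.over]; exact Ideal.mem_span_singleton_self _
    rw [Ideal.mem_comap] at this
    simpa using this
  have hQ0 : Q ≠ ⊥ := by
    rintro rfl
    exact hq.ne_zero (by simpa using hqQ)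
  have hQm : Q.IsMaximal := hQp.isMaximal hQ0
  let _ := Ideal.Quotient.field Q
  have hchar : CharP (𝓞 M ⧸ Q) q := by
    rw [CharP.charP_iff_prime_eq_zero hq]
    have := Ideal.Quotient.eq_zero_iff_mem.2 hqQ
    rwa [map_natCast] at this
  set π := Ideal.Quotient.mk Q with hπ
  have hexp : ExpChar (𝓞 M ⧸ Q) q := ExpChar.prime hq
  have hπq : π hζq.toInteger = 1 := by
    have h1 : (π hζq.toInteger) ^ q = 1 := by
      rw [← map_pow, hζq.toInteger_isPrimitiveRoot.pow_eq_one, map_one]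
    apply frobenius_inj (𝓞 M ⧸ Q) q
    rw [frobenius_def, h1, map_one]
  have hπm : IsPrimitiveRoot (π hζm.toInteger) m := by
    rw [IsPrimitiveRoot.iff_def]
    refine ⟨by rw [← map_pow, hζm.toInteger_isPrimitiveRoot.pow_eq_one, map_one], fun l hl => ?_⟩
    rw [← hζm.toInteger_isPrimitiveRoot.pow_eq_one_iff_dvd]
    refine root_unity_eq_one_of_sub_mem (Q := Q) (K := m) ?_ ?_ ?_
    · rw [← Ideal.Quotient.eq_zero_iff_mem, map_natCast, CharP.cast_eq_zero_iff (𝓞 M ⧸ Q) q]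
      exact fun h => hq.one_lt.ne' (Nat.Coprime.eq_one_of_dvd hqm h)
    · rw [← pow_mul, mul_comm, pow_mul, hζm.toInteger_isPrimitiveRoot.pow_eq_one, one_pow]
    · rw [← Ideal.Quotient.eq_zero_iff_mem, map_sub, map_pow, hl, map_one, sub_self]
  set σ := RingOfIntegers.mapRingHom s with hσ
  have hσq : σ hζq.toInteger = hζq.toInteger ^ j := by
    apply RingOfIntegers.ext; simpa [hσ] using! hsq
  have hσm : σ hζm.toInteger = hζm.toInteger := by
    apply RingOfIntegers.ext; simpa [hσ] using! hsm
  have hσ1 : π.comp σ = π := by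
    refine hext _ _ ?_ ?_
    · rw [RingHom.comp_apply, hσq, map_pow, hπq, one_pow]
    · rw [RingHom.comp_apply, hσm]
  have hσi : ∀ i x, π ((σ^[i]) x) = π x := by
    intro i
    induction i with
    | zero => simp
    | succ i ih =>
      intro x
      rw [Function.iterate_succ_apply', ← ih x]
      exact DFunLike.congr_fun hσ1 _
  have hcoe : ∀ i (x : 𝓞 M), (((σ^[i]) x : 𝓞 M) : M) = (s^[i]) (x : M) := by
    intro i x
    induction i with
    | zero => simp
    | succ i ih =>
      rw [Function.iterate_succ_apply', Function.iterate_succ_apply', ← ih]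
      rfl
  -- a unit of the residue field whose `p ^ r`-th power is `ζm ^ k`
  have hu : ∃ u : 𝓞 M ⧸ Q, u ≠ 0 ∧ u ^ p ^ r = (π hζm.toInteger) ^ k := by
    -- nothing makes `y` integral at `Q` a priori, so it is written as a fraction `α / β`
    obtain ⟨α, β, hαβ⟩ : ∃ α β : 𝓞 M, y * β = α ∧ (α ∉ Q ∨ β ∉ Q) := by
      obtain ⟨c, e, h | h⟩ :=
        IsDedekindDomain.HeightOneSpectrum.exists_primeCompl_mul_eq_or_mul_eq (K := M)
          (⟨Q, hQp, hQ0⟩ : IsDedekindDomain.HeightOneSpectrum (𝓞 M)) y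
      · exact ⟨c, e, h, Or.inr e.2⟩
      · exact ⟨e, c, h, Or.inl e.2⟩
    have h1 : (∏ i ∈ range (p ^ r), (σ^[i]) β) * hζm.toInteger ^ k
        = ∏ i ∈ range (p ^ r), (σ^[i]) α := by
      apply IsFractionRing.injective (𝓞 M) M
      rw [map_mul, map_prod, map_prod, map_pow]
      simp_rw [hcoe, ← hαβ.1, iterate_map_mul, prod_mul_distrib, hy]
      rw [mul_comm]
      rfl
    have h2 : (π β) ^ p ^ r * (π hζm.toInteger) ^ k = (π α) ^ p ^ r := by
      have := congrArg π h1
      simpa only [map_mul, map_prod, map_pow, hσi, prod_const, card_range] using this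
    have hP : p ^ r ≠ 0 := pow_ne_zero _ hp.ne_zero
    have hz : (π hζm.toInteger) ^ k ≠ 0 := pow_ne_zero _ (hπm.ne_zero hm0.ne)
    have hβ : π β ≠ 0 := by
      rcases hαβ.2 with h | h
      · intro h0
        rw [h0, zero_pow hP, zero_mul] at h2
        exact h (Ideal.Quotient.eq_zero_iff_mem.1 (pow_eq_zero_iff hP |>.1 h2.symm))
      · exact fun h0 => h (Ideal.Quotient.eq_zero_iff_mem.1 h0)
    refine ⟨π α / π β, ?_, ?_⟩
    · refine div_ne_zero (fun h0 => ?_) hβ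
      rw [h0, zero_pow hP] at h2
      exact mul_ne_zero (pow_ne_zero _ hβ) hz h2
    · rw [div_pow, ← h2, mul_div_cancel_left₀ _ (pow_ne_zero _ hβ)]
  obtain ⟨u, hu0, hu⟩ := hu
  obtain ⟨f, hf1, hf2⟩ := exists_lte_exponent hp hq hpodd hpq hr0 hrdvd hn
  -- the residue field is generated by the residue of `ζm`, which the `f`-th power of Frobenius fixes
  have hfr : (iterateFrobenius (𝓞 M ⧸ Q) q f).comp π = π := by
    refine hext _ _ ?_ ?_
    · rw [RingHom.comp_apply, hπq, map_one]
    · rw [RingHom.comp_apply, iterateFrobenius_def]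
      have h1 : q ^ f = (q ^ f - 1) + 1 := by have := pow_pos hq.pos f; lia
      obtain ⟨c, hc⟩ := hf1
      rw [h1, hc, pow_succ, pow_mul, hπm.pow_eq_one, one_pow, one_mul]
  have hu1 : u ^ (q ^ f - 1) = 1 := by
    obtain ⟨x, rfl⟩ := Ideal.Quotient.mk_surjective u
    have h2 := DFunLike.congr_fun hfr x
    rw [RingHom.comp_apply, iterateFrobenius_def] at h2
    have h1 : q ^ f = (q ^ f - 1) + 1 := by have := pow_pos hq.pos f; lia
    rw [h1, pow_succ] at h2
    exact mul_right_cancel₀ hu0 (by rw [h2, one_mul])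
  by_contra hk
  apply hf2
  have hord : orderOf u = p ^ n := by
    have hcop : k.Coprime m := ((Nat.Prime.coprime_iff_not_dvd hp).2 hk).symm.pow_right _
    have h3 := (hπm.pow_of_coprime k hcop)
    have h4 : n = (n - 1) + 1 := by lia
    rw [h4]
    refine orderOf_eq_prime_pow ?_ ?_
    · rw [show n - 1 = r + (n - 1 - r) by lia, pow_add, pow_mul, hu]
      rw [h3.pow_eq_one_iff_dvd, hm, Nat.pow_dvd_pow_iff_le_right hp.one_lt]
      lia
    · rw [← h4, show n = r + (n - r) by lia, pow_add, pow_mul, hu, ← hm]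
      exact h3.pow_eq_one
  rw [← hord]
  exact orderOf_dvd_of_pow_eq_one hu1

/-! ### The group -/

section
variable {p q n r : ℕ} {G : Type} [Group G] {a b : G} {j : ℕ}

lemma pow_mul_pow_of_mul_eq {N : Type*} [Monoid N] {A B : N} (h : B * A = A ^ j * B) (i k : ℕ) :
    B ^ k * A ^ i = A ^ (i * j ^ k) * B ^ k := by
  have h1 : ∀ i, B * A ^ i = A ^ (j * i) * B := by
    intro i
    induction i with
    | zero => simp
    | succ i ih => rw [pow_succ, ← mul_assoc, ih, mul_assoc, h, ← mul_assoc, ← pow_add, mul_add_one]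
  induction k generalizing i with
  | zero => simp
  | succ k ih =>
    rw [pow_succ B, mul_assoc, h1, ← mul_assoc, ih, mul_assoc, pow_succ j]
    ring_nf

lemma conj_pow_gen (hba : b * a * b⁻¹ = a ^ j) (i k : ℕ) :
    b ^ k * a ^ i = a ^ (i * j ^ k) * b ^ k :=
  pow_mul_pow_of_mul_eq (by rw [← hba, inv_mul_cancel_right]) i k

lemma normal_form_inj (hp : p.Prime) (hq : q.Prime) (hpq : p ≠ q)
    (ha : orderOf a = q) (hb : orderOf b = p ^ n) {i i' k k' : ℕ}
    (h : a ^ i * b ^ k = a ^ i' * b ^ k') : i ≡ i' [MOD q] ∧ k ≡ k' [MOD p ^ n] := by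
  have hcop : (orderOf a).Coprime (orderOf b) := by
    rw [ha, hb]; exact ((Nat.coprime_primes hq hp).2 hpq.symm).pow_right _
  have hd : Disjoint (Subgroup.zpowers a) (Subgroup.zpowers b) := by
    rw [← Nat.card_zpowers, ← Nat.card_zpowers] at hcop
    exact Subgroup.disjoint_of_coprime_natCard hcop
  have h1 : (a ^ i')⁻¹ * a ^ i = b ^ k' * (b ^ k)⁻¹ := by
    rw [inv_mul_eq_iff_eq_mul, ← mul_assoc, ← h, mul_inv_cancel_right]
  have h2 : (a ^ i')⁻¹ * a ^ i = 1 := by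
    refine Subgroup.disjoint_def.1 hd ?_ ?_
    · exact mul_mem (inv_mem (Subgroup.npow_mem_zpowers _ _)) (Subgroup.npow_mem_zpowers _ _)
    · rw [h1]
      exact mul_mem (Subgroup.npow_mem_zpowers _ _) (inv_mem (Subgroup.npow_mem_zpowers _ _))
  constructor
  · rw [← ha, ← pow_eq_pow_iff_modEq]
    exact (inv_mul_eq_one.1 h2).symm
  · rw [← hb, ← pow_eq_pow_iff_modEq]
    rw [h2] at h1
    exact (mul_inv_eq_one.1 h1.symm).symm

variable [Fintype G]

lemma exists_normal_form (hba : b * a * b⁻¹ = a ^ j) (hgen : Subgroup.closure {a, b} = ⊤) (g : G) :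
    ∃ i k : ℕ, g = a ^ i * b ^ k := by
  have hg : g ∈ Submonoid.closure {a, b} := by
    rw [← Subgroup.closure_toSubmonoid_of_finite, hgen]; trivial
  induction hg using Submonoid.closure_induction with
  | mem x hx =>
    rcases hx with rfl | rfl
    · exact ⟨1, 0, by simp⟩
    · exact ⟨0, 1, by simp⟩
  | one => exact ⟨0, 0, by simp⟩
  | mul x y _ _ hx hy =>
    obtain ⟨i, k, rfl⟩ := hx
    obtain ⟨i', k', rfl⟩ := hy
    refine ⟨i + i' * j ^ k, k + k', ?_⟩
    rw [mul_assoc, ← mul_assoc (b ^ k), conj_pow_gen hba, pow_add, pow_add]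
    simp only [mul_assoc]

lemma sum_normal_form (hp : p.Prime) (hq : q.Prime) (hpq : p ≠ q)
    (ha : orderOf a = q) (hb : orderOf b = p ^ n) (hba : b * a * b⁻¹ = a ^ j)
    (hgen : Subgroup.closure {a, b} = ⊤) {A : Type*} [AddCommMonoid A] (f : G → A) :
    ∑ g, f g = ∑ i ∈ range q, ∑ k ∈ range (p ^ n), f (a ^ i * b ^ k) := by
  rw [← sum_product']
  symm
  refine sum_bij (fun x _ => a ^ x.1 * b ^ x.2) (fun _ _ => mem_univ _) ?_ ?_ (fun _ _ => rfl)
  · rintro ⟨i, k⟩ hik ⟨i', k'⟩ hik' h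
    simp only [mem_product, mem_range] at hik hik'
    obtain ⟨h1, h2⟩ := normal_form_inj hp hq hpq ha hb h
    exact Prod.ext (h1.eq_of_lt_of_lt hik.1 hik'.1) (h2.eq_of_lt_of_lt hik.2 hik'.2)
  · intro g _
    obtain ⟨i, k, rfl⟩ := exists_normal_form hba hgen g
    refine ⟨(i % q, k % p ^ n), ?_, ?_⟩
    · simp only [mem_product, mem_range]
      exact ⟨Nat.mod_lt _ hq.pos, Nat.mod_lt _ (pow_pos hp.pos _)⟩
    · simp only [← ha, ← hb, pow_mod_orderOf]

lemma card_eq (hp : p.Prime) (hq : q.Prime) (hpq : p ≠ q)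
    (ha : orderOf a = q) (hb : orderOf b = p ^ n) (hba : b * a * b⁻¹ = a ^ j)
    (hgen : Subgroup.closure {a, b} = ⊤) : Fintype.card G = q * p ^ n := by
  have := sum_normal_form hp hq hpq ha hb hba hgen (fun _ => 1)
  simpa using this

lemma central_pow (hba : b * a * b⁻¹ = a ^ j) (ha : orderOf a = q)
    (hj : orderOf (j : ZMod q) = p ^ r) (hgen : Subgroup.closure {a, b} = ⊤) (g : G) :
    Commute (b ^ p ^ r) g := by
  have hja : Commute (b ^ p ^ r) a := by
    have h1 := conj_pow_gen hba 1 (p ^ r)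
    rw [pow_one, one_mul] at h1
    have h2 : a ^ j ^ p ^ r = a ^ 1 := by
      rw [pow_eq_pow_iff_modEq, ha, ← ZMod.natCast_eq_natCast_iff]
      push_cast
      rw [← hj, pow_orderOf_eq_one]
    rw [h2, pow_one] at h1
    exact h1
  obtain ⟨i, k, rfl⟩ := exists_normal_form hba hgen g
  exact (hja.pow_right i).mul_right ((Commute.refl b).pow_pow _ _)

/-- `G` is presented by `a ^ q = b ^ (p ^ n) = 1` and `b a = a ^ j b`, also for maps to monoids. -/
lemma exists_hom_of_relations (hp : p.Prime) (hq : q.Prime) (hpq : p ≠ q)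
    (ha : orderOf a = q) (hb : orderOf b = p ^ n) (hba : b * a * b⁻¹ = a ^ j)
    (hgen : Subgroup.closure {a, b} = ⊤) {N : Type*} [Monoid N] {A B : N}
    (hA : A ^ q = 1) (hB : B ^ p ^ n = 1) (hBA : B * A = A ^ j * B) :
    ∃ f : G →* N, f a = A ∧ f b = B := by
  choose i k hik using exists_normal_form (a := a) (b := b) hba hgen
  have hmod : ∀ {X : N} {L u v : ℕ}, X ^ L = 1 → u ≡ v [MOD L] → X ^ u = X ^ v := by
    intro X L u v hX huv
    rw [← Nat.mod_add_div u L, ← Nat.mod_add_div v L, pow_add, pow_add, pow_mul, pow_mul, hX,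
      one_pow, one_pow, huv]
  have hval : ∀ u v g, g = a ^ u * b ^ v → A ^ i g * B ^ k g = A ^ u * B ^ v := by
    intro u v g hg
    obtain ⟨h1, h2⟩ := normal_form_inj hp hq hpq ha hb ((hik g).symm.trans hg)
    rw [hmod hA h1, hmod hB h2]
  refine ⟨⟨⟨fun g => A ^ i g * B ^ k g, ?_⟩, ?_⟩, ?_, ?_⟩
  · rw [hval 0 0 1 (by simp)]; simp
  · intro g h
    simp only
    rw [hval (i g + i h * j ^ k g) (k g + k h) (g * h) ?_]
    · rw [mul_assoc (A ^ i g), ← mul_assoc (B ^ k g), pow_mul_pow_of_mul_eq hBA, pow_add, pow_add]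
      simp only [mul_assoc]
    · conv_lhs => rw [hik g, hik h]
      rw [mul_assoc (a ^ i g), ← mul_assoc (b ^ k g), conj_pow_gen hba, pow_add, pow_add]
      simp only [mul_assoc]
  · have := hval 1 0 a (by simp)
    simpa using this
  · have := hval 0 1 b (by simp)
    simpa using this
end

/-! ### The faithful irreducible representation -/

/-- A nonzero invariant subspace of a simple object of `FDRep ℂ G` is everything. -/
lemma simple_submodule {G : Type} [Group G] (τ : FDRep ℂ G) [Simple τ] (U : Submodule ℂ τ)
    (hU : ∀ g, ∀ v ∈ U, τ.ρ g v ∈ U) (h0 : U ≠ ⊥) : U = ⊤ := by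
  let ρU : Representation ℂ G U :=
    { toFun := fun g => (τ.ρ g).restrict (hU g)
      map_one' := by ext v; simp
      map_mul' := fun g h => by ext v; simp }
  let f : FDRep.of ρU ⟶ τ :=
    ⟨FGModuleCat.ofHom U.subtype, fun g => by ext v; rfl⟩
  have hf : Function.Injective f := U.injective_subtype
  have : Mono f := ConcreteCategory.mono_of_injective f hf
  have hne : f ≠ 0 := by
    intro h
    obtain ⟨v, hv, hv0⟩ := U.exists_mem_ne_zero_of_ne_bot h0
    have h1 : f ⟨v, hv⟩ = (0 : FDRep.of ρU ⟶ τ) ⟨v, hv⟩ := by rw [h]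
    exact hv0 h1
  have hiso : IsIso f := (Simple.mono_isIso_iff_nonzero f).2 hne
  rw [eq_top_iff]
  intro v _
  let e := FDRep.isoToLinearEquiv (asIso f)
  obtain ⟨u, hu⟩ := e.surjective v
  have h2 : (e u : τ) ∈ U := (show U from u).2
  rwa [hu] at h2

/-- The character of a faithful irreducible `τ`. The central element `b ^ (p ^ r)` acts by a scalar `ω`, of
order `p ^ (n - r)` by faithfulness. The translates by powers of `b` of an eigenvector of `a` are
eigenvectors with `p ^ r` distinct eigenvalues `η l`, so they form a basis, which `b` permutes up to
scalars. Hence only the elements of `⟨a, b ^ (p ^ r)⟩` have nonzero character. -/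
lemma tau_character {p q n r : ℕ} (hp : p.Prime) (hq : q.Prime) (hrn : r ≤ n)
    {G : Type} [Group G] [Fintype G] {a b : G} {j : ℕ}
    (ha : orderOf a = q) (hb : orderOf b = p ^ n) (hba : b * a * b⁻¹ = a ^ j)
    (hj : orderOf (j : ZMod q) = p ^ r) (hgen : Subgroup.closure {a, b} = ⊤)
    (τ : FDRep ℂ G) [Simple τ] (hτ : Function.Injective τ.ρ) :
    ∃ (η : ℕ → ℂ) (ω : ℂ), (∀ l, IsPrimitiveRoot (η l) q) ∧ IsPrimitiveRoot ω (p ^ (n - r)) ∧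
      ∀ i k, τ.character (a ^ i * b ^ k) =
        if p ^ r ∣ k then ω ^ (k / p ^ r) * ∑ l ∈ range (p ^ r), η l ^ i else 0 := by
  classical
  have hqF : Fact q.Prime := ⟨hq⟩
  have hbn : b ^ p ^ n = 1 := by rw [← hb, pow_orderOf_eq_one]
  have haq : a ^ q = 1 := by rw [← ha, pow_orderOf_eq_one]
  have hprpos : 0 < p ^ r := pow_pos hp.pos _
  have hj0 : (j : ZMod q) ≠ 0 := by
    intro h0
    have := pow_orderOf_eq_one (j : ZMod q)
    rw [hj, h0, zero_pow hprpos.ne'] at this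
    exact zero_ne_one this
  have hmul : ∀ g h : G, ∀ v : τ, τ.ρ g (τ.ρ h v) = τ.ρ (g * h) v := fun g h v => by
    rw [map_mul]; rfl
  have hpowρ : ∀ (g : G) (c : ℂ) (v : τ), τ.ρ g v = c • v → ∀ i : ℕ, τ.ρ (g ^ i) v = c ^ i • v := by
    intro g c v h i
    induction i with
    | zero => simp
    | succ i ih => rw [pow_succ, ← hmul, h, map_smul, ih, smul_smul, pow_succ']
  have hnt : Nontrivial τ := by
    by_contra hnt
    rw [not_nontrivial_iff_subsingleton] at hnt
    have h1 : a = 1 := hτ (by ext v; exact Subsingleton.elim _ _)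
    rw [h1, orderOf_one] at ha
    exact hq.one_lt.ne ha
  -- the central element acts by a scalar
  obtain ⟨ω, hω⟩ : ∃ ω : ℂ, ∀ v : τ, τ.ρ (b ^ p ^ r) v = ω • v := by
    obtain ⟨ω, hω⟩ := Module.End.exists_eigenvalue (τ.ρ (b ^ p ^ r))
    refine ⟨ω, fun v => ?_⟩
    have := simple_submodule τ (Module.End.eigenspace (τ.ρ (b ^ p ^ r)) ω) ?_ hω
    · exact Module.End.mem_eigenspace_iff.1 (this ▸ Submodule.mem_top)
    · intro g v hv
      rw [Module.End.mem_eigenspace_iff] at hv ⊢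
      rw [hmul, (central_pow hba ha hj hgen g).eq, ← hmul, hv, map_smul]
  have hωprim : IsPrimitiveRoot ω (p ^ (n - r)) := by
    obtain ⟨v, hv⟩ := exists_ne (0 : τ)
    have hpow : ∀ l : ℕ, ω ^ l = 1 ↔ b ^ (p ^ r * l) = 1 := by
      intro l
      constructor
      · intro h
        apply hτ
        ext u
        rw [pow_mul, hpowρ _ ω u (hω u), h, one_smul, map_one]; rfl
      · intro h
        have h1 := hpowρ _ ω v (hω v) l
        rw [← pow_mul, h, map_one] at h1
        have h2 : (ω ^ l - 1) • v = 0 := by rw [sub_smul, ← h1, one_smul]; exact sub_self _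
        exact sub_eq_zero.1 ((smul_eq_zero.1 h2).resolve_right hv)
    have hs : p ^ n = p ^ r * p ^ (n - r) := by rw [← pow_add]; congr 1; lia
    refine IsPrimitiveRoot.iff_def _ _ |>.2 ⟨(hpow _).2 (by rw [← hs, hbn]), fun l hl => ?_⟩
    have h1 := orderOf_dvd_of_pow_eq_one ((hpow l).1 hl)
    rw [hb, hs] at h1
    exact Nat.dvd_of_mul_dvd_mul_left hprpos h1
  -- `a` has an eigenvalue of order `q`: the fixed space of `a` is `G`-stable, hence zero
  obtain ⟨θ, hθ⟩ := Module.End.exists_eigenvalue (τ.ρ a)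
  obtain ⟨v, hv⟩ := hθ.exists_hasEigenvector
  have hv0 := hv.2
  have hva : τ.ρ a v = θ • v := hv.apply_eq_smul
  have hθprim : IsPrimitiveRoot θ q := by
    have h1 : θ ^ q = 1 := by
      have h1 := hpowρ _ θ v hva q
      rw [haq, map_one] at h1
      have h2 : (θ ^ q - 1) • v = 0 := by rw [sub_smul, ← h1, one_smul]; exact sub_self _
      exact sub_eq_zero.1 ((smul_eq_zero.1 h2).resolve_right hv0)
    have h2 : θ ≠ 1 := by
      rintro rfl
      have := simple_submodule τ (Module.End.eigenspace (τ.ρ a) 1) ?_ hθ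
      · have h3 : a = 1 := by
          apply hτ
          ext u
          have : u ∈ Module.End.eigenspace (τ.ρ a) 1 := this ▸ Submodule.mem_top
          rw [Module.End.mem_eigenspace_iff, one_smul] at this
          rw [map_one]; exact this
        rw [h3, orderOf_one] at ha
        exact hq.one_lt.ne ha
      · intro g u hu
        rw [Module.End.mem_eigenspace_iff, one_smul] at hu ⊢
        obtain ⟨i, k, rfl⟩ := exists_normal_form hba hgen g
        have h5 : ∀ i : ℕ, τ.ρ (a ^ i) u = u := by
          intro i
          have := hpowρ a 1 u (by rw [hu, one_smul]) i
          rwa [one_pow, one_smul] at this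
        -- `a` is a power of `a ^ (j ^ k)`
        have h6 : ∃ c : ℕ, a * (a ^ i * b ^ k) = a ^ i * b ^ k * a ^ c := by
          refine ⟨((j : ZMod q)⁻¹ ^ k).val, ?_⟩
          rw [mul_assoc (a ^ i), conj_pow_gen hba, ← mul_assoc, ← mul_assoc, ← pow_succ',
            ← pow_add]
          congr 1
          rw [pow_eq_pow_iff_modEq, ha, ← ZMod.natCast_eq_natCast_iff]
          push_cast
          rw [ZMod.natCast_zmod_val, ← mul_pow, inv_mul_cancel₀ hj0, one_pow]
        obtain ⟨c, hc⟩ := h6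
        rw [hmul, hc, ← hmul, h5]
    rw [IsPrimitiveRoot.iff_orderOf]
    exact orderOf_eq_prime h1 h2
  set e : ℕ → τ := fun l => τ.ρ (b⁻¹ ^ l) v with he
  set η : ℕ → ℂ := fun l => θ ^ j ^ l with hη
  have hbinv : ∀ l, a * b⁻¹ ^ l = b⁻¹ ^ l * a ^ j ^ l := by
    intro l
    have := conj_pow_gen hba 1 l
    rw [pow_one, one_mul] at this
    rw [inv_pow, eq_inv_mul_iff_mul_eq, ← mul_assoc, this, mul_assoc, mul_inv_cancel, mul_one]
  have hea : ∀ l, τ.ρ a (e l) = η l • e l := by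
    intro l
    rw [he, hη]
    simp only
    rw [hmul, hbinv, ← hmul, hpowρ a θ v hva, map_smul]
  have hηinj : ∀ l l', η l = η l' → l ≡ l' [MOD p ^ r] := by
    intro l l' h
    have h1 := (hθprim.isOfFinOrder hq.ne_zero).pow_eq_pow_iff_modEq.1 h
    rw [← hθprim.eq_orderOf, ← ZMod.natCast_eq_natCast_iff] at h1
    push_cast at h1
    have hju : IsUnit (j : ZMod q) := isUnit_iff_ne_zero.2 hj0
    obtain ⟨u, hu⟩ := hju
    rw [← hu] at h1 hj
    rw [orderOf_units] at hj
    rw [← hj, ← pow_eq_pow_iff_modEq]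
    exact Units.ext (by push_cast; exact h1)
  have heshift : ∀ l, e l = ω • e (l + p ^ r) := by
    intro l
    rw [he]
    simp only
    rw [← hω, hmul, add_comm, pow_add, inv_pow _ (p ^ r), mul_inv_cancel_left]
  have heshift' : ∀ c l, e l = ω ^ c • e (l + p ^ r * c) := by
    intro c
    induction c with
    | zero => intro l; simp
    | succ c ih =>
      intro l
      rw [ih l, heshift (l + p ^ r * c), smul_smul, pow_succ, mul_add, mul_one, add_assoc]
  have hω0 : ω ≠ 0 := hωprim.ne_zero (pow_ne_zero _ hp.ne_zero)
  have hespan : Submodule.span ℂ (Set.range fun l : Fin (p ^ r) => e l) = ⊤ := by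
    set W := Submodule.span ℂ (Set.range fun l : Fin (p ^ r) => e l) with hW
    have heW : ∀ l, e l ∈ W := by
      intro l
      have h1 := heshift' (l / p ^ r) (l % p ^ r)
      rw [Nat.mod_add_div] at h1
      have h2 : e (l % p ^ r) ∈ W := Submodule.subset_span ⟨⟨l % p ^ r, Nat.mod_lt _ hprpos⟩, rfl⟩
      rw [h1] at h2
      exact (W.smul_mem_iff (pow_ne_zero _ hω0)).1 h2
    refine simple_submodule τ W ?_ ?_
    · intro g
      suffices h : W ≤ W.comap (τ.ρ g) from fun v hv => h hv
      rw [hW, Submodule.span_le, ← hW]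
      rintro _ ⟨l, rfl⟩
      obtain ⟨i, k, rfl⟩ := exists_normal_form hba hgen g
      have hbk : b ^ k = b⁻¹ ^ ((p ^ n - 1) * k) := by
        have h1 : b⁻¹ ^ (p ^ n - 1) * b⁻¹ = 1 := by
          rw [← pow_succ, Nat.sub_add_cancel (Nat.one_le_pow _ _ hp.pos), inv_pow, hbn, inv_one]
        rw [pow_mul, mul_inv_eq_one.1 h1]
      have h2 : τ.ρ (a ^ i * b ^ k) (e l) = η ((p ^ n - 1) * k + l) ^ i • e ((p ^ n - 1) * k + l) := by
        rw [← hpowρ _ _ _ (hea _), ← hmul, hbk, he]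
        simp only
        rw [hmul (b⁻¹ ^ _), ← pow_add]
      rw [SetLike.mem_coe, Submodule.mem_comap, h2]
      exact W.smul_mem _ (heW _)
    · rw [Submodule.ne_bot_iff]
      refine ⟨v, ?_, hv0⟩
      have := heW 0
      rw [he] at this
      simpa using this
  have hηprim : ∀ l, IsPrimitiveRoot (η l) q := by
    intro l
    refine hθprim.pow_of_coprime _ (Nat.Coprime.pow_left _ ?_)
    rw [Nat.coprime_comm, Nat.Prime.coprime_iff_not_dvd hq, ← ZMod.natCast_eq_zero_iff]
    exact hj0
  have heind : LinearIndependent ℂ (fun l : Fin (p ^ r) => e l) := by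
    refine Module.End.eigenvectors_linearIndependent' (τ.ρ a) (fun l : Fin (p ^ r) => η l) ?_ _ ?_
    · intro l l' h
      exact Fin.ext ((hηinj _ _ h).eq_of_lt_of_lt l.2 l'.2)
    · intro l
      refine ⟨Module.End.mem_eigenspace_iff.2 (hea l), ?_⟩
      intro h0
      apply hv0
      have : τ.ρ (b ^ (l : ℕ)) (e l) = v := by
        rw [he]; simp only; rw [hmul, inv_pow, mul_inv_cancel, map_one]; rfl
      rw [← this, h0, map_zero]
  let B := Module.Basis.mk heind hespan.ge
  have hB : ∀ l, B l = e l := fun l => Module.Basis.mk_apply heind hespan.ge l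
  -- the matrix of `a ^ i` is diagonal
  have hcoord : ∀ (l : Fin (p ^ r)) (i : ℕ) (w : τ),
      B.repr (τ.ρ (a ^ i) w) l = η l ^ i * B.repr w l := by
    intro l i w
    have : (B.coord l) ∘ₗ τ.ρ (a ^ i) = η l ^ i • B.coord l := by
      refine B.ext fun l' => ?_
      rw [LinearMap.comp_apply, LinearMap.smul_apply, hB, hpowρ _ _ _ (hea _), map_smul, ← hB,
        B.coord_apply, B.repr_self, Finsupp.single_apply]
      split_ifs with h
      · rw [h]
      · simp
    exact DFunLike.congr_fun this w
  refine ⟨η, ω, hηprim, hωprim, fun i k => ?_⟩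
  have htr : τ.character (a ^ i * b ^ k)
      = ∑ l : Fin (p ^ r), η l ^ i * B.repr (τ.ρ (b ^ k) (e l)) l := by
    rw [FDRep.character, LinearMap.trace_eq_matrix_trace ℂ B, Matrix.trace]
    refine sum_congr rfl fun l _ => ?_
    rw [Matrix.diag_apply, LinearMap.toMatrix_apply, hB, ← hmul, hcoord]
  rw [htr]
  split_ifs with hk
  · obtain ⟨c, rfl⟩ := hk
    rw [Nat.mul_div_cancel_left _ hprpos, mul_sum, ← Fin.sum_univ_eq_sum_range
      (fun l => ω ^ c * η l ^ i)]
    refine sum_congr rfl fun l _ => ?_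
    rw [pow_mul, hpowρ _ ω _ (hω _), ← hB]
    simp [mul_comm]
  · refine sum_eq_zero fun l _ => ?_
    rw [mul_eq_zero]; right
    -- a nonzero diagonal entry of `b ^ k` would force the eigenvalues `η l` and `η (l + k)` to agree
    have h1 := hcoord l (j ^ k) (τ.ρ (b ^ k) (e l))
    have h2 := conj_pow_gen hba 1 k
    rw [pow_one, one_mul] at h2
    rw [hmul, ← h2, ← hmul, hea, map_smul, map_smul, Finsupp.smul_apply, smul_eq_mul] at h1
    by_contra h0
    have h3 := mul_right_cancel₀ h0 h1
    have h4 : η l = η (l + k) := by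
      rw [h3, hη]; simp only; rw [← pow_mul, pow_add]
    have h5 := hηinj _ _ h4
    exact hk ((Nat.modEq_zero_iff_dvd).1 (Nat.ModEq.add_left_cancel' (l : ℕ) h5).symm)

/-! ### Multiplicities -/

/-- The images of `ζq` and `ζm` under an embedding of `ℚ(ζ_{qm})` may be prescribed independently. The
embedding with `ζq ζm ↦ η ω` works, because `f ζq / η = ω / f ζm` is a root of unity of order dividing
both `q` and `m`. -/
lemma exists_cyclotomic_hom {q m : ℕ} (hq : q ≠ 0) (hm : m ≠ 0) (hqm : q.Coprime m)
    {M : Type*} [Field M] [NumberField M] [NeZero (q * m)] [IsCyclotomicExtension {q * m} ℚ M]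
    {ζq ζm : M} (hζq : IsPrimitiveRoot ζq q) (hζm : IsPrimitiveRoot ζm m)
    {C : Type*} [Field C] [Algebra ℚ C] {η ω : C} (hη : IsPrimitiveRoot η q)
    (hω : IsPrimitiveRoot ω m) : ∃ f : M →ₐ[ℚ] C, f ζq = η ∧ f ζm = ω := by
  have hprod : ∀ {K : Type _} [Field K] {x y : K}, IsPrimitiveRoot x q → IsPrimitiveRoot y m →
      IsPrimitiveRoot (x * y) (q * m) := by
    intro K _ x y hx hy
    rw [IsPrimitiveRoot.iff_orderOf, (Commute.all x y).orderOf_mul_eq_mul_orderOf_of_coprime]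
    · rw [← hx.eq_orderOf, ← hy.eq_orderOf]
    · rwa [← hx.eq_orderOf, ← hy.eq_orderOf]
  have hζ := hprod hζq hζm
  have hprod' : IsPrimitiveRoot (η * ω) (q * m) := by
    rw [IsPrimitiveRoot.iff_orderOf, (Commute.all η ω).orderOf_mul_eq_mul_orderOf_of_coprime]
    · rw [← hη.eq_orderOf, ← hω.eq_orderOf]
    · rwa [← hη.eq_orderOf, ← hω.eq_orderOf]
  have hpos : 0 < q * m := Nat.pos_of_ne_zero (mul_ne_zero hq hm)
  let E := hζ.embeddingsEquivPrimitiveRoots C (Polynomial.cyclotomic.irreducible_rat hpos)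
  let f := E.symm ⟨η * ω, (mem_primitiveRoots hpos).2 hprod'⟩
  have hf : f (ζq * ζm) = η * ω := by
    have h1 : E f = ⟨η * ω, (mem_primitiveRoots hpos).2 hprod'⟩ := E.apply_symm_apply _
    exact congrArg Subtype.val h1
  have hη0 := hη.ne_zero hq
  have hω0 := hω.ne_zero hm
  have hfm0 : f ζm ≠ 0 := (map_ne_zero f).2 (hζm.ne_zero hm)
  rw [map_mul] at hf
  have h1 : f ζq / η = ω / f ζm := by
    rw [div_eq_div_iff hη0 hfm0, hf, mul_comm]
  have h2 : f ζq / η = 1 := by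
    have hq1 : (f ζq / η) ^ q = 1 := by
      rw [div_pow, ← map_pow, hζq.pow_eq_one, hη.pow_eq_one, map_one, div_one]
    have hm1 : (f ζq / η) ^ m = 1 := by
      rw [h1, div_pow, ← map_pow, hζm.pow_eq_one, hω.pow_eq_one, map_one, div_one]
    have := orderOf_dvd_of_pow_eq_one hq1
    have h3 := Nat.dvd_gcd this (orderOf_dvd_of_pow_eq_one hm1)
    rw [Nat.Coprime] at hqm
    rw [hqm, Nat.dvd_one, orderOf_eq_one_iff] at h3
    exact h3
  refine ⟨f, ?_, ?_⟩
  · rwa [div_eq_one_iff_eq hη0] at h2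
  · rw [h2, eq_comm, div_eq_one_iff_eq hfm0] at h1
    exact h1.symm

lemma sum_range_dvd {A : Type*} [AddCommMonoid A] {P m : ℕ} (hP : 0 < P) (g : ℕ → A) :
    ∑ k ∈ range (P * m), (if P ∣ k then g k else 0) = ∑ k ∈ range m, g (P * k) := by
  rw [← sum_filter]
  symm
  refine sum_nbij' (fun k => P * k) (fun k => k / P) ?_ ?_ ?_ ?_ ?_
  · intro k hk
    rw [mem_range] at hk
    simp [hP, hk]
  · intro k hk
    rw [mem_filter, mem_range] at hk
    rw [mem_range]
    exact Nat.div_lt_of_lt_mul hk.1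
  · intro k _; exact Nat.mul_div_cancel_left _ hP
  · intro k hk
    rw [mem_filter] at hk
    exact Nat.mul_div_cancel' hk.2
  · intro k _; rfl

/-- Frobenius reciprocity in coordinates. If `S` is the coefficient of the linear character
`(a, b ^ (p ^ r)) ↦ (ζq, ζm)` in a function `χ : G → ℚ`, computed in `M`, then `⟨χ, τ⟩ = S`: the character
of `τ` is the sum of the conjugates with values `(η l, ω)`, each contributing `S` via an embedding `M → ℂ`. -/
lemma multiplicity_eq {p q n r : ℕ} (hp : p.Prime) (hq : q.Prime) (hpq : p ≠ q) (hrn : r ≤ n)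
    {G : Type} [Group G] [Fintype G] {a b : G} {j : ℕ}
    (ha : orderOf a = q) (hb : orderOf b = p ^ n) (hba : b * a * b⁻¹ = a ^ j)
    (hj : orderOf (j : ZMod q) = p ^ r) (hgen : Subgroup.closure {a, b} = ⊤)
    (τ : FDRep ℂ G) [Simple τ] (hτ : Function.Injective τ.ρ)
    {M : Type*} [Field M] [NumberField M] [NeZero (q * p ^ (n - r))]
    [IsCyclotomicExtension {q * p ^ (n - r)} ℚ M]
    {ζq ζm : M} (hζq : IsPrimitiveRoot ζq q) (hζm : IsPrimitiveRoot ζm (p ^ (n - r)))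
    (χ : G → ℚ) (S : ℕ)
    (hS : ((q * p ^ (n - r) : ℕ) : M) * S = ∑ i ∈ range q, ∑ k ∈ range (p ^ (n - r)),
      algebraMap ℚ M (χ (a ^ i * b ^ (p ^ r * k))) * (ζq⁻¹ ^ i * ζm⁻¹ ^ k)) :
    (Fintype.card G : ℂ)⁻¹ *
          ∑ g : G, (χ g : ℂ) * (starRingEnd ℂ) (τ.character g) = S := by
  classical
  obtain ⟨η, ω, hη, hω, hchar⟩ := tau_character hp hq hrn ha hb hba hj hgen τ hτ
  set m := p ^ (n - r) with hm
  have hm0 : m ≠ 0 := pow_ne_zero _ hp.ne_zero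
  have hqm : q.Coprime m := ((Nat.coprime_primes hq hp).2 hpq.symm).pow_right _
  have hP : 0 < p ^ r := pow_pos hp.pos _
  have hpn : p ^ n = p ^ r * m := by rw [hm, ← pow_add]; congr 1; lia
  have hconj : ∀ {x : ℂ} {N : ℕ}, N ≠ 0 → IsPrimitiveRoot x N → (starRingEnd ℂ) x = x⁻¹ := by
    intro x N hN hx
    rw [Complex.inv_def, Complex.normSq_eq_norm_sq, hx.norm'_eq_one hN]
    simp
  have hl : ∀ l, ((q * m : ℕ) : ℂ) * S = ∑ i ∈ range q, ∑ k ∈ range m,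
      (χ (a ^ i * b ^ (p ^ r * k)) : ℂ) * ((η l)⁻¹ ^ i * ω⁻¹ ^ k) := by
    intro l
    obtain ⟨f, hf1, hf2⟩ := exists_cyclotomic_hom hq.ne_zero hm0 hqm hζq hζm (hη l) hω
    have := congrArg f hS
    simpa only [map_mul, map_natCast, map_sum, map_pow, map_inv₀, hf1, hf2, AlgHom.commutes,
      eq_ratCast, map_ratCast] using this
  rw [card_eq hp hq hpq ha hb hba hgen, sum_normal_form hp hq hpq ha hb hba hgen]
  have hcong : ∀ i, ∑ k ∈ range (p ^ n),
      (χ (a ^ i * b ^ k) : ℂ) * (starRingEnd ℂ) (τ.character (a ^ i * b ^ k))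
      = ∑ l ∈ range (p ^ r), ∑ k ∈ range m,
        (χ (a ^ i * b ^ (p ^ r * k)) : ℂ) * ((η l)⁻¹ ^ i * ω⁻¹ ^ k) := by
    intro i
    rw [sum_comm]
    have := sum_range_dvd (m := m) hP (fun k => (χ (a ^ i * b ^ k) : ℂ) *
      (starRingEnd ℂ) (ω ^ (k / p ^ r) * ∑ l ∈ range (p ^ r), η l ^ i))
    rw [← hpn] at this
    rw [← sum_congr rfl fun k _ => ?_, this]
    · refine sum_congr rfl fun k _ => ?_
      rw [Nat.mul_div_cancel_left _ hP, map_mul, map_pow, hconj hm0 hω, map_sum, mul_sum, mul_sum]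
      refine sum_congr rfl fun l _ => ?_
      rw [map_pow, hconj hq.ne_zero (hη l)]
      ring
    · rw [hchar]
      split_ifs <;> simp
  simp_rw [hcong]
  rw [sum_comm]
  simp_rw [← hl]
  rw [sum_const, card_range, hpn]
  have h1 : (q : ℂ) ≠ 0 := Nat.cast_ne_zero.2 hq.ne_zero
  have h2 : (m : ℂ) ≠ 0 := Nat.cast_ne_zero.2 hm0
  have h3 : (p : ℂ) ≠ 0 := Nat.cast_ne_zero.2 hp.ne_zero
  push_cast
  rw [nsmul_eq_mul]
  push_cast
  field_simp

/-! ### Eigenspaces and semilinear maps -/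

/-- The determinant `y` of a matrix of an `s`-semilinear map `T` with `T ^ P = c` satisfies
`y · s y ⋯ s^(P-1) y = c ^ dim U`. -/
lemma semilinear_det {M : Type*} [Field M] {U : Type*} [AddCommGroup U] [Module M U]
    [FiniteDimensional M U] (s : M →+* M) (T : U →ₛₗ[s] U) (P : ℕ) (c : M)
    (hT : ∀ v, (T^[P]) v = c • v) :
    ∃ y : M, ∏ i ∈ range P, (s^[i]) y = c ^ Module.finrank M U := by
  classical
  let e := Module.finBasis M U
  let B : Matrix (Fin (Module.finrank M U)) (Fin (Module.finrank M U)) M :=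
    Matrix.of fun l k => e.repr (T (e k)) l
  -- `Pt t` is the matrix of the iterate `T ^ t`
  let Pt : ℕ → Matrix (Fin (Module.finrank M U)) (Fin (Module.finrank M U)) M :=
    fun t => Matrix.of fun l k => e.repr ((T^[t]) (e k)) l
  have hstep : ∀ t, Pt (t + 1) = B * (Pt t).map s := by
    intro t
    ext l k
    simp only [Pt, B, Matrix.of_apply, Matrix.mul_apply, Matrix.map_apply]
    rw [Function.iterate_succ_apply']
    conv_lhs => rw [← e.sum_repr ((T^[t]) (e k))]
    rw [map_sum, map_sum, Finsupp.finsetSum_apply]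
    refine sum_congr rfl fun x _ => ?_
    rw [LinearMap.map_smulₛₗ, map_smul, Finsupp.smul_apply, smul_eq_mul, mul_comm]
  have hdet : ∀ t, (Pt t).det = ∏ i ∈ range t, (s^[i]) B.det := by
    intro t
    induction t with
    | zero =>
      have : Pt 0 = 1 := by
        ext l k
        simp [Pt, Matrix.one_apply, Finsupp.single_apply, eq_comm]
      simp [this]
    | succ t ih =>
      have h1 : ((Pt t).map s).det = s (Pt t).det := by
        rw [← RingHom.mapMatrix_apply, ← RingHom.map_det]
      rw [hstep, Matrix.det_mul, h1, ih, map_prod, prod_range_succ', mul_comm]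
      simp_rw [Function.iterate_succ_apply']
      rfl
  refine ⟨B.det, ?_⟩
  rw [← hdet]
  have : Pt P = c • (1 : Matrix _ _ M) := by
    ext l k
    simp [Pt, hT, Matrix.one_apply, Finsupp.single_apply, eq_comm]
  rw [this, Matrix.det_smul, Matrix.det_one, mul_one, Fintype.card_fin]

open scoped Matrix in
/-- The multiplicity `S` of `multiplicity_eq` is the dimension over `M` of the `(ζq, ζm)`-eigenspace of
`(a, b ^ (p ^ r))` in `M ⊗ σ`, the trace of the associated idempotent. On this eigenspace the composite
`T` of `b` with the coefficientwise action of `s` is a semilinear map with `T ^ (p ^ r) = ζm`, so `ζm ^ S` is a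
norm. -/
lemma exists_eigenspace_dim {p q n r : ℕ} (hp : p.Prime) (hq : q.Prime) (hrn : r ≤ n)
    {G : Type} [Group G] [Fintype G] {a b : G} {j : ℕ}
    (ha : orderOf a = q) (hb : orderOf b = p ^ n) (hba : b * a * b⁻¹ = a ^ j)
    (hj : orderOf (j : ZMod q) = p ^ r) (hgen : Subgroup.closure {a, b} = ⊤)
    (σ : FDRep ℚ G)
    {M : Type*} [Field M] [NumberField M] {ζq ζm : M}
    (hζq : IsPrimitiveRoot ζq q) (hζm : IsPrimitiveRoot ζm (p ^ (n - r)))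
    (s : M →+* M) (hsq : s ζq = ζq ^ j) (hsm : s ζm = ζm)
    (hs : ∀ x, (s^[p ^ r]) x = x) :
    ∃ S : ℕ, ((q * p ^ (n - r) : ℕ) : M) * S = ∑ i ∈ range q, ∑ k ∈ range (p ^ (n - r)),
      algebraMap ℚ M (σ.character (a ^ i * b ^ (p ^ r * k))) * (ζq⁻¹ ^ i * ζm⁻¹ ^ k) ∧
      ∃ y : M, ∏ i ∈ range (p ^ r), (s^[i]) y = ζm ^ S := by
  classical
  set m := p ^ (n - r) with hm
  have hm0 : m ≠ 0 := pow_ne_zero _ hp.ne_zero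
  have hpn : p ^ n = p ^ r * m := by rw [hm, ← pow_add]; congr 1; lia
  have hbn : b ^ p ^ n = 1 := by rw [← hb, pow_orderOf_eq_one]
  have haq : a ^ q = 1 := by rw [← ha, pow_orderOf_eq_one]
  have hz0 := hζm.ne_zero hm0
  have hq0 := hζq.ne_zero hq.ne_zero
  let e := Module.finBasis ℚ σ
  let D := Module.finrank ℚ σ
  let R : G → Matrix (Fin D) (Fin D) M :=
    fun g => (LinearMap.toMatrix e e (σ.ρ g)).map (algebraMap ℚ M)
  have hRmul : ∀ g h, R (g * h) = R g * R h := by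
    intro g h
    simp only [R]
    rw [← Matrix.map_mul, ← LinearMap.toMatrix_mul, map_mul]
  have hRone : R 1 = 1 := by
    simp only [R, map_one]
    rw [LinearMap.toMatrix_one, Matrix.map_one _ (map_zero _) (map_one _)]
  have hRpow : ∀ g k, R (g ^ k) = R g ^ k := by
    intro g k
    induction k with
    | zero => simp [hRone]
    | succ k ih => rw [pow_succ, hRmul, ih, pow_succ]
  have hRtr : ∀ g, (R g).trace = algebraMap ℚ M (σ.character g) := by
    intro g
    rw [FDRep.character, LinearMap.trace_eq_matrix_trace ℚ e, ← AddMonoidHom.map_trace]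
  set z := b ^ p ^ r with hz
  have hza : Commute z a := central_pow hba ha hj hgen a
  have hzb : Commute z b := central_pow hba ha hj hgen b
  let U : Submodule M (Fin D → M) :=
    Module.End.eigenspace (R a).toLin' ζq ⊓ Module.End.eigenspace (R z).toLin' ζm
  have hU : ∀ v, v ∈ U ↔ R a *ᵥ v = ζq • v ∧ R z *ᵥ v = ζm • v := by
    intro v
    simp [U, Submodule.mem_inf]
  have hpowU : ∀ (g : G) (c : M) (v : Fin D → M), R g *ᵥ v = c • v → ∀ i : ℕ,
      R (g ^ i) *ᵥ v = c ^ i • v := by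
    intro g c v h i
    induction i with
    | zero => simp [hRone]
    | succ i ih =>
      rw [pow_succ, hRmul, ← Matrix.mulVec_mulVec, h, Matrix.mulVec_smul, ih, smul_smul, pow_succ']
  refine ⟨Module.finrank M U, ?_, ?_⟩
  · set X := ζq⁻¹ • R a with hX
    set Y := ζm⁻¹ • R z with hY
    have hXpow : ∀ i, X ^ i = ζq⁻¹ ^ i • R (a ^ i) := fun i => by rw [hX, smul_pow, hRpow]
    have hYpow : ∀ i, Y ^ i = ζm⁻¹ ^ i • R (z ^ i) := fun i => by rw [hY, smul_pow, hRpow z]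
    have hXq : X ^ q = 1 := by
      rw [hXpow, haq, hRone, inv_pow, hζq.pow_eq_one, inv_one, one_smul]
    have hYm : Y ^ m = 1 := by
      rw [hYpow, hz, ← pow_mul, ← hpn, hbn, hRone, inv_pow, hζm.pow_eq_one, inv_one, one_smul]
    have hRX : R a = ζq • X := by rw [hX, smul_smul, mul_inv_cancel₀ hq0, one_smul]
    have hRY : R z = ζm • Y := by rw [hY, smul_smul, mul_inv_cancel₀ hz0, one_smul]
    have hXY : Commute Y X := by
      have : Commute (R z) (R a) := by
        rw [Commute, SemiconjBy, ← hRmul, ← hRmul, hza.eq]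
      exact (this.smul_left _).smul_right _
    set A := ∑ i ∈ range q, X ^ i with hA
    set Z := ∑ k ∈ range m, Y ^ k with hZ
    have hXA : X * A = A := by
      have := mul_geom_sum X q
      rw [hXq, sub_self, sub_mul, one_mul, sub_eq_zero] at this
      exact this
    have hYZ : Y * Z = Z := by
      have := mul_geom_sum Y m
      rw [hYm, sub_self, sub_mul, one_mul, sub_eq_zero] at this
      exact this
    have hYA : Commute Y A := Commute.sum_right _ _ _ fun i _ => hXY.pow_right i
    set κ : M := ((q * m : ℕ) : M) with hκ
    have hκ0 : κ ≠ 0 := Nat.cast_ne_zero.2 (mul_ne_zero hq.ne_zero hm0)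
    -- `(q m)⁻¹ A Z` is the idempotent projecting onto the eigenspace
    have hproj : LinearMap.IsProj U (κ⁻¹ • (A * Z)).toLin' := by
      constructor
      · intro v
        rw [hU, Matrix.toLin'_apply]
        constructor
        · rw [Matrix.mulVec_mulVec, ← Matrix.smul_mulVec, Matrix.mul_smul, ← mul_assoc, hRX,
            Matrix.smul_mul, hXA, Matrix.smul_mul, smul_comm]
        · rw [Matrix.mulVec_mulVec, ← Matrix.smul_mulVec, Matrix.mul_smul, ← mul_assoc, hRY,
            Matrix.smul_mul, hYA.eq, Matrix.smul_mul, mul_assoc, hYZ, smul_comm]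
      · intro v hv
        rw [hU] at hv
        have hXv : X *ᵥ v = (1 : M) • v := by
          rw [hX, Matrix.smul_mulVec, hv.1, smul_smul, inv_mul_cancel₀ hq0]
        have hYv : Y *ᵥ v = (1 : M) • v := by
          rw [hY, Matrix.smul_mulVec, hv.2, smul_smul, inv_mul_cancel₀ hz0]
        have hpow : ∀ (X : Matrix (Fin D) (Fin D) M), X *ᵥ v = (1 : M) • v → ∀ N : ℕ,
            (∑ i ∈ range N, X ^ i) *ᵥ v = (N : M) • v := by
          intro X hX N
          have h1 : ∀ i : ℕ, (X ^ i) *ᵥ v = v := by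
            intro i
            induction i with
            | zero => simp
            | succ i ih => rw [pow_succ, ← Matrix.mulVec_mulVec, hX, one_smul, ih]
          rw [Matrix.sum_mulVec]
          simp only [h1]
          rw [sum_const, card_range, Nat.cast_smul_eq_nsmul]
        rw [Matrix.toLin'_apply, Matrix.smul_mulVec, ← Matrix.mulVec_mulVec, hpow Y hYv,
          Matrix.mulVec_smul, hpow X hXv, smul_smul, smul_smul, mul_assoc, mul_comm (m : M),
          ← Nat.cast_mul, ← hκ, inv_mul_cancel₀ hκ0, one_smul]
    have htr := hproj.trace
    rw [Matrix.trace_toLin'_eq, Matrix.trace_smul, smul_eq_mul] at htr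
    rw [← htr, mul_inv_cancel_left₀ hκ0, hA, hZ, sum_mul_sum, Matrix.trace_sum]
    refine sum_congr rfl fun i _ => ?_
    rw [Matrix.trace_sum]
    refine sum_congr rfl fun k _ => ?_
    rw [hXpow, hYpow, Matrix.smul_mul, Matrix.mul_smul, smul_smul, ← hRmul, Matrix.trace_smul,
      hRtr, smul_eq_mul, mul_comm, hz, ← pow_mul]
  · have hRs : ∀ g (v : Fin D → M), R g *ᵥ (s ∘ v) = s ∘ (R g *ᵥ v) := by
      intro g v
      ext l
      simp [Matrix.mulVec, dotProduct, R]
    have hTU : ∀ v ∈ U, R b *ᵥ (s ∘ v) ∈ U := by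
      intro v hv
      rw [hU] at hv ⊢
      have hsmul : ∀ c : M, s ∘ (c • v) = s c • (s ∘ v) := by
        intro c; ext l; simp
      constructor
      · -- `a ^ j` acts on `T v` by `ζq ^ j`, and `a` is a power of `a ^ j`
        have h1 : R (a ^ j) *ᵥ (R b *ᵥ (s ∘ v)) = ζq ^ j • (R b *ᵥ (s ∘ v)) := by
          rw [Matrix.mulVec_mulVec, ← hRmul, ← hba, inv_mul_cancel_right, hRmul,
            ← Matrix.mulVec_mulVec, hRs a, hv.1, hsmul, hsq, Matrix.mulVec_smul]
        have hqF : Fact q.Prime := ⟨hq⟩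
        have hj0 : (j : ZMod q) ≠ 0 := by
          intro h0
          have := pow_orderOf_eq_one (j : ZMod q)
          rw [hj, h0, zero_pow (pow_ne_zero _ hp.ne_zero)] at this
          exact zero_ne_one this
        obtain ⟨c, hc⟩ : ∃ c, j * c ≡ 1 [MOD q] := by
          refine ⟨((j : ZMod q)⁻¹).val, ?_⟩
          rw [← ZMod.natCast_eq_natCast_iff]
          push_cast
          rw [ZMod.natCast_zmod_val, mul_inv_cancel₀ hj0]
        have h2 := hpowU _ _ _ h1 c
        rw [← pow_mul, ← pow_mul] at h2
        have h3 : a ^ (j * c) = a := by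
          conv_rhs => rw [← pow_one a]
          rw [pow_eq_pow_iff_modEq, ha]; exact hc
        have h4 : ζq ^ (j * c) = ζq := by
          conv_rhs => rw [← pow_one ζq]
          rw [(hζq.isOfFinOrder hq.ne_zero).pow_eq_pow_iff_modEq, ← hζq.eq_orderOf]; exact hc
        rwa [h3, h4] at h2
      · rw [Matrix.mulVec_mulVec, ← hRmul, hzb.eq, hRmul, ← Matrix.mulVec_mulVec, hRs, hv.2, hsmul,
          hsm, Matrix.mulVec_smul]
    let T : U →ₛₗ[s] U :=
      { toFun := fun v => ⟨R b *ᵥ (s ∘ v.1), hTU v.1 v.2⟩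
        map_add' := fun v w => by
          apply Subtype.ext
          have : s ∘ (v + w : Fin D → M) = s ∘ v.1 + s ∘ w.1 := by ext l; simp
          simp only [Submodule.coe_add, this, Matrix.mulVec_add]
        map_smul' := fun c v => by
          apply Subtype.ext
          have : s ∘ (c • v.1 : Fin D → M) = s c • (s ∘ v.1) := by ext l; simp
          simp only [Submodule.coe_smul, this, Matrix.mulVec_smul] }
    refine semilinear_det s T (p ^ r) ζm fun v => ?_
    have hTt : ∀ t : ℕ, ((T^[t]) v : Fin D → M) = R (b ^ t) *ᵥ (s^[t] ∘ v.1) := by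
      intro t
      induction t with
      | zero => simp [hRone]
      | succ t ih =>
        rw [Function.iterate_succ_apply']
        change R b *ᵥ (s ∘ ((T^[t]) v : Fin D → M)) = _
        rw [ih, ← hRs, Matrix.mulVec_mulVec, ← hRmul, ← pow_succ', Function.iterate_succ',
          Function.comp_assoc]
    apply Subtype.ext
    have h1 : s^[p ^ r] ∘ v.1 = v.1 := by ext l; simp [hs]
    rw [hTt, h1, ← hz]
    exact ((hU _).1 v.2).2

/-! ### A rational representation from a norm -/

lemma cyclotomic_hom_ext {q m : ℕ} (hqm : q.Coprime m)
    {M : Type*} [Field M] [NumberField M] [NeZero (q * m)] [IsCyclotomicExtension {q * m} ℚ M]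
    {ζq ζm : M} (hζq : IsPrimitiveRoot ζq q) (hζm : IsPrimitiveRoot ζm m)
    {C : Type*} [Field C] [Algebra ℚ C] {f g : M →ₐ[ℚ] C} (h1 : f ζq = g ζq) (h2 : f ζm = g ζm) :
    f = g := by
  have hζ : IsPrimitiveRoot (ζq * ζm) (q * m) := by
    rw [IsPrimitiveRoot.iff_orderOf, (Commute.all ζq ζm).orderOf_mul_eq_mul_orderOf_of_coprime]
    · rw [← hζq.eq_orderOf, ← hζm.eq_orderOf]
    · rwa [← hζq.eq_orderOf, ← hζm.eq_orderOf]
  refine (hζ.powerBasis ℚ).algHom_ext ?_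
  rw [IsPrimitiveRoot.powerBasis_gen, map_mul, map_mul, h1, h2]

/-- If `x` has norm a primitive `p ^ (n - r)`-th root of unity `ν`, then `G` acts on the `ℚ`-space `M` with `a` acting
as multiplication by `ζq` and `b` as `v ↦ x · s v`, so that `b ^ (p ^ r)` is multiplication by `ν`. In this
representation the linear character `(a, b ^ (p ^ r)) ↦ (ζq, ν)` has multiplicity one, its `M`-linear
extension being the sum of the distinct Galois conjugates of that character. -/
lemma exists_rep_of_norm {p q n r : ℕ} (hp : p.Prime) (hq : q.Prime) (hpq : p ≠ q) (hrn : r ≤ n)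
    {G : Type} [Group G] [Fintype G] {a b : G} {j : ℕ}
    (ha : orderOf a = q) (hb : orderOf b = p ^ n) (hba : b * a * b⁻¹ = a ^ j)
    (hgen : Subgroup.closure {a, b} = ⊤)
    {M : Type} [Field M] [NumberField M] [NeZero (q * p ^ (n - r))]
    [IsCyclotomicExtension {q * p ^ (n - r)} ℚ M] {ζq : M} (hζq : IsPrimitiveRoot ζq q)
    (s : M →ₐ[ℚ] M) (hsq : s ζq = ζq ^ j) (hs : ∀ x, (s^[p ^ r]) x = x) (x : M)
    (hx : IsPrimitiveRoot (∏ i ∈ range (p ^ r), (s^[i]) x) (p ^ (n - r))) :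
    ∃ σ : FDRep ℚ G, ((q * p ^ (n - r) : ℕ) : M) * (1 : ℕ)
      = ∑ i ∈ range q, ∑ k ∈ range (p ^ (n - r)),
        algebraMap ℚ M (σ.character (a ^ i * b ^ (p ^ r * k))) *
          (ζq⁻¹ ^ i * (∏ i ∈ range (p ^ r), (s^[i]) x)⁻¹ ^ k) := by
  classical
  set ν := ∏ i ∈ range (p ^ r), (s^[i]) x with hν
  set m := p ^ (n - r) with hm
  have hm0 : m ≠ 0 := pow_ne_zero _ hp.ne_zero
  have hqm : q.Coprime m := ((Nat.coprime_primes hq hp).2 hpq.symm).pow_right _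
  have hpn : p ^ n = p ^ r * m := by rw [hm, ← pow_add]; congr 1; lia
  let A : Module.End ℚ M := LinearMap.mulLeft ℚ ζq
  let B : Module.End ℚ M := LinearMap.mulLeft ℚ x ∘ₗ s.toLinearMap
  have hApow : ∀ i, A ^ i = LinearMap.mulLeft ℚ (ζq ^ i) := fun i => by
    rw [LinearMap.pow_mulLeft]
  have hBpow : ∀ t v, (B ^ t) v = (∏ i ∈ range t, (s^[i]) x) * (s^[t]) v := by
    intro t
    induction t with
    | zero => intro v; simp
    | succ t ih =>
      intro v
      rw [pow_succ', Module.End.mul_apply, ih]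
      change x * s _ = _
      rw [map_mul, map_prod, prod_range_succ', Function.iterate_succ_apply']
      simp_rw [Function.iterate_succ_apply']
      simp only [Function.iterate_zero, id]
      ring
  have hBz : B ^ p ^ r = LinearMap.mulLeft ℚ ν := by
    ext v
    rw [hBpow, hs, LinearMap.mulLeft_apply]
  have hA : A ^ q = 1 := by
    rw [hApow, hζq.pow_eq_one, LinearMap.mulLeft_one]; rfl
  have hB : B ^ p ^ n = 1 := by
    rw [hpn, pow_mul, hBz, LinearMap.pow_mulLeft, hx.pow_eq_one, LinearMap.mulLeft_one]; rfl
  have hBA : B * A = A ^ j * B := by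
    ext v
    rw [hApow]
    change x * s (ζq * v) = ζq ^ j * (x * s v)
    rw [map_mul, hsq]; ring
  obtain ⟨ρ, hρa, hρb⟩ := exists_hom_of_relations hp hq hpq ha hb hba hgen hA hB hBA
  have hgal : IsGalois ℚ M := IsCyclotomicExtension.isGalois {q * m} ℚ M
  refine ⟨FDRep.of (ρ : Representation ℚ G M), ?_⟩
  have hchar : ∀ i k, algebraMap ℚ M
      ((FDRep.of (ρ : Representation ℚ G M)).character (a ^ i * b ^ (p ^ r * k)))
      = ∑ g : Gal(M/ℚ), g ζq ^ i * g ν ^ k := by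
    intro i k
    have h1 : ρ (a ^ i * b ^ (p ^ r * k)) = LinearMap.mulLeft ℚ (ζq ^ i * ν ^ k) := by
      rw [map_mul, map_pow, map_pow, hρa, hρb, hApow, pow_mul, hBz, LinearMap.pow_mulLeft,
        LinearMap.mulLeft_mul]; rfl
    have h2 : (FDRep.of (ρ : Representation ℚ G M)).character (a ^ i * b ^ (p ^ r * k))
        = Algebra.trace ℚ M (ζq ^ i * ν ^ k) := by
      change LinearMap.trace ℚ M (ρ (a ^ i * b ^ (p ^ r * k))) = _
      rw [h1]; rfl
    rw [h2, trace_eq_sum_automorphisms]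
    simp only [map_mul, map_pow]
  simp_rw [hchar, sum_mul]
  have hν0 : ν ≠ 0 := hx.ne_zero hm0
  have hq0 : ζq ≠ 0 := hζq.ne_zero hq.ne_zero
  have hswap : ∑ i ∈ range q, ∑ k ∈ range m, ∑ g : Gal(M/ℚ),
      g ζq ^ i * g ν ^ k * (ζq⁻¹ ^ i * ν⁻¹ ^ k)
      = ∑ g : Gal(M/ℚ), (∑ i ∈ range q, (g ζq * ζq⁻¹) ^ i) * ∑ k ∈ range m, (g ν * ν⁻¹) ^ k := by
    simp_rw [sum_mul_sum]
    conv_rhs => rw [sum_comm]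
    refine sum_congr rfl fun i _ => ?_
    rw [sum_comm]
    refine sum_congr rfl fun g _ => sum_congr rfl fun k _ => ?_
    rw [mul_pow, mul_pow]
    ring
  rw [hswap, sum_eq_single (1 : Gal(M/ℚ))]
  · simp [mul_inv_cancel₀ hq0, mul_inv_cancel₀ hν0]
  · intro g _ hg
    have hgeom : ∀ (w : M) (N : ℕ), IsPrimitiveRoot w N → N ≠ 0 → g w ≠ w →
        ∑ i ∈ range N, (g w * w⁻¹) ^ i = 0 := by
      intro w N hw hN hne
      have h1 := mul_geom_sum (g w * w⁻¹) N
      rw [mul_pow, ← map_pow, inv_pow, hw.pow_eq_one, map_one, inv_one, mul_one, sub_self,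
        mul_eq_zero, sub_eq_zero, mul_inv_eq_one₀ (hw.ne_zero hN)] at h1
      exact h1.resolve_left hne
    by_cases h1 : g ζq = ζq
    · by_cases h2 : g ν = ν
      · exfalso
        apply hg
        have := cyclotomic_hom_ext hqm hζq hx (f := (g : M →ₐ[ℚ] M)) (g := AlgHom.id ℚ M)
          (by simpa using h1) (by simpa using h2)
        ext y
        exact DFunLike.congr_fun this y
      · rw [hgeom ν m hx hm0 h2, mul_zero]
    · rw [hgeom ζq q hζq hq.ne_zero h1, zero_mul]
  · simp

lemma regular_character {G : Type} [Group G] [Fintype G] : ∃ σ : FDRep ℚ G,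
    ∀ g, σ.character g = open Classical in if g = 1 then (Fintype.card G : ℚ) else 0 := by
  classical
  refine ⟨FDRep.of (Representation.ofMulAction ℚ G G), fun g => ?_⟩
  change LinearMap.trace ℚ (MonoidAlgebra ℚ G) (Representation.ofMulAction ℚ G G g) = _
  rw [LinearMap.trace_eq_matrix_trace ℚ (MonoidAlgebra.basis G ℚ), Matrix.trace]
  simp [LinearMap.toMatrix_apply, MonoidAlgebra.basis, Finsupp.single_apply]

/-! ### The greatest common divisor of the multiplicities -/

/-- The automorphism of `ℚ(ζ_{qm})` with `ζ_q ↦ ζ_q ^ j` and `ζ_m ↦ ζ_m`, for `j` of order `N`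
modulo `q`; it satisfies `s ^ N = 1`. -/
lemma exists_galois_gen {q m j N : ℕ} (hq : q.Prime) (hm : m ≠ 0) (hqm : q.Coprime m)
    (hj : orderOf (j : ZMod q) = N) (hN : N ≠ 0)
    {M : Type*} [Field M] [NumberField M] [NeZero (q * m)] [IsCyclotomicExtension {q * m} ℚ M]
    {ζq ζm : M} (hζq : IsPrimitiveRoot ζq q) (hζm : IsPrimitiveRoot ζm m) :
    ∃ s : M →ₐ[ℚ] M, s ζq = ζq ^ j ∧ s ζm = ζm ∧ ∀ x, (s^[N]) x = x := by
  have : Fact q.Prime := ⟨hq⟩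
  have hjN : (j : ZMod q) ^ N = 1 := by rw [← hj, pow_orderOf_eq_one]
  have hjq : j.Coprime q := (ZMod.isUnit_iff_coprime j q).1 (IsUnit.of_pow_eq_one hjN hN)
  obtain ⟨s, hsq, hsm⟩ := exists_cyclotomic_hom hq.ne_zero hm hqm hζq hζm
    (hζq.pow_of_coprime j hjq) hζm
  refine ⟨s, hsq, hsm, fun x => ?_⟩
  have hit : ∀ t, (s ^ t) ζq = ζq ^ j ^ t := by
    intro t
    induction t with
    | zero => simp
    | succ t ih => rw [pow_succ', AlgHom.mul_apply, ih, map_pow, hsq, ← pow_mul, pow_succ']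
  have hit' : ∀ t, (s ^ t) ζm = ζm := by
    intro t
    induction t with
    | zero => simp
    | succ t ih => rw [pow_succ', AlgHom.mul_apply, ih, hsm]
  have h1 : s ^ N = AlgHom.id ℚ M := by
    refine cyclotomic_hom_ext hqm hζq hζm ?_ (hit' N)
    have h2 : j ^ N ≡ 1 [MOD q] := by
      rw [← ZMod.natCast_eq_natCast_iff]; push_cast; exact hjN
    have h3 : j ^ N % orderOf ζq = 1 % orderOf ζq := hζq.eq_orderOf ▸ h2
    rw [hit, AlgHom.id_apply, ← pow_mod_orderOf, h3, pow_mod_orderOf, pow_one]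
  rw [← AlgHom.coe_pow, h1, AlgHom.id_apply]

/-- Let `p, q` be distinct odd primes, `G = C_q ⋊ C_{p^n}` non-abelian
(presented by `a, b` with `a^q = b^{p^n} = 1`, `b a b⁻¹ = a^j`, `j` of order `p^r` mod `q`),
and `τ` a faithful irreducible complex representation of `G`.  Let `d` be the greatest common
divisor (characterised by divisibility) of the multiplicities `⟨ℂ ⊗_ℚ σ, τ⟩` as `σ` ranges
over all finite-dimensional rational representations of `G`.  If `p^n ∤ q - 1` then
`d = p^s` for some `0 < s ≤ r`; if `p^n ∣ q - 1` then `d = 1`. -/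
theorem schur_index_eq
    (p q n r : ℕ) (hp : p.Prime) (hq : q.Prime) (hpodd : Odd p) (hqodd : Odd q)
    (hpq : p ≠ q) (hn : 1 ≤ n) (hr0 : 0 < r) (hrn : r ≤ n) (hrdvd : p ^ r ∣ q - 1)
    (G : Type) [Group G] [Fintype G] (a b : G) (j : ℕ)
    (ha : orderOf a = q) (hb : orderOf b = p ^ n)
    (hba : b * a * b⁻¹ = a ^ j) (hj : orderOf (j : ZMod q) = p ^ r)
    (hgen : Subgroup.closure {a, b} = ⊤)
    (τ : FDRep ℂ G) [Simple τ] (hτ : Function.Injective τ.ρ)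
    (d : ℕ)
    -- `d` divides the multiplicity `⟨ℂ ⊗_ℚ σ, τ⟩` for every rational representation `σ` …
    (hd : ∀ σ : FDRep ℚ G, ∃ m : ℕ,
      (Fintype.card G : ℂ)⁻¹ *
          ∑ g : G, (σ.character g : ℂ) * (starRingEnd ℂ) (τ.character g) = m ∧ d ∣ m)
    -- … and `d` is the greatest such common divisor.
    (hdgcd : ∀ e : ℕ, (∀ σ : FDRep ℚ G, ∃ m : ℕ,
      (Fintype.card G : ℂ)⁻¹ *
          ∑ g : G, (σ.character g : ℂ) * (starRingEnd ℂ) (τ.character g) = m ∧ e ∣ m) →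
      e ∣ d) :
    (¬ p ^ n ∣ q - 1 → ∃ s : ℕ, 0 < s ∧ s ≤ r ∧ d = p ^ s) ∧
      (p ^ n ∣ q - 1 → d = 1) := by
  classical
  have hm0 : p ^ (n - r) ≠ 0 := pow_ne_zero _ hp.ne_zero
  have hqm : q.Coprime (p ^ (n - r)) := ((Nat.coprime_primes hq hp).2 hpq.symm).pow_right _
  have hne : NeZero (q * p ^ (n - r)) := ⟨mul_ne_zero hq.ne_zero hm0⟩
  let M := CyclotomicField (q * p ^ (n - r)) ℚ
  have hM : IsCyclotomicExtension {q * p ^ (n - r)} ℚ M :=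
    CyclotomicField.isCyclotomicExtension _ _
  have hζ := IsCyclotomicExtension.zeta_spec (q * p ^ (n - r)) ℚ M
  have hζq := hζ.pow (Nat.pos_of_ne_zero hne.out) (mul_comm _ _)
  have hζm := hζ.pow (Nat.pos_of_ne_zero hne.out) rfl
  obtain ⟨s, hsq, hsm, hs⟩ := exists_galois_gen hq hm0 hqm hj (pow_ne_zero _ hp.ne_zero) hζq hζm
  constructor
  · intro hndvd
    -- `τ` has degree `p ^ r`, so `d` is a power of `p`, and it is enough to exclude `d = 1`
    have hdr : d ∣ p ^ r := by
      obtain ⟨η, ω, -, -, hchar⟩ := tau_character hp hq hrn ha hb hba hj hgen τ hτ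
      obtain ⟨σ, hσ⟩ := regular_character (G := G)
      obtain ⟨m, hm, hdm⟩ := hd σ
      have h1 : τ.character 1 = ((p ^ r : ℕ) : ℂ) := by simpa using hchar 0 0
      have hcard : (Fintype.card G : ℂ) ≠ 0 := Nat.cast_ne_zero.2 Fintype.card_ne_zero
      rw [sum_eq_single 1 (fun g _ hg => by simp [hσ, hg]) (by simp), hσ, if_pos rfl, h1,
        Complex.conj_natCast, Rat.cast_natCast, inv_mul_cancel_left₀ hcard] at hm
      rwa [Nat.cast_injective hm]
    obtain ⟨t, htr, rfl⟩ := (Nat.dvd_prime_pow hp).1 hdr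
    refine ⟨t, Nat.pos_of_ne_zero ?_, htr, rfl⟩
    rintro rfl
    have hpd : p ∣ p ^ 0 := by
      refine hdgcd p fun σ => ?_
      obtain ⟨S, hS, y, hy⟩ := exists_eigenspace_dim hp hq hrn ha hb hba hj hgen σ hζq hζm
        (s : M →+* M) hsq hsm hs
      exact ⟨S, multiplicity_eq hp hq hpq hrn ha hb hba hj hgen τ hτ hζq hζm σ.character S hS,
        norm_exponent hp hq hpodd hpq hr0 hrn hrdvd hndvd j hζq hζm (s : M →+* M) hsq hsm y S hy⟩
    exact hp.one_lt.ne' (Nat.dvd_one.1 hpd)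
  · intro hdvd
    obtain ⟨x, hx⟩ := exists_norm_element hp hq hpodd hqodd hrn hdvd j hj hζq hζm
      (s : M →+* M) hsq hsm
    obtain ⟨σ, hσ⟩ := exists_rep_of_norm hp hq hpq hrn ha hb hba hgen hζq s hsq hs x hx
    obtain ⟨m, hm, hdm⟩ := hd σ
    rw [multiplicity_eq hp hq hpq hrn ha hb hba hj hgen τ hτ hζq hx σ.character 1 hσ] at hm
    rw [← Nat.cast_injective hm] at hdm
    exact Nat.dvd_one.1 hdm
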